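/- Let Γ = ℤ^5 ⋊ ℤ/8 where the generator of ℤ/8 acts on ℤ^5 by the matrix [[0,0,0,0,-1],[1,0,0,0,-1],[0,1,0,0,0],[0,0,1,0,0],[0,0,0,1,-1]]. Then H^1(Γ,ℤ) = 0; H^2(Γ,ℤ) ≅ ℤ^2 ⊕ ℤ/8 ⊕ ℤ/4; H^3(Γ,ℤ) ≅ ℤ^2; H^4(Γ,ℤ) ≅ ℤ ⊕ ℤ/8 ⊕ ℤ/4 ⊕ (ℤ/2)^2; H^5(Γ,ℤ) ≅ (ℤ/2)^2; H^i(Γ,ℤ) ≅ (ℤ/8)^2 ⊕ (ℤ/2)^4 for all even i ≥ 6; and H^i(Γ,ℤ) ≅ (ℤ/2)^2 for all odd i ≥ 7. -/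

import Mathlib

open Matrix

namespace Crystal

/-- The lattice `ℤ^n`, written multiplicatively so that it can be a factor of a semidirect
product of groups. -/
abbrev Lat (n : ℕ) : Type := Multiplicative (Fin n → ℤ)

/-- The invertible integer matrix determined by `M` with `M ^ (m + 1) = 1`. -/
def matUnit {n : ℕ} (M : Matrix (Fin n) (Fin n) ℤ) (m : ℕ) (hm : M ^ (m + 1) = 1) :
    (Matrix (Fin n) (Fin n) ℤ)ˣ :=
  ⟨M, M ^ m, by rw [← pow_succ']; exact hm, by rw [← pow_succ]; exact hm⟩

/-- Linear automorphisms of `ℤ^n` as multiplicative automorphisms of the multiplicative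
version of `ℤ^n`. -/
def linToAut (n : ℕ) : ((Fin n → ℤ) ≃ₗ[ℤ] (Fin n → ℤ)) →* MulAut (Lat n) :=
  MonoidHom.mk' (fun e => AddEquiv.toMultiplicative e.toAddEquiv) (fun _ _ => rfl)

/-- An invertible integer matrix acts on the (multiplicative) lattice `ℤ^n` by (left)
matrix-vector multiplication. -/
def glToAut (n : ℕ) : (Matrix (Fin n) (Fin n) ℤ)ˣ →* MulAut (Lat n) :=
  (linToAut n).comp
    ((LinearMap.GeneralLinearGroup.generalLinearEquiv ℤ (Fin n → ℤ)).toMonoidHom.comp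
      (Matrix.GeneralLinearGroup.toLin).toMonoidHom)

/-- The homomorphism from `ℤ/m` (written multiplicatively) to a group `G` sending the
generator `1` to a chosen element `α` satisfying `α ^ m = 1`. -/
def zmodHom {G : Type*} [Group G] (m : ℕ) [NeZero m] (α : G) (hα : α ^ m = 1) :
    Multiplicative (ZMod m) →* G :=
  MonoidHom.mk' (fun g => α ^ (g.toAdd.val)) (by
    intro a b
    show α ^ (ZMod.val (a.toAdd + b.toAdd)) = α ^ (ZMod.val a.toAdd) * α ^ (ZMod.val b.toAdd)
    rw [ZMod.val_add, ← pow_eq_pow_mod _ hα, pow_add])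

/-- The action of `ℤ/q` on the lattice `ℤ^n` in which the generator `1` of `ℤ/q` acts by left
multiplication by the integer matrix `M`; `M` is required to satisfy `M ^ q = 1`. -/
def matAction {n : ℕ} (q : ℕ) [NeZero q] (M : Matrix (Fin n) (Fin n) ℤ)
    (hq : M ^ q = 1) : Multiplicative (ZMod q) →* MulAut (Lat n) :=
  zmodHom q (glToAut n (matUnit M (q - 1) (by
      rwa [Nat.sub_add_cancel (Nat.one_le_iff_ne_zero.2 (NeZero.ne q))])))
    (by
      rw [← map_pow]
      convert map_one (glToAut n)
      ext i j
      rw [Units.val_pow_eq_pow_val]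
      simp [matUnit, hq])

/-- The crystallographic group `ℤ^n ⋊ ℤ/q` in which the generator `1` of `ℤ/q` acts on the
lattice `ℤ^n` by left multiplication by the integer matrix `M` (with `M ^ q = 1`). -/
abbrev Crys {n : ℕ} (q : ℕ) [NeZero q] (M : Matrix (Fin n) (Fin n) ℤ) (hq : M ^ q = 1) : Type :=
  SemidirectProduct (Lat n) (Multiplicative (ZMod q)) (matAction q M hq)


open CategoryTheory groupCohomology

variable {k : Type} [CommRing k]

lemma comp_contractNth {G H : Type*} [Monoid G] [Monoid H] (f : G →* H) {n : ℕ}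
    (j : Fin (n + 1)) (g : Fin (n + 1) → G) (i : Fin n) :
    f (Fin.contractNth j (· * ·) g i) = Fin.contractNth j (· * ·) (fun l => f (g l)) i := by
  rcases lt_trichotomy (i : ℕ) j with h | h | h
  · rw [Fin.contractNth_apply_of_lt _ _ _ _ h, Fin.contractNth_apply_of_lt _ _ _ _ h]
  · rw [Fin.contractNth_apply_of_eq _ _ _ _ h, Fin.contractNth_apply_of_eq _ _ _ _ h,
      _root_.map_mul]
  · rw [Fin.contractNth_apply_of_gt _ _ _ _ h, Fin.contractNth_apply_of_gt _ _ _ _ h]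

/-- The map of inhomogeneous cochain complexes induced (contravariantly in the group,
covariantly in the coefficients) by a group homomorphism `f : H →* G` together with a
compatible linear map `τ : A → B` of coefficients. -/
def cochainsMap {G H : Type} [Group G] [Group H] (A : Rep k G) (B : Rep k H)
    (f : H →* G) (τ : A →ₗ[k] B)
    (hcomp : ∀ (h : H) (a : A), τ (A.ρ (f h) a) = B.ρ h (τ a)) :
    inhomogeneousCochains A ⟶ inhomogeneousCochains B where
  f n := ModuleCat.ofHom
    { toFun := fun F v => τ (F (fun i => f (v i)))
      map_add' := fun x y => by funext v; simp
      map_smul' := fun r x => by funext v; simp }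
  comm' i j hij := by
    have hij' : i + 1 = j := hij
    subst hij'
    rw [inhomogeneousCochains.d_def, inhomogeneousCochains.d_def]
    ext F v
    show (inhomogeneousCochains.d B i) (fun w => τ (F (fun l => f (w l)))) v
      = τ ((inhomogeneousCochains.d A i) F (fun l => f (v l)))
    simp only [inhomogeneousCochains.d_hom_apply, map_add, map_sum, _root_.map_smul]
    congr 1
    · exact (hcomp (v 0) _).symm
    · refine Finset.sum_congr rfl fun j' _ => ?_
      have hc : (fun l => f (j'.contractNth (· * ·) v l))
          = j'.contractNth (· * ·) (fun l => f (v l)) := by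
        funext l
        exact comp_contractNth f j' v l
      rw [hc]

lemma cochainsMap_eq_id {G : Type} [Group G] (A : Rep k G) (f : G →* G) (τ : A →ₗ[k] A)
    (hcomp : ∀ (h : G) (a : A), τ (A.ρ (f h) a) = A.ρ h (τ a))
    (hf : ∀ x, f x = x) (hτ : ∀ a, τ a = a) :
    cochainsMap A A f τ hcomp = 𝟙 _ := by
  apply HomologicalComplex.Hom.ext
  funext n
  ext F v
  show τ (F (fun i => f (v i))) = F v
  simp only [hf, hτ]

lemma cochainsMap_comp {G H K : Type} [Group G] [Group H] [Group K]
    (A : Rep k G) (B : Rep k H) (C : Rep k K)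
    (f₁ : H →* G) (τ₁ : A →ₗ[k] B) (h₁ : ∀ (h : H) (a : A), τ₁ (A.ρ (f₁ h) a) = B.ρ h (τ₁ a))
    (f₂ : K →* H) (τ₂ : B →ₗ[k] C) (h₂ : ∀ (h : K) (a : B), τ₂ (B.ρ (f₂ h) a) = C.ρ h (τ₂ a))
    (f₃ : K →* G) (τ₃ : A →ₗ[k] C) (h₃ : ∀ (h : K) (a : A), τ₃ (A.ρ (f₃ h) a) = C.ρ h (τ₃ a))
    (hf : ∀ x, f₁ (f₂ x) = f₃ x) (hτ : ∀ a, τ₂ (τ₁ a) = τ₃ a) :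
    cochainsMap A B f₁ τ₁ h₁ ≫ cochainsMap B C f₂ τ₂ h₂ = cochainsMap A C f₃ τ₃ h₃ := by
  apply HomologicalComplex.Hom.ext
  funext n
  ext F v
  show τ₂ (τ₁ (F (fun i => f₁ (f₂ (v i))))) = τ₃ (F (fun i => f₃ (v i)))
  simp only [hf]
  exact hτ _

/-- Given an action `φ` of a group `G` on a group `L` and a representation `ψ` of `G` on a
`k`-module `V`, this is `H^j(L, V)` (with `L` acting trivially on the coefficients `V`),
endowed with the `G`-action functorially induced by the action of `G` on `L` and on `V`:
`g` acts via the conjugation automorphism `φ g⁻¹` of `L` and via `ψ g` on `V`. -/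
noncomputable def cohRep {G L V : Type} [Group G] [Group L] [AddCommGroup V] [Module k V]
    (φ : G →* MulAut L) (ψ : Representation k G V) (j : ℕ) : Rep k G :=
  Rep.of (X := groupCohomology (Rep.trivial k L V) j)
    { toFun := fun g => (HomologicalComplex.homologyMap
        (cochainsMap (Rep.trivial k L V) (Rep.trivial k L V) (φ g⁻¹).toMonoidHom (ψ g)
          (fun _ _ => rfl)) j).hom
      map_one' := by
        have h := cochainsMap_eq_id (Rep.trivial k L V) (φ 1⁻¹).toMonoidHom (ψ 1)
          (fun _ _ => rfl) (fun x => by simp) (fun a => by simp)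
        exact congrArg ModuleCat.Hom.hom
          ((congrArg (fun c => HomologicalComplex.homologyMap c j) h).trans
            (HomologicalComplex.homologyMap_id _ j))
      map_mul' := fun g₁ g₂ => by
        have h := cochainsMap_comp (Rep.trivial k L V) (Rep.trivial k L V) (Rep.trivial k L V)
          (φ g₂⁻¹).toMonoidHom (ψ g₂) (fun _ _ => rfl)
          (φ g₁⁻¹).toMonoidHom (ψ g₁) (fun _ _ => rfl)
          (φ (g₁ * g₂)⁻¹).toMonoidHom (ψ (g₁ * g₂)) (fun _ _ => rfl)
          (fun x => by simp [_root_.mul_inv_rev]) (fun a => by simp)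
        exact congrArg ModuleCat.Hom.hom
          ((congrArg (fun c => HomologicalComplex.homologyMap c j) h.symm).trans
            (HomologicalComplex.homologyMap_comp _ _ j)) }


/-- `H^i(G, H^j(L, ℤ))`: the `i`-th cohomology of the cyclic group `ℤ/q` with coefficients in
the `j`-th cohomology of the lattice `ℤ^n` (with trivial `ℤ` coefficients), where the
`ℤ/q`-action on `H^j(ℤ^n, ℤ)` is the one functorially induced by the matrix action on the
lattice. -/
noncomputable abbrev cohOfCoh {n : ℕ} (q : ℕ) [NeZero q] (M : Matrix (Fin n) (Fin n) ℤ)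
    (hq : M ^ q = 1) (i j : ℕ) : ModuleCat ℤ :=
  groupCohomology
    (cohRep (matAction q M hq) (1 : Representation ℤ (Multiplicative (ZMod q)) ℤ) j) i

/-- `H^k(Γ, ℤ)` for `Γ = ℤ^n ⋊ ℤ/q`, with trivial coefficients `ℤ`. -/
noncomputable abbrev cohCrys {n : ℕ} (q : ℕ) [NeZero q] (M : Matrix (Fin n) (Fin n) ℤ)
    (hq : M ^ q = 1) (k : ℕ) : ModuleCat ℤ :=
  groupCohomology (Rep.trivial ℤ (Crys q M hq) ℤ) k

end Crystal

/-- The holonomy matrix. -/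
def holM : Matrix (Fin 5) (Fin 5) ℤ := !![0, 0, 0, 0, -1; 1, 0, 0, 0, -1; 0, 1, 0, 0, 0; 0, 0, 1, 0, 0; 0, 0, 0, 1, -1]

lemma holM_pow : holM ^ 8 = 1 := by decide

/-- `H^k(ℤ^5 ⋊ ℤ/8, ℤ)`, where the generator of `ℤ/8` acts on `ℤ^5` by left
multiplication by the matrix `holM`. -/
noncomputable abbrev H (k : ℕ) : ModuleCat ℤ := Crystal.cohCrys 8 holM holM_pow k

/-- `H^i(ℤ/8, H^j(ℤ^5, ℤ))`, with the functorially induced action on coefficients. -/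
noncomputable abbrev Hc (i j : ℕ) : ModuleCat ℤ := Crystal.cohOfCoh 8 holM holM_pow i j


open CategoryTheory
open CategoryTheory

theorem shortHomologyR {R : Type} [CommRing R] {S : ShortComplex (ModuleCat.{0} R)} {Q : Type}
    [AddCommGroup Q] [Module R Q]
    (π : S.X₂ →ₗ[R] Q) (h1 : ∀ x, π (S.f.hom x) = 0)
    (h2 : ∀ q, ∃ x, S.g.hom x = 0 ∧ π x = q)
    (h3 : ∀ x, S.g.hom x = 0 → π x = 0 → ∃ y, S.f.hom y = x) :
    Nonempty (S.homology ≃+ Q) := by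
  let π' : LinearMap.ker S.g.hom →ₗ[R] Q := π ∘ₗ Submodule.subtype _
  have hs : Function.Surjective π' := by
    intro q
    obtain ⟨x, hx, hq⟩ := h2 q
    exact ⟨⟨x, hx⟩, hq⟩
  have hk : LinearMap.range S.moduleCatToCycles = LinearMap.ker π' := by
    ext x
    constructor
    · rintro ⟨y, rfl⟩
      exact h1 y
    · intro hx
      obtain ⟨y, hy⟩ := h3 x.1 x.2 hx
      exact ⟨y, Subtype.ext hy⟩
  let e1 := S.moduleCatHomologyIso.toLinearEquiv
  let e2 : (LinearMap.ker S.g.hom ⧸ LinearMap.range S.moduleCatToCycles) ≃ₗ[R] Q :=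
    (Submodule.quotEquivOfEq _ _ hk).trans (π'.quotKerEquivOfSurjective hs)
  exact ⟨e1.toAddEquiv.trans e2.toAddEquiv⟩

theorem Rep_exact_of {k : Type} [CommRing k] {G : Type} [Group G] (S : ShortComplex (Rep.{0} k G))
    (h : ∀ x, S.g.hom x = 0 → ∃ y, S.f.hom y = x) : S.Exact := by
  apply (forget₂ _ (ModuleCat k)).reflects_exact_of_faithful
  rw [ShortComplex.moduleCat_exact_iff]
  exact h

theorem res_quasiIso {k : Type} [CommRing k] {G : Type} [Group G] (K : ChainComplex (Rep.{0} k G) ℕ)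
   (ε : K.X 0 ⟶ Rep.trivial k G k) (hε : K.d 1 0 ≫ ε = 0)
   (surj : Function.Surjective ε.hom)
   (ex0 : ∀ x, ε.hom x = 0 → ∃ y, (K.d 1 0).hom y = x)
   (ex : ∀ n x, (K.d (n+1) n).hom x = 0 → ∃ y, (K.d (n+2) (n+1)).hom y = x) :
    QuasiIso ((K.toSingle₀Equiv _).symm
    ⟨ε, hε⟩ : K ⟶ (ChainComplex.single₀ _).obj (Rep.trivial k G k)) := by
  refine ⟨fun m => ?_⟩
  have h0 := ChainComplex.toSingle₀Equiv_symm_apply_f_zero (C := K) ε hε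
  match m with
  | 0 =>
    rw [ChainComplex.quasiIsoAt₀_iff, ShortComplex.quasiIso_iff_of_zeros' _ (K.shape _ _ (by simp)) rfl rfl]
    constructor
    · apply Rep_exact_of
      intro x hx
      apply ex0
      have h := congrArg (fun t => t.hom x) h0
      exact h.symm.trans hx
    · rw [Rep.epi_iff_surjective]
      intro y
      obtain ⟨x, hx⟩ := surj y
      have h := congrArg (fun t => t.hom x) h0
      exact ⟨x, h.trans hx⟩
  | m+1 =>
    rw [quasiIsoAt_iff_exactAt' (hL := ChainComplex.exactAt_succ_single_obj ..)]
    rw [HomologicalComplex.exactAt_iff' _ (m+2) (m+1) m (by simp) (by simp)]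
    apply Rep_exact_of
    intro x hx
    exact ex m x hx

theorem lemmaA {k : Type} [CommRing k] {G : Type} [Group G] (K : ChainComplex (Rep.{0} k G) ℕ)
   (ε : K.X 0 ⟶ Rep.trivial k G k) (hε : K.d 1 0 ≫ ε = 0)
   (surj : Function.Surjective ε.hom)
   (ex0 : ∀ x, ε.hom x = 0 → ∃ y, (K.d 1 0).hom y = x)
   (ex : ∀ n x, (K.d (n+1) n).hom x = 0 → ∃ y, (K.d (n+2) (n+1)).hom y = x)
   (hproj : ∀ n, Projective (K.X n)) (A : Rep.{0} k G) (n : ℕ) {Q : Type} [AddCommGroup Q] [Module k Q]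
   (π : (K.X (n+1) ⟶ A) →ₗ[k] Q) (h1 : ∀ f : K.X n ⟶ A, π (K.d (n+1) n ≫ f) = 0)
   (h2 : ∀ q, ∃ f : K.X (n+1) ⟶ A, K.d (n+2) (n+1) ≫ f = 0 ∧ π f = q)
   (h3 : ∀ f : K.X (n+1) ⟶ A, K.d (n+2) (n+1) ≫ f = 0 → π f = 0 →
      ∃ g : K.X n ⟶ A, K.d (n+1) n ≫ g = f) :
   Nonempty (groupCohomology A (n+1) ≃+ Q) := by
  let R : ProjectiveResolution (Rep.trivial k G k) :=
    { complex := K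
      projective := hproj
      π := (K.toSingle₀Equiv _).symm ⟨ε, hε⟩
      quasiIso := res_quasiIso K ε hε surj ex0 ex }
  let L := R.complex.linearYonedaObj k A
  let e1 : groupCohomology A (n+1) ≅ L.homology (n+1) := groupCohomologyIso A (n+1) R
  let e3 : L.homology (n+1) ≅ (L.sc' n (n+1) (n+2)).homology :=
    ShortComplex.homologyMapIso (L.isoSc' n (n+1) (n+2) (by simp) (by simp))
  obtain ⟨e2⟩ := shortHomologyR (S := L.sc' n (n+1) (n+2)) (Q := Q) π h1 h2 h3
  exact ⟨(e1 ≪≫ e3).toLinearEquiv.toAddEquiv.trans e2⟩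

section FreeRep
variable {k : Type} [CommRing k] {G : Type} [Group G] {E : Type} [AddCommGroup E] [Module k E]
  (ρ : Representation k G E) {ι : Type} (B : Module.Basis (G × ι) k E)
  (hB : ∀ h g i, ρ h (B (g, i)) = B (h * g, i))

theorem freeRep_ext {M : Type} [AddCommGroup M] [Module k M] (B : Module.Basis (G × ι) k E)
    (hB : ∀ h g i, ρ h (B (g, i)) = B (h * g, i))
    (τ : Representation k G M)
    (φ ψ : E →ₗ[k] M) (hφ : ∀ g x, φ (ρ g x) = τ g (φ x)) (hψ : ∀ g x, ψ (ρ g x) = τ g (ψ x))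
    (h : ∀ i, φ (B (1, i)) = ψ (B (1, i))) : φ = ψ := by
  apply B.ext
  rintro ⟨g, i⟩
  have := hB g 1 i
  rw [mul_one] at this
  rw [← this, hφ, hψ, h]

theorem freeRep_exists {M : Type} [AddCommGroup M] [Module k M] (B : Module.Basis (G × ι) k E)
    (hB : ∀ h g i, ρ h (B (g, i)) = B (h * g, i))
    (τ : Representation k G M) (v : ι → M) :
    ∃ φ : E →ₗ[k] M, (∀ g x, φ (ρ g x) = τ g (φ x)) ∧ ∀ i, φ (B (1, i)) = v i := by
  refine ⟨B.constr k (fun p => τ p.1 (v p.2)), fun g x => ?_, fun i => ?_⟩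
  · have : (B.constr k (fun p => τ p.1 (v p.2))) ∘ₗ ρ g =
        τ g ∘ₗ (B.constr k (fun p => τ p.1 (v p.2))) := by
      apply B.ext
      rintro ⟨h, i⟩
      simp [hB, Module.Basis.constr_basis]
    exact LinearMap.congr_fun this x
  · simp [Module.Basis.constr_basis]

theorem freeRep_projective (B : Module.Basis (G × ι) k E)
    (hB : ∀ h g i, ρ h (B (g, i)) = B (h * g, i)) : Projective (Rep.of ρ) := by
  constructor
  intro X Y f e he
  rw [Rep.epi_iff_surjective] at he
  choose v hv using fun i => he (f.hom (B (1, i)))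
  obtain ⟨φ, h1, h2⟩ := freeRep_exists ρ B hB X.ρ v
  refine ⟨Rep.ofHom ⟨φ, fun g => LinearMap.ext fun x => h1 g x⟩, ?_⟩
  ext1
  ext1
  apply freeRep_ext ρ B hB Y.ρ
  · intro g x
    exact Rep.hom_comm_apply (Rep.ofHom ⟨φ, fun g => LinearMap.ext fun x => h1 g x⟩ ≫ e :
      Rep.of ρ ⟶ Y) g x
  · intro g x
    exact Rep.hom_comm_apply f g x
  · intro i
    refine Eq.trans ?_ (hv i)
    exact congrArg e.hom (h2 i)

end FreeRep

theorem lemmaB {k : Type} [CommRing k] {G : Type} [Group G] {E : Type} [AddCommGroup E]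
    [Module k E] (ρ : Representation k G E) (hproj : Projective (Rep.of ρ))
    (S : ℕ → Submodule k E) (hS : ∀ n g, S n ≤ (S n).comap (ρ g))
    (D : ℕ → E →ₗ[k] E) (hDρ : ∀ n g x, D n (ρ g x) = ρ g (D n x))
    (hDS : ∀ n x, x ∈ S (n+1) → D n x ∈ S n) (hDD : ∀ n x, D n (D (n+1) x) = 0)
    (pr : ℕ → E →ₗ[k] E) (hprρ : ∀ n g x, pr n (ρ g x) = ρ g (pr n x))
    (hprS : ∀ n x, pr n x ∈ S n) (hpr : ∀ n x, x ∈ S n → pr n x = x)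
    (ε : E →ₗ[k] k) (hερ : ∀ g x, ε (ρ g x) = ε x) (hεD : ∀ x ∈ S 1, ε (D 0 x) = 0)
    (hsurj : ∃ x ∈ S 0, ε x = 1)
    (ex0 : ∀ x ∈ S 0, ε x = 0 → ∃ y ∈ S 1, D 0 y = x)
    (ex : ∀ n, ∀ x ∈ S (n+1), D n x = 0 → ∃ y ∈ S (n+2), D (n+1) y = x)
    (n : ℕ) {Q : Type} [AddCommGroup Q] [Module k Q] (π : (E →ₗ[k] k) →ₗ[k] Q)
    (h0 : ∀ φ, π (φ ∘ₗ pr (n+1)) = π φ)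
    (h1 : ∀ φ : E →ₗ[k] k, (∀ g x, φ (ρ g x) = φ x) → π (φ ∘ₗ D n) = 0)
    (h2 : ∀ q, ∃ φ : E →ₗ[k] k, (∀ g x, φ (ρ g x) = φ x) ∧
      (∀ x ∈ S (n+2), φ (D (n+1) x) = 0) ∧ π φ = q)
    (h3 : ∀ φ : E →ₗ[k] k, (∀ g x, φ (ρ g x) = φ x) → (∀ x ∈ S (n+2), φ (D (n+1) x) = 0) →
      π φ = 0 → ∃ ψ : E →ₗ[k] k, (∀ g x, ψ (ρ g x) = ψ x) ∧ ∀ x ∈ S (n+1), ψ (D n x) = φ x) :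
    Nonempty (groupCohomology (Rep.trivial k G k) (n+1) ≃+ Q) := by
  let P : ℕ → Rep.{0} k G := fun n => Rep.subrepresentation (Rep.of ρ) (S n) (hS n)
  let d : ∀ n, P (n+1) ⟶ P n := fun n => Rep.ofHom
    ⟨(D n).restrict (hDS n), fun g => LinearMap.ext fun x => Subtype.ext (hDρ n g x.1)⟩
  let K : ChainComplex (Rep.{0} k G) ℕ := ChainComplex.of P d (fun n => by
    ext x
    exact hDD n x.1)
  have hKd : ∀ n, K.d (n+1) n = d n := fun n => ChainComplex.of_d _ _ _
  let ε' : K.X 0 ⟶ Rep.trivial k G k := Rep.ofHom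
    (⟨ε ∘ₗ (S 0).subtype, fun g => LinearMap.ext fun x => hερ g x.1⟩ : (P 0).ρ.IntertwiningMap (Rep.trivial k G k).ρ)
  let ext : ∀ n, (K.X n ⟶ Rep.trivial k G k) → (E →ₗ[k] k) := fun n f =>
    f.hom.toLinearMap ∘ₗ (pr n).codRestrict (S n) (hprS n)
  have hext_inv : ∀ n f g x, ext n f (ρ g x) = ext n f x := by
    intro n f g x
    have := Rep.hom_comm_apply f g ((pr n).codRestrict (S n) (hprS n) x)
    refine Eq.trans ?_ this
    refine congrArg f.hom (Subtype.ext ?_)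
    exact hprρ n g x
  have hext : ∀ n f (x : S n), ext n f x.1 = f.hom x := by
    intro n f x
    refine congrArg f.hom (Subtype.ext ?_)
    exact hpr n x.1 x.2
  let res : ∀ n, (φ : E →ₗ[k] k) → (∀ g x, φ (ρ g x) = φ x) → (K.X n ⟶ Rep.trivial k G k) :=
    fun n φ hφ => Rep.ofHom (⟨φ ∘ₗ (S n).subtype, fun g => LinearMap.ext fun x => hφ g x.1⟩ :
      (P n).ρ.IntertwiningMap (Rep.trivial k G k).ρ)
  have hextres : ∀ n φ hφ, ext n (res n φ hφ) = φ ∘ₗ pr n := fun n φ hφ => rfl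
  refine lemmaA K ε' ?_ ?_ ?_ ?_ ?_ _ n
    (π := π ∘ₗ { toFun := ext (n+1), map_add' := fun _ _ => rfl, map_smul' := fun _ _ => rfl })
    ?_ ?_ ?_
  · rw [hKd]
    ext x
    exact hεD x.1 x.2
  · intro c
    obtain ⟨x, hx, h⟩ := hsurj
    refine ⟨(⟨c • x, (S 0).smul_mem _ hx⟩ : S 0), ?_⟩
    show ε (c • x) = c
    rw [map_smul, h]; simp
  · intro x hx
    rw [hKd]
    obtain ⟨y, hy, h⟩ := ex0 x.1 x.2 hx
    exact ⟨(⟨y, hy⟩ : S 1), Subtype.ext h⟩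
  · intro m x hx
    rw [hKd] at hx ⊢
    obtain ⟨y, hy, h⟩ := ex m x.1 x.2 (congrArg Subtype.val hx)
    exact ⟨(⟨y, hy⟩ : S (m+2)), Subtype.ext h⟩
  · intro m
    let r : Retract (P m) (Rep.of ρ) :=
      { i := Rep.ofHom ⟨(S m).subtype, fun g => LinearMap.ext fun x => rfl⟩
        r := Rep.ofHom ⟨(pr m).codRestrict (S m) (hprS m),
          fun g => LinearMap.ext fun x => Subtype.ext (hprρ m g x)⟩
        retract := by
          ext x
          exact hpr m x.1 x.2 }
    exact r.projective
  · intro f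
    rw [hKd]
    have := h1 (ext n f) (hext_inv n f)
    rw [← h0] at this
    refine Eq.trans (congrArg π ?_) this
    ext x
    have := hext n f (⟨D n (pr (n+1) x), hDS n _ (hprS _ _)⟩ : S n)
    exact this.symm
  · intro q
    obtain ⟨φ, a, b, c⟩ := h2 q
    refine ⟨res (n+1) φ a, ?_, ?_⟩
    · rw [hKd]
      ext x
      exact b x.1 x.2
    · exact (h0 φ).trans c
  · intro f hf hπ
    rw [hKd] at hf
    have hz : ∀ x ∈ S (n+2), ext (n+1) f (D (n+1) x) = 0 := by
      intro x hx
      have := congrArg (fun t => t.hom (⟨x, hx⟩ : S (n+2))) hf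
      refine Eq.trans ?_ this
      exact hext (n+1) f (⟨D (n+1) x, hDS _ _ hx⟩ : S (n+1))
    obtain ⟨ψ, a, b⟩ := h3 (ext (n+1) f) (hext_inv _ f) hz hπ
    refine ⟨res n ψ a, ?_⟩
    rw [hKd]
    ext x
    exact (b x.1 x.2).trans (hext (n+1) f x)

/-! ### One-dimensional operators -/

abbrev FZ := ℤ →₀ ℤ

/-- parity bit -/
def ob (m : ℤ) : Bool := decide (m % 2 = 1)

def sgB (b : Bool) : ℤ := if b then -1 else 1

theorem ob_add_one (m : ℤ) : ob (m + 1) = !ob m := by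
  unfold ob
  rcases Int.emod_two_eq_zero_or_one m with h | h <;> simp [h] <;> omega

theorem ob_sub_one (m : ℤ) : ob (m - 1) = !ob m := by
  unfold ob
  rcases Int.emod_two_eq_zero_or_one m with h | h <;> simp [h] <;> omega

theorem ob_neg (m : ℤ) : ob (-m) = ob m := by
  unfold ob
  congr 1
  simp only [eq_iff_iff]
  omega

theorem ob_add_two_mul (m w : ℤ) : ob (m + 2 * w) = ob m := by
  unfold ob
  simp

theorem sgB_not (b : Bool) : sgB (!b) = - sgB b := by cases b <;> rfl
theorem sgB_mul_self (b : Bool) : sgB b * sgB b = 1 := by cases b <;> rfl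

noncomputable def mkF (v : ℤ → FZ) : Module.End ℤ FZ := Finsupp.linearCombination ℤ v

theorem mkF_single (v : ℤ → FZ) (m : ℤ) : mkF v (Finsupp.single m 1) = v m := by
  simp [mkF]

theorem endF_ext {A B : Module.End ℤ FZ}
    (h : ∀ m, A (Finsupp.single m 1) = B (Finsupp.single m 1)) : A = B := by
  apply Finsupp.lhom_ext'
  intro m
  apply LinearMap.ext_ring
  exact h m

noncomputable def dF : Module.End ℤ FZ :=
  mkF fun m => if ob m then Finsupp.single (m + 1) 1 - Finsupp.single (m - 1) 1 else 0

noncomputable def tF : Module.End ℤ FZ := mkF fun m => sgB (ob m) • Finsupp.single m 1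

noncomputable def pF : Module.End ℤ FZ := mkF fun m => if ob m then 0 else Finsupp.single 0 1

noncomputable def kVal (m : ℤ) : FZ :=
  if ob m then 0
  else (∑ j ∈ Finset.range (m / 2).toNat, Finsupp.single (2 * (j : ℤ) + 1) 1)
    - ∑ j ∈ Finset.range (-(m / 2)).toNat, Finsupp.single (-2 * (j : ℤ) - 1) 1

noncomputable def kF : Module.End ℤ FZ := mkF kVal

theorem kVal_step (m : ℤ) (h : ob m = true) :
    kVal (m + 1) - kVal (m - 1) = Finsupp.single m 1 := by
  have h1 : ob (m + 1) = false := by rw [ob_add_one, h]; rfl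
  have h2 : ob (m - 1) = false := by rw [ob_sub_one, h]; rfl
  have hm : m % 2 = 1 := by simpa [ob] using h
  simp only [kVal, h1, h2]
  obtain ⟨t, rfl⟩ : ∃ t, m = 2 * t + 1 := ⟨m / 2, by omega⟩
  have e1 : (2 * t + 1 + 1) / 2 = t + 1 := by omega
  have e2 : (2 * t + 1 - 1) / 2 = t := by omega
  rw [e1, e2]
  rcases le_or_gt 0 t with h0 | h0
  · lift t to ℕ using h0
    have a1 : ((t : ℤ) + 1).toNat = t + 1 := by omega
    have a2 : ((t : ℤ)).toNat = t := by omega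
    have a3 : (-(t : ℤ)).toNat = 0 := by omega
    have a4 : (-((t : ℤ) + 1)).toNat = 0 := by omega
    rw [a1, a2, a3, a4, Finset.sum_range_succ]
    simp
  · obtain ⟨s, rfl⟩ : ∃ s : ℕ, t = -(s : ℤ) - 1 := ⟨(-t - 1).toNat, by omega⟩
    have a1 : (-(s : ℤ) - 1 + 1).toNat = 0 := by omega
    have a2 : (-(s : ℤ) - 1).toNat = 0 := by omega
    have a3 : (-(-(s : ℤ) - 1)).toNat = s + 1 := by omega
    have a4 : (-(-(s : ℤ) - 1 + 1)).toNat = s := by omega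
    have a5 : 2 * (-(s : ℤ) - 1) + 1 = -2 * (s : ℤ) - 1 := by ring
    rw [a1, a2, a3, a4, Finset.sum_range_succ, a5]
    simp

theorem dF_single (m : ℤ) : dF (Finsupp.single m 1) =
    if ob m then Finsupp.single (m + 1) 1 - Finsupp.single (m - 1) 1 else 0 := mkF_single _ _
theorem tF_single (m : ℤ) : tF (Finsupp.single m 1) = sgB (ob m) • Finsupp.single m 1 :=
  mkF_single _ _
theorem pF_single (m : ℤ) : pF (Finsupp.single m 1) = if ob m then 0 else Finsupp.single 0 1 :=
  mkF_single _ _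
theorem kF_single (m : ℤ) : kF (Finsupp.single m 1) = kVal m := mkF_single _ _

theorem ob_odd (j : ℤ) : ob (2 * j + 1) = true := by simp [ob]
theorem ob_odd' (j : ℤ) : ob (-2 * j - 1) = true := by simp [ob]; omega

theorem dF_dF : dF * dF = 0 := by
  apply endF_ext
  intro m
  rw [Module.End.mul_apply, dF_single]
  cases h : ob m
  · simp
  · simp [dF_single, ob_add_one, ob_sub_one, h]

theorem tF_tF : tF * tF = 1 := by
  apply endF_ext
  intro m
  rw [Module.End.mul_apply, tF_single, map_smul, tF_single, smul_smul, sgB_mul_self]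
  simp

theorem tF_dF : tF * dF = - (dF * tF) := by
  apply endF_ext
  intro m
  rw [LinearMap.neg_apply, Module.End.mul_apply, Module.End.mul_apply, dF_single, tF_single, map_smul, dF_single]
  cases h : ob m
  · simp
  · simp [tF_single, ob_add_one, ob_sub_one, h, sgB]

theorem kVal_odd (m : ℤ) (h : ob m = true) : kVal m = 0 := by simp [kVal, h]

theorem tF_kF : tF * kF = - (kF * tF) := by
  apply endF_ext
  intro m
  rw [LinearMap.neg_apply, Module.End.mul_apply, Module.End.mul_apply, tF_single, map_smul, kF_single]
  cases h : ob m
  · simp only [kVal, h, Bool.false_eq_true, if_false, map_sub, map_sum, tF_single, ob_odd, ob_odd',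
      sgB]
    simp
    abel
  · simp [kVal_odd m h]

theorem dF_kVal (t : ℤ) : dF (kVal (2 * t)) = Finsupp.single (2 * t) 1 - Finsupp.single 0 1 := by
  have key : ∀ t : ℤ, dF (kVal (2 * (t + 1))) - dF (kVal (2 * t))
      = Finsupp.single (2 * (t+1)) 1 - Finsupp.single (2 * t) 1 := by
    intro t
    have := kVal_step (2 * t + 1) (ob_odd t)
    rw [← map_sub]
    have e1 : 2 * (t + 1) = 2 * t + 1 + 1 := by ring
    have e2 : 2 * t = 2 * t + 1 - 1 := by ring
    rw [e1]
    nth_rw 2 [e2]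
    rw [this, dF_single, ob_odd, if_pos rfl]
    simp
  induction t using Int.induction_on with
  | zero => simp [kVal, ob]
  | succ i ih =>
    have := key i
    rw [ih] at this
    rw [sub_eq_iff_eq_add] at this
    rw [this]; abel
  | pred i ih =>
    have := key (-i - 1)
    rw [sub_add_cancel, ih] at this
    have h2 := sub_eq_iff_eq_add.mp this
    rw [eq_comm, ← eq_sub_iff_add_eq'] at h2
    rw [h2]; abel

theorem dF_kF : dF * kF + kF * dF = 1 - pF := by
  apply endF_ext
  intro m
  rw [LinearMap.add_apply, LinearMap.sub_apply, Module.End.mul_apply, Module.End.mul_apply,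
    kF_single, dF_single, pF_single]
  cases h : ob m
  · have hm : m % 2 = 0 := by
      have : ¬ (m % 2 = 1) := by simpa [ob] using h
      omega
    obtain ⟨t, rfl⟩ : ∃ t, m = 2 * t := ⟨m / 2, by omega⟩
    rw [dF_kVal]
    simp
  · simp [kVal_odd m h, kF_single, kVal_step m h]

/-- all odd support -/
theorem kVal_supp (m : ℤ) : kVal m ∈ Finsupp.supported ℤ ℤ {l : ℤ | ob l = true} := by
  unfold kVal
  split_ifs
  · exact Submodule.zero_mem _
  · refine Submodule.sub_mem _ (Submodule.sum_mem _ fun j _ => ?_) (Submodule.sum_mem _ fun j _ => ?_)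
    · exact Finsupp.single_mem_supported _ _ (ob_odd j)
    · exact Finsupp.single_mem_supported _ _ (ob_odd' j)

/-! ### The cell module -/

abbrev XV := Fin 5 → ℤ
abbrev EE := (XV × ZMod 8) →₀ ℤ

noncomputable def cel (x : XV) (c : ZMod 8) : EE := Finsupp.single (x, c) 1

noncomputable def mkE {M : Type} [AddCommGroup M] (v : XV → ZMod 8 → M) : EE →ₗ[ℤ] M :=
  Finsupp.linearCombination ℤ (fun p => v p.1 p.2)

theorem mkE_cel {M : Type} [AddCommGroup M] (v : XV → ZMod 8 → M) (x : XV) (c : ZMod 8) :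
    mkE v (cel x c) = v x c := by
  simp [mkE, cel]

theorem lin_ext {M : Type} [AddCommGroup M] {A B : EE →ₗ[ℤ] M}
    (h : ∀ x c, A (cel x c) = B (cel x c)) : A = B := by
  apply Finsupp.lhom_ext'
  rintro ⟨x, c⟩
  apply LinearMap.ext_ring
  exact h x c

theorem endE_ext {A B : Module.End ℤ EE}
    (h : ∀ x c, A (cel x c) = B (cel x c)) : A = B := lin_ext h

/-- the line through `(x,c)` in direction `i` -/
noncomputable def lineE (i : Fin 5) (x : XV) (c : ZMod 8) : FZ →ₗ[ℤ] EE :=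
  Finsupp.lmapDomain ℤ ℤ (fun m => (Function.update x i m, c))

theorem lineE_single (i : Fin 5) (x : XV) (c : ZMod 8) (m : ℤ) :
    lineE i x c (Finsupp.single m 1) = cel (Function.update x i m) c := by
  simp [lineE, cel]

noncomputable def uop (i : Fin 5) (A : Module.End ℤ FZ) : Module.End ℤ EE :=
  mkE fun x c => lineE i x c (A (Finsupp.single (x i) 1))

theorem uop_cel (i : Fin 5) (A : Module.End ℤ FZ) (x : XV) (c : ZMod 8) :
    uop i A (cel x c) = lineE i x c (A (Finsupp.single (x i) 1)) := mkE_cel _ _ _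

theorem uop_line (i : Fin 5) (A : Module.End ℤ FZ) (x : XV) (c : ZMod 8) (v : FZ) :
    uop i A (lineE i x c v) = lineE i x c (A v) := by
  have : (uop i A) ∘ₗ lineE i x c = lineE i x c ∘ₗ A := by
    apply Finsupp.lhom_ext'
    intro m
    apply LinearMap.ext_ring
    show uop i A (lineE i x c (Finsupp.single m 1)) = lineE i x c (A (Finsupp.single m 1))
    rw [lineE_single, uop_cel, Function.update_self]
    simp only [lineE, Function.update_idem]
  exact LinearMap.congr_fun this v

theorem uop_mul (i : Fin 5) (A B : Module.End ℤ FZ) : uop i (A * B) = uop i A * uop i B := by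
  apply endE_ext
  intro x c
  rw [Module.End.mul_apply, uop_cel, uop_cel, uop_line]
  rfl

theorem uop_one (i : Fin 5) : uop i 1 = 1 := by
  apply endE_ext
  intro x c
  rw [uop_cel, Module.End.one_apply, lineE_single, Function.update_eq_self]
  rfl

theorem uop_add (i : Fin 5) (A B : Module.End ℤ FZ) : uop i (A + B) = uop i A + uop i B := by
  apply endE_ext
  intro x c
  rw [LinearMap.add_apply, uop_cel, uop_cel, uop_cel, LinearMap.add_apply, map_add]

theorem uop_neg (i : Fin 5) (A : Module.End ℤ FZ) : uop i (-A) = - uop i A := by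
  apply endE_ext
  intro x c
  rw [LinearMap.neg_apply, uop_cel, uop_cel, LinearMap.neg_apply, map_neg]

theorem uop_zero (i : Fin 5) : uop i 0 = 0 := by
  apply endE_ext
  intro x c
  simp [uop_cel]

theorem uop_sub (i : Fin 5) (A B : Module.End ℤ FZ) : uop i (A - B) = uop i A - uop i B := by
  rw [sub_eq_add_neg, uop_add, uop_neg, ← sub_eq_add_neg]

noncomputable def planeE (i j : Fin 5) (x : XV) (c : ZMod 8) : FZ →ₗ[ℤ] FZ →ₗ[ℤ] EE :=
  Finsupp.linearCombination ℤ (fun m => lineE j (Function.update x i m) c)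

theorem planeE_single (i j : Fin 5) (x : XV) (c : ZMod 8) (m : ℤ) :
    planeE i j x c (Finsupp.single m 1) = lineE j (Function.update x i m) c := by
  simp [planeE]

theorem planeE_swap (i j : Fin 5) (hij : i ≠ j) (x : XV) (c : ZMod 8) :
    planeE i j x c = (planeE j i x c).flip := by
  apply Finsupp.lhom_ext'
  intro m
  apply LinearMap.ext_ring
  apply Finsupp.lhom_ext'
  intro l
  apply LinearMap.ext_ring
  show planeE i j x c (Finsupp.single m 1) (Finsupp.single l 1)
    = planeE j i x c (Finsupp.single l 1) (Finsupp.single m 1)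
  rw [planeE_single, planeE_single, lineE_single, lineE_single, Function.update_comm hij]

theorem uop_line_ne (i j : Fin 5) (hij : i ≠ j) (A : Module.End ℤ FZ) (x : XV) (c : ZMod 8)
    (v : FZ) : uop j A (lineE i x c v) = planeE i j x c v (A (Finsupp.single (x j) 1)) := by
  have : (uop j A) ∘ₗ lineE i x c = (planeE i j x c).flip (A (Finsupp.single (x j) 1)) := by
    apply Finsupp.lhom_ext'
    intro m
    apply LinearMap.ext_ring
    show uop j A (lineE i x c (Finsupp.single m 1))
      = planeE i j x c (Finsupp.single m 1) (A (Finsupp.single (x j) 1))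
    rw [lineE_single, uop_cel, planeE_single, Function.update_of_ne hij.symm]
  exact LinearMap.congr_fun this v

theorem uop_comm (i j : Fin 5) (hij : i ≠ j) (A B : Module.End ℤ FZ) :
    uop i A * uop j B = uop j B * uop i A := by
  apply endE_ext
  intro x c
  rw [Module.End.mul_apply, Module.End.mul_apply, uop_cel, uop_cel, uop_line_ne i j hij,
    uop_line_ne j i hij.symm, planeE_swap i j hij]
  rfl

/-- shift of the cyclic coordinate by `a` -/
noncomputable def shC (a : ZMod 8) : Module.End ℤ EE := mkE fun x c => cel x (c + a)

theorem shC_cel (a : ZMod 8) (x : XV) (c : ZMod 8) : shC a (cel x c) = cel x (c + a) :=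
  mkE_cel _ _ _

theorem shC_line (a : ZMod 8) (i : Fin 5) (x : XV) (c : ZMod 8) (v : FZ) :
    shC a (lineE i x c v) = lineE i x (c + a) v := by
  have : (shC a) ∘ₗ lineE i x c = lineE i x (c + a) := by
    apply Finsupp.lhom_ext'
    intro m
    apply LinearMap.ext_ring
    show shC a (lineE i x c (Finsupp.single m 1)) = lineE i x (c + a) (Finsupp.single m 1)
    rw [lineE_single, lineE_single, shC_cel]
  exact LinearMap.congr_fun this v

theorem shC_comm (a : ZMod 8) (i : Fin 5) (A : Module.End ℤ FZ) :
    shC a * uop i A = uop i A * shC a := by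
  apply endE_ext
  intro x c
  rw [Module.End.mul_apply, Module.End.mul_apply, uop_cel, shC_line, shC_cel, uop_cel]

noncomputable def wop (q : ℤ) : Module.End ℤ EE :=
  if q ≤ 0 then 0 else if ob q then shC 1 - 1 else ∑ a : ZMod 8, shC a

theorem wop_comm (q : ℤ) (i : Fin 5) (A : Module.End ℤ FZ) :
    wop q * uop i A = uop i A * wop q := by
  unfold wop
  split_ifs
  · simp
  · rw [sub_mul, mul_sub, shC_comm, one_mul, mul_one]
  · rw [Finset.sum_mul, Finset.mul_sum]
    exact Finset.sum_congr rfl fun a _ => shC_comm a i A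

theorem shC_mul (a b : ZMod 8) : shC a * shC b = shC (b + a) := by
  apply endE_ext
  intro x c
  rw [Module.End.mul_apply, shC_cel, shC_cel, shC_cel, add_assoc]

theorem shC_sum (b : ZMod 8) : (∑ a : ZMod 8, shC a) * shC b = ∑ a : ZMod 8, shC a := by
  rw [Finset.sum_mul]
  simp only [shC_mul]
  exact Fintype.sum_equiv (Equiv.addLeft b) _ _ (fun a => rfl)

theorem shC_sum' (b : ZMod 8) : shC b * (∑ a : ZMod 8, shC a) = ∑ a : ZMod 8, shC a := by
  rw [Finset.mul_sum]
  simp only [shC_mul]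
  exact Fintype.sum_equiv (Equiv.addRight b) _ _ (fun a => rfl)

theorem wop_wop (q : ℤ) : wop q * wop (q + 1) = 0 := by
  unfold wop
  rw [ob_add_one]
  split_ifs with h1 h2 h3 h4 h5 h6 h7 h8
  all_goals first
    | exact zero_mul _
    | exact mul_zero _
    | (exfalso; omega)
    | (exfalso; simp_all; done)
    | (rw [sub_mul, shC_sum', one_mul, sub_self])
    | (rw [mul_sub, shC_sum, mul_one, sub_self])

theorem wop_wop' (q : ℤ) : wop (q + 1) * wop q = 0 := by
  unfold wop
  rw [ob_add_one]
  split_ifs with h1 h2 h3 h4 h5 h6 h7 h8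
  all_goals first
    | exact zero_mul _
    | exact mul_zero _
    | (exfalso; simp_all; done)
    | (exfalso; omega)
    | (rw [sub_mul, shC_sum', one_mul, sub_self])
    | (rw [mul_sub, shC_sum, mul_one, sub_self])

abbrev Bits := Fin 5 → Bool

def bits (x : XV) : Bits := fun i => ob (x i)

theorem bits_update (x : XV) (i : Fin 5) (m : ℤ) :
    bits (Function.update x i m) = Function.update (bits x) i (ob m) := by
  funext j
  by_cases h : j = i
  · subst h; simp [bits]
  · simp [bits, h]

def sB (i : Fin 5) (b : Bits) : ℤ := ∏ j, if j < i then sgB (b j) else 1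
def sAll (b : Bits) : ℤ := ∏ j, sgB (b j)
def degB (b : Bits) : ℤ := ∑ j, if b j then 1 else 0

theorem sB_mul_self (i : Fin 5) (b : Bits) : sB i b * sB i b = 1 := by
  revert i b; decide +kernel
theorem sAll_mul_self (b : Bits) : sAll b * sAll b = 1 := by
  revert b; decide +kernel
theorem sB_update_ge (i j : Fin 5) (h : i ≤ j) (b : Bits) (m : Bool) :
    sB i (Function.update b j m) = sB i b := by
  revert i j b m; decide +kernel
theorem sB_update_lt (i j : Fin 5) (h : j < i) (b : Bits) (m : Bool) :
    sB i (Function.update b j m) = sB i b * sgB (b j) * sgB m := by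
  revert i j b m; decide +kernel
theorem sAll_update (j : Fin 5) (b : Bits) :
    sAll (Function.update b j (!b j)) = - sAll b := by
  revert j b; decide +kernel
theorem degB_update (j : Fin 5) (b : Bits) (m : Bool) :
    degB (Function.update b j m) = degB b - (if b j then 1 else 0) + (if m then 1 else 0) := by
  revert j b m; decide +kernel
theorem degB_nonneg (b : Bits) : 0 ≤ degB b := by
  revert b; decide +kernel

noncomputable def pre (i : Fin 5) : Module.End ℤ EE := mkE fun x c => sB i (bits x) • cel x c

theorem pre_cel (i : Fin 5) (x : XV) (c : ZMod 8) : pre i (cel x c) = sB i (bits x) • cel x c :=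
  mkE_cel _ _ _

theorem pre_pre (i : Fin 5) : pre i * pre i = 1 := by
  apply endE_ext
  intro x c
  rw [Module.End.mul_apply, pre_cel, map_smul, pre_cel, smul_smul, sB_mul_self, one_smul]
  rfl

theorem pre_comm (i j : Fin 5) : pre i * pre j = pre j * pre i := by
  apply endE_ext
  intro x c
  rw [Module.End.mul_apply, Module.End.mul_apply, pre_cel, pre_cel, map_smul, map_smul,
    pre_cel, pre_cel, smul_comm]

theorem pre_line_ge (i j : Fin 5) (h : i ≤ j) (x : XV) (c : ZMod 8) (v : FZ) :
    pre i (lineE j x c v) = sB i (bits x) • lineE j x c v := by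
  have : pre i ∘ₗ lineE j x c = sB i (bits x) • lineE j x c := by
    apply Finsupp.lhom_ext'
    intro m
    apply LinearMap.ext_ring
    show pre i (lineE j x c (Finsupp.single m 1)) = sB i (bits x) • lineE j x c (Finsupp.single m 1)
    rw [lineE_single, pre_cel, bits_update, sB_update_ge i j h]
  exact LinearMap.congr_fun this v

theorem pre_line_lt (i j : Fin 5) (h : j < i) (x : XV) (c : ZMod 8) (v : FZ) :
    pre i (lineE j x c v) = (sB i (bits x) * sgB (bits x j)) • lineE j x c (tF v) := by
  have : pre i ∘ₗ lineE j x c = (sB i (bits x) * sgB (bits x j)) • (lineE j x c ∘ₗ tF) := by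
    apply Finsupp.lhom_ext'
    intro m
    apply LinearMap.ext_ring
    show pre i (lineE j x c (Finsupp.single m 1))
      = (sB i (bits x) * sgB (bits x j)) • lineE j x c (tF (Finsupp.single m 1))
    rw [lineE_single, pre_cel, bits_update, sB_update_lt i j h, tF_single, map_smul, lineE_single,
      smul_smul]
  exact LinearMap.congr_fun this v

theorem pre_uop_ge (i j : Fin 5) (h : i ≤ j) (A : Module.End ℤ FZ) :
    pre i * uop j A = uop j A * pre i := by
  apply endE_ext
  intro x c
  rw [Module.End.mul_apply, Module.End.mul_apply, uop_cel, pre_line_ge i j h, pre_cel, map_smul,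
    uop_cel]

theorem pre_uop_lt (i j : Fin 5) (h : j < i) (A : Module.End ℤ FZ) (hA : tF * A = -(A * tF)) :
    pre i * uop j A = - (uop j A * pre i) := by
  apply endE_ext
  intro x c
  have h1 : tF (A (Finsupp.single (x j) 1)) = - (sgB (bits x j) • A (Finsupp.single (x j) 1)) := by
    have := LinearMap.congr_fun hA (Finsupp.single (x j) 1)
    rw [LinearMap.neg_apply, Module.End.mul_apply, Module.End.mul_apply, tF_single, map_smul] at this
    exact this
  rw [LinearMap.neg_apply, Module.End.mul_apply, Module.End.mul_apply, uop_cel, pre_line_lt i j h,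
    pre_cel, map_smul, uop_cel, h1, map_neg, map_smul, smul_neg, smul_smul, mul_assoc,
    sgB_mul_self, mul_one]

noncomputable def sop (i : Fin 5) (A : Module.End ℤ FZ) : Module.End ℤ EE := uop i A * pre i

theorem sop_anti_aux (i j : Fin 5) (h : i < j) (A B : Module.End ℤ FZ) (hA : tF * A = -(A * tF)) :
    sop i A * sop j B = -(sop j B * sop i A) := by
  unfold sop
  calc uop i A * pre i * (uop j B * pre j)
      = uop i A * (pre i * uop j B) * pre j := by noncomm_ring
    _ = (uop i A * uop j B) * (pre i * pre j) := by rw [pre_uop_ge i j h.le]; noncomm_ring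
    _ = uop j B * uop i A * (pre j * pre i) := by rw [uop_comm i j h.ne, pre_comm]
    _ = uop j B * (uop i A * pre j) * pre i := by noncomm_ring
    _ = uop j B * (-(pre j * uop i A)) * pre i := by rw [pre_uop_lt j i h A hA, neg_neg]
    _ = -(uop j B * pre j * (uop i A * pre i)) := by noncomm_ring

theorem sop_anti (i j : Fin 5) (h : i ≠ j) (A B : Module.End ℤ FZ) (hA : tF * A = -(A * tF))
    (hB : tF * B = -(B * tF)) : sop i A * sop j B = -(sop j B * sop i A) := by
  rcases lt_or_gt_of_ne h with h | h
  · exact sop_anti_aux i j h A B hA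
  · rw [sop_anti_aux j i h B A hB, neg_neg]

theorem sop_same (i : Fin 5) (A B : Module.End ℤ FZ) : sop i A * sop i B = uop i (A * B) := by
  unfold sop
  calc uop i A * pre i * (uop i B * pre i)
      = uop i A * (pre i * uop i B) * pre i := by noncomm_ring
    _ = (uop i A * uop i B) * (pre i * pre i) := by rw [pre_uop_ge i i le_rfl]; noncomm_ring
    _ = _ := by rw [pre_pre, mul_one, uop_mul]

/-! vertical part -/

noncomputable def vop (n : ℤ) : Module.End ℤ EE :=
  mkE fun x c => sAll (bits x) • wop (n + 1 - degB (bits x)) (cel x c)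

theorem vop_cel (n : ℤ) (x : XV) (c : ZMod 8) :
    vop n (cel x c) = sAll (bits x) • wop (n + 1 - degB (bits x)) (cel x c) := mkE_cel _ _ _

theorem shC_wop (a : ZMod 8) (q : ℤ) : shC a * wop q = wop q * shC a := by
  unfold wop
  split_ifs
  · simp
  · rw [mul_sub, sub_mul, shC_mul, shC_mul, add_comm, one_mul, mul_one]
  · rw [shC_sum, shC_sum']

theorem shC_vop (a : ZMod 8) (n : ℤ) : shC a * vop n = vop n * shC a := by
  apply endE_ext
  intro x c
  rw [Module.End.mul_apply, Module.End.mul_apply, shC_cel, vop_cel, vop_cel, map_smul,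
    ← Module.End.mul_apply, shC_wop, Module.End.mul_apply, shC_cel]

theorem wop_of_comm (A : Module.End ℤ EE) (h : ∀ a, shC a * A = A * shC a) (q : ℤ) :
    wop q * A = A * wop q := by
  unfold wop
  split_ifs
  · simp
  · rw [sub_mul, mul_sub, h, one_mul, mul_one]
  · rw [Finset.sum_mul, Finset.mul_sum]
    exact Finset.sum_congr rfl fun a _ => h a

theorem vop_vop (n : ℤ) : vop n * vop (n + 1) = 0 := by
  apply endE_ext
  intro x c
  rw [Module.End.mul_apply, vop_cel, map_smul, ← Module.End.mul_apply,
    ← wop_of_comm _ (fun a => shC_vop a n), Module.End.mul_apply, vop_cel, map_smul,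
    ← Module.End.mul_apply]
  have : n + 1 + 1 - degB (bits x) = n + 1 - degB (bits x) + 1 := by ring
  rw [this, wop_wop']
  simp

theorem pre_shC (i : Fin 5) (a : ZMod 8) : shC a * pre i = pre i * shC a := by
  apply endE_ext
  intro x c
  rw [Module.End.mul_apply, Module.End.mul_apply, shC_cel, pre_cel, map_smul, shC_cel, pre_cel]

theorem pre_vop (i : Fin 5) (n : ℤ) : pre i * vop n = vop n * pre i := by
  apply endE_ext
  intro x c
  rw [Module.End.mul_apply, Module.End.mul_apply, pre_cel, vop_cel, map_smul, map_smul, vop_cel,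
    ← Module.End.mul_apply, ← wop_of_comm _ (pre_shC i), Module.End.mul_apply, pre_cel, map_smul,
    smul_comm]

theorem vop_line (n : ℤ) (i : Fin 5) (x : XV) (c : ZMod 8) (b : Bool) (v : FZ)
    (hv : v ∈ Finsupp.supported ℤ ℤ {l : ℤ | ob l = b}) :
    vop n (lineE i x c v) = sAll (Function.update (bits x) i b) •
      wop (n + 1 - degB (Function.update (bits x) i b)) (lineE i x c v) := by
  rw [Finsupp.supported_eq_span_single] at hv
  induction hv using Submodule.span_induction with
  | mem y hy =>
    obtain ⟨l, hl, rfl⟩ := hy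
    rw [lineE_single, vop_cel, bits_update]
    have : ob l = b := hl
    rw [this]
  | zero => simp
  | add y z _ _ h1 h2 => rw [map_add, map_add, map_add, h1, h2, smul_add]
  | smul a y _ h => rw [map_smul, map_smul, map_smul, h, smul_comm]

def Flip (A : Module.End ℤ FZ) : Prop :=
  ∀ m, A (Finsupp.single m 1) ∈ Finsupp.supported ℤ ℤ {l : ℤ | ob l = !ob m}

theorem flip_dF : Flip dF := by
  intro m
  rw [dF_single]
  split_ifs with h
  · refine Submodule.sub_mem _ ?_ ?_
    · exact Finsupp.single_mem_supported _ _ (by simp [ob_add_one])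
    · exact Finsupp.single_mem_supported _ _ (by simp [ob_sub_one])
  · exact Submodule.zero_mem _

theorem flip_kF : Flip kF := by
  intro m
  rw [kF_single]
  cases h : ob m
  · exact kVal_supp m
  · rw [kVal_odd m h]; exact Submodule.zero_mem _

theorem vop_uop (n n' : ℤ) (i : Fin 5) (A : Module.End ℤ FZ) (hA : Flip A)
    (h : ∀ m, A (Finsupp.single m 1) = 0 ∨ n - n' = if ob m then -1 else 1) :
    vop n * uop i A = - (uop i A * vop n') := by
  apply endE_ext
  intro x c
  rw [LinearMap.neg_apply, Module.End.mul_apply, Module.End.mul_apply, uop_cel, vop_cel, map_smul,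
    ← Module.End.mul_apply (uop i A), ← wop_comm, Module.End.mul_apply, uop_cel]
  rcases h (x i) with h | h
  · rw [h]; simp
  · rw [vop_line n i x c _ _ (hA (x i))]
    have e : ob (x i) = bits x i := rfl
    rw [e] at h ⊢
    rw [sAll_update, degB_update, neg_smul]
    congr 4
    cases hb : bits x i
    all_goals simp only [hb] at h ⊢
    all_goals simp at h ⊢
    all_goals linarith

theorem vop_sop_d (n : ℤ) (i : Fin 5) : vop n * sop i dF = - (sop i dF * vop (n + 1)) := by
  unfold sop
  rw [← mul_assoc, vop_uop n (n + 1) i dF flip_dF, neg_mul, mul_assoc, mul_assoc, pre_vop]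
  intro m
  cases h : ob m
  · left; rw [dF_single, h]; simp
  · right; simp

theorem vop_sop_k (n : ℤ) (i : Fin 5) : vop (n + 1) * sop i kF = - (sop i kF * vop n) := by
  unfold sop
  rw [← mul_assoc, vop_uop (n + 1) n i kF flip_kF, neg_mul, mul_assoc, mul_assoc, pre_vop]
  intro m
  cases h : ob m
  · right; simp
  · left; rw [kF_single, kVal_odd m h]

noncomputable def bdE : Module.End ℤ EE := ∑ i, sop i dF

noncomputable def DD (n : ℤ) : Module.End ℤ EE := bdE + vop n

theorem bdE_bdE : bdE * bdE = 0 := by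
  have h : bdE * bdE = - (bdE * bdE) := by
    unfold bdE
    rw [Finset.sum_mul_sum]
    conv_rhs => rw [Finset.sum_comm]
    rw [← Finset.sum_neg_distrib]
    refine Finset.sum_congr rfl fun i _ => ?_
    rw [← Finset.sum_neg_distrib]
    refine Finset.sum_congr rfl fun j _ => ?_
    by_cases hij : i = j
    · subst hij
      rw [sop_same, dF_dF, uop_zero, neg_zero]
    · exact sop_anti i j hij _ _ tF_dF tF_dF
  apply LinearMap.ext
  intro x
  apply Finsupp.ext
  intro p
  have := DFunLike.congr_fun (LinearMap.congr_fun h x) p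
  rw [LinearMap.neg_apply, Finsupp.neg_apply] at this
  rw [LinearMap.zero_apply, Finsupp.zero_apply]
  omega

theorem DD_DD (n : ℤ) : DD n * DD (n + 1) = 0 := by
  unfold DD
  rw [add_mul, mul_add, mul_add, bdE_bdE, vop_vop]
  have : vop n * bdE = - (bdE * vop (n + 1)) := by
    unfold bdE
    rw [Finset.mul_sum, Finset.sum_mul, ← Finset.sum_neg_distrib]
    exact Finset.sum_congr rfl fun i _ => vop_sop_d n i
  rw [this]; abel

theorem homotopy (n : ℤ) (i : Fin 5) :
    DD (n + 1) * sop i kF + sop i kF * DD n = 1 - uop i pF := by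
  unfold DD
  rw [add_mul, mul_add, vop_sop_k]
  have : bdE * sop i kF + sop i kF * bdE = 1 - uop i pF := by
    unfold bdE
    rw [Finset.sum_mul, Finset.mul_sum, ← Finset.sum_add_distrib,
      Finset.sum_eq_single i]
    · rw [sop_same, sop_same, ← uop_add, dF_kF, uop_sub, uop_one]
    · intro j _ hj
      rw [sop_anti j i hj _ _ tF_dF tF_kF]; simp
    · simp
  rw [← this]; abel

/-! ### Filtration and exactness -/

noncomputable def SS (n : ℤ) : Submodule ℤ EE :=
  Finsupp.supported ℤ ℤ {p : XV × ZMod 8 | degB (bits p.1) ≤ n}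

theorem cel_mem {n : ℤ} {x : XV} {c : ZMod 8} (h : degB (bits x) ≤ n) : cel x c ∈ SS n :=
  Finsupp.single_mem_supported _ _ h

theorem SS_induction {n : ℤ} {M : Submodule ℤ EE} (h : ∀ x c, degB (bits x) ≤ n → cel x c ∈ M) :
    SS n ≤ M := by
  unfold SS
  rw [Finsupp.supported_eq_span_single, Submodule.span_le]
  rintro _ ⟨⟨x, c⟩, hp, rfl⟩
  exact h x c hp

theorem SS_map {n m : ℤ} (A : Module.End ℤ EE)
    (h : ∀ x c, degB (bits x) ≤ n → A (cel x c) ∈ SS m) {z : EE} (hz : z ∈ SS n) : A z ∈ SS m :=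
  SS_induction (M := (SS m).comap A) h hz

theorem line_mem {n : ℤ} (i : Fin 5) (x : XV) (c : ZMod 8) (b : Bool) (v : FZ)
    (hv : v ∈ Finsupp.supported ℤ ℤ {l : ℤ | ob l = b})
    (h : degB (Function.update (bits x) i b) ≤ n) : lineE i x c v ∈ SS n := by
  rw [Finsupp.supported_eq_span_single] at hv
  induction hv using Submodule.span_induction with
  | mem y hy =>
    obtain ⟨l, hl, rfl⟩ := hy
    rw [lineE_single]
    apply cel_mem
    have : ob l = b := hl
    rw [bits_update, this]; exact h
  | zero => simp
  | add y z _ _ h1 h2 => rw [map_add]; exact Submodule.add_mem _ h1 h2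
  | smul a y _ h => rw [map_smul]; exact Submodule.smul_mem _ _ h

theorem wop_mem (q n : ℤ) {z : EE} (hz : z ∈ SS n) : wop q z ∈ SS n := by
  have hs : ∀ a, shC a z ∈ SS n := fun a =>
    SS_map _ (fun x c h => by rw [shC_cel]; exact cel_mem h) hz
  unfold wop
  split_ifs
  · exact Submodule.zero_mem _
  · exact Submodule.sub_mem _ (hs 1) hz
  · rw [LinearMap.sum_apply]
    exact Submodule.sum_mem _ fun a _ => hs a

theorem pre_mem (i : Fin 5) (n : ℤ) {z : EE} (hz : z ∈ SS n) : pre i z ∈ SS n :=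
  SS_map _ (fun x c h => by rw [pre_cel]; exact Submodule.smul_mem _ _ (cel_mem h)) hz

theorem sop_d_mem (i : Fin 5) (n : ℤ) {z : EE} (hz : z ∈ SS (n + 1)) : sop i dF z ∈ SS n := by
  refine SS_map (uop i dF) (fun x c h => ?_) (pre_mem i _ hz)
  rw [uop_cel]
  cases hb : ob (x i)
  · rw [dF_single, hb]; simp
  · refine line_mem i x c _ _ (flip_dF (x i)) ?_
    rw [degB_update]
    have : bits x i = true := hb
    rw [this, hb]
    simp
    linarith

theorem sop_k_mem (i : Fin 5) (n : ℤ) {z : EE} (hz : z ∈ SS n) : sop i kF z ∈ SS (n + 1) := by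
  refine SS_map (uop i kF) (fun x c h => ?_) (pre_mem i _ hz)
  rw [uop_cel]
  refine line_mem i x c _ _ (flip_kF (x i)) ?_
  rw [degB_update]
  split_ifs <;> linarith

theorem uop_p_mem (i : Fin 5) (n : ℤ) {z : EE} (hz : z ∈ SS n) : uop i pF z ∈ SS n := by
  refine SS_map (uop i pF) (fun x c h => ?_) hz
  rw [uop_cel, pF_single]
  cases hb : ob (x i)
  · simp only [Bool.false_eq_true, if_false]
    rw [lineE_single]
    apply cel_mem
    have e : ob 0 = false := rfl
    rw [bits_update, degB_update, e]
    split_ifs <;> simp_all <;> linarith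
  · simp

theorem vop_mem (n : ℤ) {z : EE} (hz : z ∈ SS (n + 1)) : vop n z ∈ SS n := by
  refine SS_map (vop n) (fun x c h => ?_) hz
  rw [vop_cel]
  apply Submodule.smul_mem
  by_cases h1 : degB (bits x) = n + 1
  · rw [h1]; simp [wop]
  · exact wop_mem _ _ (cel_mem (by omega))

theorem DD_mem (n : ℤ) {z : EE} (hz : z ∈ SS (n + 1)) : DD n z ∈ SS n := by
  unfold DD bdE
  rw [LinearMap.add_apply, LinearMap.sum_apply]
  exact Submodule.add_mem _ (Submodule.sum_mem _ fun i _ => sop_d_mem i n hz) (vop_mem n hz)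

/-- contraction onto the origin -/
noncomputable def pAll : Module.End ℤ EE :=
  uop 4 pF * (uop 3 pF * (uop 2 pF * (uop 1 pF * uop 0 pF)))

theorem contract_step (n : ℤ) (i : Fin 5) {z : EE} (hz : z ∈ SS (n + 1)) (hD : DD n z = 0) :
    ∃ y ∈ SS (n + 2), z - uop i pF z = DD (n + 1) y := by
  refine ⟨sop i kF z, ?_, ?_⟩
  · have := sop_k_mem i (n + 1) hz
    rwa [add_assoc] at this
  · have := LinearMap.congr_fun (homotopy n i) z
    rw [LinearMap.add_apply, LinearMap.sub_apply, Module.End.mul_apply, Module.End.mul_apply, hD,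
      map_zero, add_zero, Module.End.one_apply] at this
    exact this.symm

theorem DD_DD_apply (n : ℤ) (z : EE) : DD n (DD (n + 1) z) = 0 :=
  LinearMap.congr_fun (DD_DD n) z

theorem DD_p (n : ℤ) (i : Fin 5) {z : EE} (hz : z ∈ SS (n + 1)) (hD : DD n z = 0) :
    DD n (uop i pF z) = 0 := by
  obtain ⟨y, _, h⟩ := contract_step n i hz hD
  have := DD_DD_apply n y
  rw [← h, map_sub, hD, zero_sub, neg_eq_zero] at this
  exact this

theorem contract_all (n : ℤ) {z : EE} (hz : z ∈ SS (n + 1)) (hD : DD n z = 0) :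
    DD n (pAll z) = 0 ∧ ∃ y ∈ SS (n + 2), z - pAll z = DD (n + 1) y := by
  obtain ⟨y0, m0, e0⟩ := contract_step n 0 hz hD
  have d0 := DD_p n 0 hz hD
  have s0 := uop_p_mem 0 _ hz
  obtain ⟨y1, m1, e1⟩ := contract_step n 1 s0 d0
  have d1 := DD_p n 1 s0 d0
  have s1 := uop_p_mem 1 _ s0
  obtain ⟨y2, m2, e2⟩ := contract_step n 2 s1 d1
  have d2 := DD_p n 2 s1 d1
  have s2 := uop_p_mem 2 _ s1
  obtain ⟨y3, m3, e3⟩ := contract_step n 3 s2 d2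
  have d3 := DD_p n 3 s2 d2
  have s3 := uop_p_mem 3 _ s2
  obtain ⟨y4, m4, e4⟩ := contract_step n 4 s3 d3
  have d4 := DD_p n 4 s3 d3
  refine ⟨d4, y0 + y1 + y2 + y3 + y4, ?_, ?_⟩
  · exact Submodule.add_mem _ (Submodule.add_mem _ (Submodule.add_mem _
      (Submodule.add_mem _ m0 m1) m2) m3) m4
  · rw [map_add, map_add, map_add, map_add, ← e0, ← e1, ← e2, ← e3, ← e4]
    simp only [pAll, Module.End.mul_apply]
    abel

noncomputable def orig : (ZMod 8 → ℤ) →ₗ[ℤ] EE :=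
  ∑ c, (LinearMap.toSpanSingleton ℤ EE (cel 0 c)) ∘ₗ LinearMap.proj c

theorem orig_apply (a : ZMod 8 → ℤ) : orig a = ∑ c, a c • cel 0 c := by
  simp [orig]

theorem uop_p_cel (i : Fin 5) (x : XV) (c : ZMod 8) :
    uop i pF (cel x c) = 0 ∨ uop i pF (cel x c) = cel (Function.update x i 0) c := by
  rw [uop_cel, pF_single]
  split_ifs
  · left; simp
  · right; rw [lineE_single]

theorem pAll_cel (x : XV) (c : ZMod 8) : pAll (cel x c) = 0 ∨ pAll (cel x c) = cel 0 c := by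
  simp only [pAll, Module.End.mul_apply]
  rcases uop_p_cel 0 x c with h | h <;> rw [h]
  · left; simp
  rcases uop_p_cel 1 (Function.update x 0 0) c with h | h <;> rw [h]
  · left; simp
  rcases uop_p_cel 2 (Function.update (Function.update x 0 0) 1 0) c with h | h <;> rw [h]
  · left; simp
  rcases uop_p_cel 3 (Function.update (Function.update (Function.update x 0 0) 1 0) 2 0) c
    with h | h <;> rw [h]
  · left; simp
  rcases uop_p_cel 4 (Function.update (Function.update (Function.update (Function.update x 0 0)
    1 0) 2 0) 3 0) c with h | h <;> rw [h]
  · left; simp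
  right
  congr 1
  funext j
  fin_cases j <;> simp [Function.update]

theorem pAll_range (z : EE) : ∃ a, pAll z = orig a := by
  have : (⊤ : Submodule ℤ EE) ≤ (LinearMap.range orig).comap pAll := by
    have h : (Set.univ : Set (XV × ZMod 8)) = Set.univ := rfl
    rw [← Finsupp.supported_univ, Finsupp.supported_eq_span_single, Submodule.span_le]
    rintro _ ⟨⟨x, c⟩, -, rfl⟩
    show pAll (cel x c) ∈ LinearMap.range orig
    rcases pAll_cel x c with h | h <;> rw [h]
    · exact Submodule.zero_mem _
    · refine ⟨Pi.single c 1, ?_⟩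
      rw [orig_apply, Finset.sum_eq_single c]
      · simp
      · intro d _ hd; simp [hd]
      · simp
  obtain ⟨a, ha⟩ := this (Submodule.mem_top (x := z))
  exact ⟨a, ha.symm⟩

theorem bits_zero : bits 0 = fun _ => false := rfl

theorem degB_zero : degB (bits 0) = 0 := rfl

theorem bdE_zero (c : ZMod 8) : bdE (cel 0 c) = 0 := by
  unfold bdE
  rw [LinearMap.sum_apply]
  refine Finset.sum_eq_zero fun i _ => ?_
  unfold sop
  rw [Module.End.mul_apply, pre_cel, map_smul, uop_cel, dF_single]
  have : ob ((0 : XV) i) = false := rfl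
  rw [this]; simp

theorem DD_orig (n : ℤ) (c : ZMod 8) : DD n (cel 0 c) = wop (n + 1) (cel 0 c) := by
  unfold DD
  rw [LinearMap.add_apply, bdE_zero, zero_add, vop_cel, degB_zero, sub_zero]
  have : sAll (bits 0) = 1 := rfl
  rw [this, one_smul]

theorem DD_orig' (n : ℤ) (a : ZMod 8 → ℤ) : DD n (orig a) = wop (n + 1) (orig a) := by
  rw [orig_apply, map_sum, map_sum]
  refine Finset.sum_congr rfl fun c _ => ?_
  rw [map_smul, map_smul, DD_orig]

theorem orig_coeff (a : ZMod 8 → ℤ) (c : ZMod 8) : (orig a) (0, c) = a c := by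
  rw [orig_apply, Finsupp.finset_sum_apply, Finset.sum_eq_single c]
  · simp [cel]
  · intro d _ hd; simp [cel, hd]
  · simp

theorem orig_mem (n : ℤ) (hn : 0 ≤ n) (a : ZMod 8 → ℤ) : orig a ∈ SS n := by
  rw [orig_apply]
  exact Submodule.sum_mem _ fun c _ => Submodule.smul_mem _ _ (cel_mem (by rw [degB_zero]; exact hn))

theorem shC_orig (b : ZMod 8) (a : ZMod 8 → ℤ) : shC b (orig a) = orig (fun c => a (c - b)) := by
  rw [orig_apply, orig_apply, map_sum]
  refine Fintype.sum_equiv (Equiv.addRight b) _ _ (fun c => ?_)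
  simp [map_smul, shC_cel]

theorem sum_zero_range (a : ZMod 8 → ℤ) (h : ∑ c, a c = 0) :
    ∃ y, orig a = (shC 1 - 1) (orig y) := by
  have hc : ∀ k : ℕ, ∃ y, cel 0 (k : ZMod 8) - cel 0 0 = (shC 1 - 1) (orig y) := by
    intro k
    induction k with
    | zero => exact ⟨0, by simp⟩
    | succ k ih =>
      obtain ⟨y, hy⟩ := ih
      refine ⟨y + Pi.single (k : ZMod 8) 1, ?_⟩
      have : orig (Pi.single (k : ZMod 8) 1) = cel 0 (k : ZMod 8) := by
        rw [orig_apply, Finset.sum_eq_single (k : ZMod 8)]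
        · simp
        · intro d _ hd; simp [hd]
        · simp
      rw [map_add, map_add, ← hy, this, LinearMap.sub_apply, shC_cel]
      push_cast
      simp
  have hm : orig a ∈ (LinearMap.range orig).map (shC 1 - 1 : Module.End ℤ EE) := by
    have : orig a = ∑ c, a c • (cel 0 c - cel 0 0) := by
      simp only [smul_sub]
      rw [Finset.sum_sub_distrib, ← Finset.sum_smul, h, zero_smul, sub_zero, orig_apply]
    rw [this]
    refine Submodule.sum_mem _ fun c _ => Submodule.smul_mem _ _ ?_
    obtain ⟨y, hy⟩ := hc c.val
    rw [ZMod.natCast_zmod_val] at hy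
    rw [hy]
    exact Submodule.mem_map_of_mem ⟨y, rfl⟩
  obtain ⟨_, ⟨y, rfl⟩, hy⟩ := hm
  exact ⟨y, hy.symm⟩

theorem const_range (a : ZMod 8 → ℤ) (h : (shC 1 - 1) (orig a) = 0) :
    ∃ y, orig a = (∑ b : ZMod 8, shC b) (orig y) := by
  have h1 : ∀ c, a (c - 1) = a c := by
    intro c
    rw [LinearMap.sub_apply, shC_orig, sub_eq_zero] at h
    have := DFunLike.congr_fun h (0, c)
    rwa [Module.End.one_apply, orig_coeff, orig_coeff] at this
  have h2 : ∀ k : ℕ, a (k : ZMod 8) = a 0 := by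
    intro k
    induction k with
    | zero => simp
    | succ k ih =>
      rw [← ih, ← h1]
      push_cast
      rw [add_sub_cancel_right]
  have h3 : ∀ c, a c = a 0 := by
    intro c
    have := h2 c.val
    rwa [ZMod.natCast_zmod_val] at this
  refine ⟨Pi.single 0 (a 0), ?_⟩
  rw [LinearMap.sum_apply]
  simp only [orig_apply, map_sum, map_smul, shC_cel]
  refine Finset.sum_congr rfl fun c _ => ?_
  rw [Finset.sum_eq_single 0]
  · simp [h3 c]
  · intro d _ hd; simp [hd]
  · simp

theorem wop_pos_odd {q : ℤ} (h : 0 < q) (ho : ob q = true) : wop q = shC 1 - 1 := by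
  unfold wop
  rw [if_neg (by omega), if_pos ho]

theorem wop_pos_even {q : ℤ} (h : 0 < q) (ho : ob q = false) : wop q = ∑ b : ZMod 8, shC b := by
  unfold wop
  rw [if_neg (by omega), ho]; simp

theorem orig_sum (a : ZMod 8 → ℤ) (h : (∑ b : ZMod 8, shC b) (orig a) = 0) : ∑ c, a c = 0 := by
  have := DFunLike.congr_fun h (0, 0)
  rw [LinearMap.sum_apply, Finsupp.finset_sum_apply] at this
  simp only [shC_orig, orig_coeff] at this
  rw [Finsupp.zero_apply] at this
  rw [← this]
  exact Fintype.sum_equiv (Equiv.neg _) _ _ (fun c => by simp)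

theorem exact_succ (n : ℕ) {z : EE} (hz : z ∈ SS (n + 1)) (hD : DD n z = 0) :
    ∃ y ∈ SS (n + 2), DD (n + 1) y = z := by
  obtain ⟨h1, y, hy, e⟩ := contract_all n hz hD
  obtain ⟨a, ha⟩ := pAll_range z
  rw [ha] at h1 e
  rw [DD_orig'] at h1
  have : ∃ y, orig a = DD (n + 1) (orig y) := by
    cases ho : ob ((n : ℤ) + 1)
    · rw [wop_pos_even (by omega) ho] at h1
      obtain ⟨y, hy⟩ := sum_zero_range a (orig_sum a h1)
      refine ⟨y, ?_⟩
      rw [DD_orig', wop_pos_odd (by omega) (by rw [ob_add_one, ho]; rfl), hy]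
    · rw [wop_pos_odd (by omega) ho] at h1
      obtain ⟨y, hy⟩ := const_range a h1
      refine ⟨y, ?_⟩
      rw [DD_orig', wop_pos_even (by omega) (by rw [ob_add_one, ho]; rfl), hy]
  obtain ⟨y', hy'⟩ := this
  refine ⟨y + orig y', Submodule.add_mem _ hy (orig_mem _ (by omega) _), ?_⟩
  rw [map_add, ← e, ← hy', sub_add_cancel]

/-- augmentation -/
noncomputable def augE : EE →ₗ[ℤ] ℤ := mkE fun x _ => if degB (bits x) = 0 then 1 else 0

theorem augE_cel (x : XV) (c : ZMod 8) : augE (cel x c) = if degB (bits x) = 0 then 1 else 0 :=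
  mkE_cel _ _ _

theorem augE_sop (i : Fin 5) (x : XV) (c : ZMod 8) : augE (sop i dF (cel x c)) = 0 := by
  unfold sop
  rw [Module.End.mul_apply, pre_cel, map_smul, uop_cel, dF_single]
  split_ifs with h
  · rw [map_sub, lineE_single, lineE_single, map_smul, map_sub, augE_cel, augE_cel, bits_update,
      bits_update, ob_add_one, ob_sub_one]
    simp
  · simp

theorem augE_shC (a : ZMod 8) (z : EE) : augE (shC a z) = augE z := by
  have : augE ∘ₗ shC a = augE := by
    apply lin_ext
    intro x c
    rw [LinearMap.comp_apply, shC_cel, augE_cel, augE_cel]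
  exact LinearMap.congr_fun this z

theorem augE_DD (z : EE) : augE (DD 0 z) = 0 := by
  have : augE ∘ₗ DD 0 = 0 := by
    apply lin_ext
    intro x c
    unfold DD bdE
    rw [LinearMap.comp_apply, LinearMap.add_apply, LinearMap.sum_apply, map_add, map_sum]
    simp only [augE_sop]
    rw [vop_cel, map_smul]
    have h0 := degB_nonneg (bits x)
    by_cases h : degB (bits x) = 0
    · rw [h, wop_pos_odd (by norm_num) (by rfl), LinearMap.sub_apply, map_sub, augE_shC]
      simp
    · unfold wop
      rw [if_pos (by omega)]
      simp
  exact LinearMap.congr_fun this z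

theorem exact_zero {z : EE} (hz : z ∈ SS 0) (hD : augE z = 0) : ∃ y ∈ SS 1, DD 0 y = z := by
  have hDz : DD (-1) z = 0 := by
    have : SS 0 ≤ LinearMap.ker (DD (-1)) := by
      apply SS_induction
      intro x c h
      rw [LinearMap.mem_ker]
      have h1 : DD (-1) (cel x c) ∈ SS (-1) := DD_mem (-1) (cel_mem h)
      have h2 : SS (-1) ≤ ⊥ := by
        apply SS_induction
        intro x c h
        have := degB_nonneg (bits x)
        omega
      exact h2 h1
    exact this hz
  obtain ⟨h1, y, hy, e⟩ := contract_all (-1) (by simpa using hz) hDz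
  obtain ⟨a, ha⟩ := pAll_range z
  rw [ha] at e
  norm_num at e hy
  have h3 : augE (orig a) = 0 := by
    have := congrArg augE e
    rw [augE_DD, map_sub, hD] at this
    omega
  have h4 : ∑ c, a c = 0 := by
    rw [orig_apply, map_sum] at h3
    simpa [augE_cel, degB_zero] using h3
  obtain ⟨y', hy'⟩ := sum_zero_range a h4
  refine ⟨y + orig y', Submodule.add_mem _ hy (orig_mem _ (by omega) _), ?_⟩
  rw [map_add, ← e, DD_orig', wop_pos_odd (by norm_num) (by rfl), ← hy', sub_add_cancel]

/-- projection onto the filtration step -/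
noncomputable def prE (n : ℤ) : Module.End ℤ EE :=
  mkE fun x c => if degB (bits x) ≤ n then cel x c else 0

theorem prE_cel (n : ℤ) (x : XV) (c : ZMod 8) :
    prE n (cel x c) = if degB (bits x) ≤ n then cel x c else 0 := mkE_cel _ _ _

theorem prE_mem (n : ℤ) (z : EE) : prE n z ∈ SS n := by
  have : (⊤ : Submodule ℤ EE) ≤ (SS n).comap (prE n) := by
    rw [← Finsupp.supported_univ, Finsupp.supported_eq_span_single, Submodule.span_le]
    rintro _ ⟨⟨x, c⟩, -, rfl⟩
    show prE n (cel x c) ∈ SS n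
    rw [prE_cel]
    split_ifs with h
    · exact cel_mem h
    · exact Submodule.zero_mem _
  exact this Submodule.mem_top

theorem prE_id (n : ℤ) {z : EE} (hz : z ∈ SS n) : prE n z = z := by
  have : SS n ≤ LinearMap.ker (prE n - 1) := by
    apply SS_induction
    intro x c h
    rw [LinearMap.mem_ker, LinearMap.sub_apply, prE_cel, if_pos h]
    exact sub_self _
  have := this hz
  rwa [LinearMap.mem_ker, LinearMap.sub_apply, sub_eq_zero] at this

/-! ### The group action on the cell module -/

def sg (x : XV) : XV := ![-x 0, -x 4, x 1, x 2, x 3]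
def rotB (b : Bits) : Bits := ![b 0, b 4, b 1, b 2, b 3]
def eB (b : Bits) : ℤ :=
  sgB (xor (xor (b 0) (b 4)) (b 4 && xor (b 1) (xor (b 2) (b 3))))

theorem forall_bits {P : Bits → Prop} (h : ∀ a b c d e : Bool, P ![a, b, c, d, e]) (b : Bits) :
    P b := by
  have : b = ![b 0, b 1, b 2, b 3, b 4] := by funext i; fin_cases i <;> rfl
  rw [this]; exact h _ _ _ _ _

theorem bits_sg (x : XV) : bits (sg x) = rotB (bits x) := by
  funext i
  fin_cases i <;> simp [bits, sg, rotB, ob_neg]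

theorem bits_sg_iter (n : ℕ) (x : XV) : bits (sg^[n] x) = rotB^[n] (bits x) := by
  induction n with
  | zero => rfl
  | succ n ih => rw [Function.iterate_succ_apply', Function.iterate_succ_apply', bits_sg, ih]

noncomputable def alE : Module.End ℤ EE := mkE fun x c => eB (bits x) • cel (sg x) (c + 1)

theorem alE_cel (x : XV) (c : ZMod 8) : alE (cel x c) = eB (bits x) • cel (sg x) (c + 1) :=
  mkE_cel _ _ _

/-- one term of the boundary -/
noncomputable def bdT (i : Fin 5) (x : XV) (c : ZMod 8) : EE :=
  sB i (bits x) • if bits x i then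
    cel (Function.update x i (x i + 1)) c - cel (Function.update x i (x i - 1)) c else 0

theorem sop_cel (i : Fin 5) (x : XV) (c : ZMod 8) : sop i dF (cel x c) = bdT i x c := by
  unfold sop bdT
  rw [Module.End.mul_apply, pre_cel, map_smul, uop_cel, dF_single]
  have e : ob (x i) = bits x i := rfl
  rw [e]
  split_ifs
  · rw [map_sub, lineE_single, lineE_single]
  · rw [map_zero]

theorem bdE_cel (x : XV) (c : ZMod 8) : bdE (cel x c) = ∑ i, bdT i x c := by
  unfold bdE
  rw [LinearMap.sum_apply]
  exact Finset.sum_congr rfl fun i _ => sop_cel i x c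

def piF : Fin 5 ≃ Fin 5 where
  toFun := ![0, 2, 3, 4, 1]
  invFun := ![0, 4, 1, 2, 3]
  left_inv := by decide
  right_inv := by decide

def tauF (i : Fin 5) (m : ℤ) : ℤ := if i = 0 ∨ i = 4 then -m else m

theorem sg_update (x : XV) (i : Fin 5) (m : ℤ) :
    sg (Function.update x i m) = Function.update (sg x) (piF i) (tauF i m) := by
  funext j
  fin_cases i <;> fin_cases j <;> simp [sg, piF, tauF, Function.update]

theorem sg_piF (x : XV) (i : Fin 5) : sg x (piF i) = tauF i (x i) := by
  fin_cases i <;> simp [sg, piF, tauF]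

theorem rotB_piF (b : Bits) (i : Fin 5) : rotB b (piF i) = b i := by
  revert i; revert b; apply forall_bits; decide +kernel

theorem sign_id (i : Fin 5) (b : Bits) (h : b i = true) :
    sB i b * eB (Function.update b i (!b i)) * (if i = 0 ∨ i = 4 then -1 else 1)
      = eB b * sB (piF i) (rotB b) := by
  revert h; revert i; revert b; apply forall_bits; decide +kernel

theorem alE_bdT (i : Fin 5) (x : XV) (c : ZMod 8) :
    alE (bdT i x c) = eB (bits x) • bdT (piF i) (sg x) (c + 1) := by
  unfold bdT
  rw [map_smul, bits_sg, rotB_piF, sg_piF]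
  split_ifs with h
  · rw [map_sub, alE_cel, alE_cel, bits_update, bits_update, sg_update, sg_update, ob_add_one,
      ob_sub_one, smul_smul, ← sign_id i (bits x) h]
    have e : ob (x i) = bits x i := rfl
    rw [e]
    unfold tauF
    split_ifs with h2
    · rw [show -(x i + 1) = -x i - 1 by ring, show -(x i - 1) = -x i + 1 by ring, ← smul_sub,
        smul_smul, mul_neg_one, neg_smul, ← smul_neg, neg_sub]
    · rw [← smul_sub, smul_smul, mul_one]
  · simp

theorem alE_bdE : alE * bdE = bdE * alE := by
  apply endE_ext
  intro x c
  rw [Module.End.mul_apply, Module.End.mul_apply, bdE_cel, map_sum, alE_cel, map_smul, bdE_cel,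
    Finset.smul_sum, ← Equiv.sum_comp piF (fun i => eB (bits x) • bdT i (sg x) (c + 1))]
  exact Finset.sum_congr rfl fun i _ => alE_bdT i x c

theorem sAll_rotB (b : Bits) : sAll (rotB b) = sAll b := by revert b; apply forall_bits; decide +kernel
theorem degB_rotB (b : Bits) : degB (rotB b) = degB b := by revert b; apply forall_bits; decide +kernel

theorem shC_alE (a : ZMod 8) : shC a * alE = alE * shC a := by
  apply endE_ext
  intro x c
  rw [Module.End.mul_apply, Module.End.mul_apply, shC_cel, alE_cel, alE_cel, map_smul, shC_cel,
    add_right_comm]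

theorem alE_vop (n : ℤ) : alE * vop n = vop n * alE := by
  apply endE_ext
  intro x c
  rw [Module.End.mul_apply, Module.End.mul_apply, vop_cel, map_smul, ← Module.End.mul_apply,
    ← wop_of_comm _ shC_alE, Module.End.mul_apply, alE_cel, map_smul, map_smul, vop_cel, bits_sg,
    sAll_rotB, degB_rotB, smul_comm]

theorem alE_DD (n : ℤ) : alE * DD n = DD n * alE := by
  unfold DD
  rw [mul_add, add_mul, alE_bdE, alE_vop]

theorem alE_prE (n : ℤ) : alE * prE n = prE n * alE := by
  apply endE_ext
  intro x c
  rw [Module.End.mul_apply, Module.End.mul_apply, prE_cel, alE_cel, map_smul, prE_cel, bits_sg,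
    degB_rotB]
  split_ifs
  · rw [alE_cel]
  · simp

theorem eB_zero (b : Bits) (h : degB b = 0) : eB b = 1 := by revert b; apply forall_bits; decide +kernel

theorem augE_alE : augE ∘ₗ alE = augE := by
  apply lin_ext
  intro x c
  rw [LinearMap.comp_apply, alE_cel, map_smul, augE_cel, augE_cel, bits_sg, degB_rotB]
  split_ifs with h
  · rw [eB_zero _ h]; simp
  · simp

/-! translations -/

noncomputable def trE (w : XV) : Module.End ℤ EE := mkE fun x c => cel (x + 2 • w) c

theorem trE_cel (w x : XV) (c : ZMod 8) : trE w (cel x c) = cel (x + 2 • w) c := mkE_cel _ _ _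

theorem bits_tr (x w : XV) : bits (x + 2 • w) = bits x := by
  funext i
  have : (x + 2 • w) i = x i + 2 * w i := by simp
  unfold bits
  rw [this, ob_add_two_mul]

theorem update_tr (x w : XV) (i : Fin 5) (m : ℤ) :
    Function.update (x + 2 • w) i (m + (2 • w) i) = Function.update x i m + 2 • w := by
  funext j
  by_cases h : j = i
  · subst h; simp
  · simp [h]

theorem trE_bdT (w : XV) (i : Fin 5) (x : XV) (c : ZMod 8) :
    trE w (bdT i x c) = bdT i (x + 2 • w) c := by
  unfold bdT
  rw [map_smul, bits_tr]
  split_ifs with h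
  · rw [map_sub, trE_cel, trE_cel, ← update_tr, ← update_tr, Pi.add_apply, add_right_comm,
      add_sub_right_comm]
  · simp

theorem trE_bdE (w : XV) : trE w * bdE = bdE * trE w := by
  apply endE_ext
  intro x c
  rw [Module.End.mul_apply, Module.End.mul_apply, bdE_cel, map_sum, trE_cel, bdE_cel]
  exact Finset.sum_congr rfl fun i _ => trE_bdT w i x c

theorem shC_trE (w : XV) (a : ZMod 8) : shC a * trE w = trE w * shC a := by
  apply endE_ext
  intro x c
  rw [Module.End.mul_apply, Module.End.mul_apply, shC_cel, trE_cel, trE_cel, shC_cel]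

theorem trE_vop (w : XV) (n : ℤ) : trE w * vop n = vop n * trE w := by
  apply endE_ext
  intro x c
  rw [Module.End.mul_apply, Module.End.mul_apply, vop_cel, map_smul, ← Module.End.mul_apply,
    ← wop_of_comm _ (shC_trE w), Module.End.mul_apply, trE_cel, vop_cel, bits_tr]

theorem trE_DD (w : XV) (n : ℤ) : trE w * DD n = DD n * trE w := by
  unfold DD
  rw [mul_add, add_mul, trE_bdE, trE_vop]

theorem trE_prE (w : XV) (n : ℤ) : trE w * prE n = prE n * trE w := by
  apply endE_ext
  intro x c
  rw [Module.End.mul_apply, Module.End.mul_apply, prE_cel, trE_cel, prE_cel, bits_tr]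
  split_ifs
  · rw [trE_cel]
  · simp

theorem augE_trE (w : XV) : augE ∘ₗ trE w = augE := by
  apply lin_ext
  intro x c
  rw [LinearMap.comp_apply, trE_cel, augE_cel, augE_cel, bits_tr]

theorem trE_zero : trE 0 = 1 := by
  apply endE_ext
  intro x c
  rw [trE_cel, smul_zero, add_zero]; rfl

theorem trE_add (v w : XV) : trE (v + w) = trE v * trE w := by
  apply endE_ext
  intro x c
  rw [Module.End.mul_apply, trE_cel, trE_cel, trE_cel, smul_add, add_assoc, add_comm (2 • v)]

theorem sg_add (x y : XV) : sg (x + y) = sg x + sg y := by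
  funext i
  fin_cases i <;> simp [sg] <;> ring

theorem sg_tr (x w : XV) : sg (x + 2 • w) = sg x + 2 • sg w := by
  rw [two_smul, two_smul, sg_add, sg_add]

theorem alE_trE (w : XV) : alE * trE w = trE (sg w) * alE := by
  apply endE_ext
  intro x c
  rw [Module.End.mul_apply, Module.End.mul_apply, trE_cel, alE_cel, alE_cel, bits_tr, map_smul,
    trE_cel, sg_tr]

theorem alE_pow_trE (n : ℕ) (w : XV) : alE ^ n * trE w = trE (sg^[n] w) * alE ^ n := by
  induction n with
  | zero => simp
  | succ n ih =>
    rw [pow_succ', mul_assoc, ih, ← mul_assoc, alE_trE, mul_assoc, Function.iterate_succ_apply']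

def sgnN : ℕ → Bits → ℤ
  | 0, _ => 1
  | n + 1, b => sgnN n b * eB (rotB^[n] b)

theorem alE_pow_cel (n : ℕ) (x : XV) (c : ZMod 8) :
    (alE ^ n) (cel x c) = sgnN n (bits x) • cel (sg^[n] x) (c + n) := by
  induction n with
  | zero => simp [sgnN]
  | succ n ih =>
    rw [pow_succ', Module.End.mul_apply, ih, map_smul, alE_cel, smul_smul, bits_sg_iter,
      Function.iterate_succ_apply', Nat.cast_succ, add_assoc]
    rfl

theorem eB_mul_self (b : Bits) : eB b * eB b = 1 := sgB_mul_self _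

theorem sgnN_mul_self (n : ℕ) (b : Bits) : sgnN n b * sgnN n b = 1 := by
  induction n with
  | zero => rfl
  | succ n ih =>
    show sgnN n b * eB (rotB^[n] b) * (sgnN n b * eB (rotB^[n] b)) = 1
    rw [mul_mul_mul_comm, ih, eB_mul_self, one_mul]

theorem sg_vec (a b c d e : ℤ) : sg ![a, b, c, d, e] = ![-a, -e, b, c, d] := rfl

theorem sg_eight (x : XV) : sg^[8] x = x := by
  have h : x = ![x 0, x 1, x 2, x 3, x 4] := by funext i; fin_cases i <;> rfl
  rw [h]
  generalize x 0 = a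
  generalize x 1 = b
  generalize x 2 = c
  generalize x 3 = d
  generalize x 4 = e
  rw [Function.iterate_succ_apply, Function.iterate_succ_apply, Function.iterate_succ_apply,
    Function.iterate_succ_apply, Function.iterate_succ_apply, Function.iterate_succ_apply,
    Function.iterate_succ_apply, Function.iterate_succ_apply, Function.iterate_zero_apply]
  rw [sg_vec, sg_vec, sg_vec, sg_vec, sg_vec, sg_vec, sg_vec, sg_vec]
  rw [neg_neg, neg_neg, neg_neg, neg_neg, neg_neg, neg_neg, neg_neg, neg_neg]

theorem sgnN_eight (b : Bits) : sgnN 8 b = 1 := by revert b; apply forall_bits; decide +kernel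

theorem alE_eight : alE ^ 8 = 1 := by
  apply endE_ext
  intro x c
  rw [alE_pow_cel, sg_eight, sgnN_eight, one_smul]
  have : ((8 : ℕ) : ZMod 8) = 0 := by decide
  rw [this, add_zero]; rfl

/-! lattice -/

def Bl (l : XV) : XV := ![l 0 - l 1 + l 2 - l 3 + l 4, l 0 - l 4, l 1, l 2, l 3]

theorem Bl_add (x y : XV) : Bl (x + y) = Bl x + Bl y := by
  funext i
  fin_cases i <;> simp [Bl] <;> ring

theorem Bl_zero : Bl 0 = 0 := by
  funext i
  fin_cases i <;> simp [Bl]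

theorem holM_mulVec (l : XV) : holM *ᵥ l = ![-l 4, l 0 - l 4, l 1, l 2, l 3 - l 4] := by
  funext i
  fin_cases i <;> simp [holM, Matrix.mulVec, dotProduct, Fin.sum_univ_five] <;> ring

theorem Bl_holM (l : XV) : Bl (holM *ᵥ l) = sg (Bl l) := by
  rw [holM_mulVec]
  funext i
  fin_cases i <;> simp [Bl, sg] <;> ring

theorem Bl_holM_pow (n : ℕ) (l : XV) : Bl ((holM ^ n) *ᵥ l) = sg^[n] (Bl l) := by
  induction n with
  | zero => simp
  | succ n ih => rw [pow_succ', ← Matrix.mulVec_mulVec, Bl_holM, ih, Function.iterate_succ_apply']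

theorem Bl_inj {l m : XV} (h : Bl l = Bl m) : l = m := by
  have h0 := congrFun h 0
  have h1 := congrFun h 1
  have h2 := congrFun h 2
  have h3 := congrFun h 3
  have h4 := congrFun h 4
  simp [Bl] at h0 h1 h2 h3 h4
  funext i
  fin_cases i <;> simp <;> omega

abbrev Gam : Type := Crystal.Crys 8 holM holM_pow

theorem matAction_apply (a : Multiplicative (ZMod 8)) (l : Crystal.Lat 5) :
    Multiplicative.toAdd (Crystal.matAction 8 holM holM_pow a l)
      = (holM ^ (a.toAdd.val)) *ᵥ (Multiplicative.toAdd l) := by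
  unfold Crystal.matAction Crystal.zmodHom
  rw [MonoidHom.mk'_apply, ← map_pow]
  have : ((Crystal.matUnit holM 7 holM_pow ^ (a.toAdd.val) :
    (Matrix (Fin 5) (Fin 5) ℤ)ˣ) : Matrix (Fin 5) (Fin 5) ℤ) = holM ^ (a.toAdd.val) := by
    rw [Units.val_pow_eq_pow_val]; rfl
  rw [← this]
  rfl

noncomputable def rhoG : Representation ℤ Gam EE where
  toFun g := trE (Bl g.left.toAdd) * alE ^ (g.right.toAdd.val)
  map_one' := by
    show trE (Bl 0) * alE ^ ((0 : ZMod 8).val) = 1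
    rw [Bl_zero, trE_zero, ZMod.val_zero, pow_zero, one_mul]
  map_mul' g h := by
    show trE (Bl (g.left.toAdd + (Crystal.matAction 8 holM holM_pow g.right h.left).toAdd))
        * alE ^ ((g.right.toAdd + h.right.toAdd).val) = _
    rw [matAction_apply, Bl_add, Bl_holM_pow, trE_add, ZMod.val_add,
      ← pow_eq_pow_mod _ alE_eight, pow_add]
    calc _ = trE (Bl g.left.toAdd) * (trE (sg^[g.right.toAdd.val] (Bl h.left.toAdd))
          * alE ^ (g.right.toAdd.val)) * alE ^ (h.right.toAdd.val) := by simp only [mul_assoc]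
      _ = _ := by rw [← alE_pow_trE]; simp only [mul_assoc]

theorem rhoG_eq (g : Gam) : rhoG g = trE (Bl g.left.toAdd) * alE ^ (g.right.toAdd.val) := rfl

theorem pow_comm_of {A B : Module.End ℤ EE} (h : A * B = B * A) (n : ℕ) :
    A ^ n * B = B * A ^ n := (show Commute A B from h).pow_left n

theorem rhoG_DD (n : ℤ) (g : Gam) (z : EE) : DD n (rhoG g z) = rhoG g (DD n z) := by
  rw [rhoG_eq, ← Module.End.mul_apply, ← Module.End.mul_apply, ← mul_assoc, ← trE_DD, mul_assoc,
    ← pow_comm_of (alE_DD n), mul_assoc]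

theorem rhoG_prE (n : ℤ) (g : Gam) (z : EE) : prE n (rhoG g z) = rhoG g (prE n z) := by
  rw [rhoG_eq, ← Module.End.mul_apply, ← Module.End.mul_apply, ← mul_assoc, ← trE_prE, mul_assoc,
    ← pow_comm_of (alE_prE n), mul_assoc]

theorem rhoG_SS (n : ℤ) (g : Gam) : SS n ≤ (SS n).comap (rhoG g) := by
  intro z hz
  rw [Submodule.mem_comap, ← prE_id n hz, ← rhoG_prE]
  exact prE_mem _ _

theorem augE_rhoG (g : Gam) (z : EE) : augE (rhoG g z) = augE z := by
  rw [rhoG_eq, Module.End.mul_apply]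
  have h1 : ∀ y, augE (trE (Bl g.left.toAdd) y) = augE y := fun y =>
    LinearMap.congr_fun (augE_trE _) y
  rw [h1]
  generalize g.right.toAdd.val = n
  induction n with
  | zero => simp
  | succ n ih =>
    rw [pow_succ', Module.End.mul_apply]
    exact (LinearMap.congr_fun augE_alE _).trans ih

/-! orbit representatives -/

def pt (k : ℕ) : XV := ![((k % 2 + 2 * (k / 32 % 2) : ℕ) : ℤ), ((k / 2 % 2 : ℕ) : ℤ),
  ((k / 4 % 2 : ℕ) : ℤ), ((k / 8 % 2 : ℕ) : ℤ), ((k / 16 % 2 : ℕ) : ℤ)]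

def idx (x : XV) : ℕ := (x 0 % 2 + 2 * (x 1 % 2) + 4 * (x 2 % 2) + 8 * (x 3 % 2) + 16 * (x 4 % 2)
  + 32 * ((x 0 / 2 + x 1 / 2 + x 2 / 2 + x 3 / 2 + x 4 / 2) % 2)).toNat

theorem idx_lt (x : XV) : idx x < 64 := by
  unfold idx; omega

theorem idx_pt (k : ℕ) (h : k < 64) : idx (pt k) = k := by
  simp [idx, pt]; omega

theorem idx_tr (x l : XV) : idx (x + 2 • Bl l) = idx x := by
  simp [idx, Bl]; omega

theorem pt_idx (x : XV) : ∃ l, x = pt (idx x) + 2 • Bl l := by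
  obtain ⟨w, hw⟩ : ∃ w : XV, x = pt (idx x) + 2 • w := by
    refine ⟨![(x 0 - pt (idx x) 0) / 2, (x 1 - pt (idx x) 1) / 2, (x 2 - pt (idx x) 2) / 2,
      (x 3 - pt (idx x) 3) / 2, (x 4 - pt (idx x) 4) / 2], ?_⟩
    funext i
    fin_cases i <;> simp [pt, idx] <;> omega
  have he : (w 0 + w 1 + w 2 + w 3 + w 4) % 2 = 0 := by
    have h0 := congrFun hw 0
    have h1 := congrFun hw 1
    have h2 := congrFun hw 2
    have h3 := congrFun hw 3
    have h4 := congrFun hw 4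
    simp [pt, idx] at h0 h1 h2 h3 h4
    omega
  refine ⟨![(w 0 + w 1 + w 2 - w 3 + w 4) / 2, w 2, w 3, w 4,
    (w 0 - w 1 + w 2 - w 3 + w 4) / 2], ?_⟩
  conv_lhs => rw [hw]
  congr 2
  funext i
  fin_cases i <;> simp [Bl] <;> omega

theorem sg_iter_tr (n : ℕ) (x w : XV) : sg^[n] (x + 2 • w) = sg^[n] x + 2 • sg^[n] w := by
  induction n with
  | zero => rfl
  | succ n ih => simp only [Function.iterate_succ_apply', ih, sg_tr]

theorem sg_inv (c : ZMod 8) (x : XV) : sg^[8 - c.val] (sg^[c.val] x) = x := by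
  rw [← Function.iterate_add_apply, Nat.sub_add_cancel (ZMod.val_lt c).le, sg_eight]

theorem sg_inv' (c : ZMod 8) (x : XV) : sg^[c.val] (sg^[8 - c.val] x) = x := by
  rw [← Function.iterate_add_apply, add_comm, Nat.sub_add_cancel (ZMod.val_lt c).le, sg_eight]

def cellMap (p : Gam × Fin 64) : XV × ZMod 8 :=
  (sg^[p.1.right.toAdd.val] (pt p.2) + 2 • Bl p.1.left.toAdd, p.1.right.toAdd)

def mkG (l : XV) (c : ZMod 8) : Gam := ⟨Multiplicative.ofAdd l, Multiplicative.ofAdd c⟩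

theorem cell_decomp (y : XV) (c : ZMod 8) : ∃ l : XV,
    y = sg^[c.val] (pt (idx (sg^[8 - c.val] y))) + 2 • Bl l := by
  obtain ⟨l, hl⟩ := pt_idx (sg^[8 - c.val] y)
  refine ⟨(holM ^ c.val) *ᵥ l, ?_⟩
  rw [Bl_holM_pow, ← sg_iter_tr, ← hl, sg_inv']

theorem idx_cell (c : ZMod 8) (k : ℕ) (hk : k < 64) (l : XV) :
    idx (sg^[8 - c.val] (sg^[c.val] (pt k) + 2 • Bl l)) = k := by
  rw [sg_iter_tr, sg_inv, ← Bl_holM_pow, idx_tr, idx_pt k hk]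

theorem cellMap_bij : Function.Bijective cellMap := by
  constructor
  · rintro ⟨⟨l, c⟩, k⟩ ⟨⟨l', c'⟩, k'⟩ h
    obtain ⟨h1, h2⟩ := Prod.ext_iff.1 h
    have h2' : c = c' := h2
    subst h2'
    have h1' : sg^[c.toAdd.val] (pt k) + 2 • Bl l.toAdd
      = sg^[c.toAdd.val] (pt k') + 2 • Bl l'.toAdd := h1
    have hk : k = k' := by
      apply Fin.ext
      rw [← idx_cell c.toAdd k k.2 l.toAdd, ← idx_cell c.toAdd k' k'.2 l'.toAdd, h1']
    subst hk
    have h3 := add_left_cancel h1'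
    have h4 : Bl l.toAdd = Bl l'.toAdd := by
      funext i
      have := congrFun h3 i
      simp at this
      exact this
    have h5 : l = l' := Bl_inj h4
    rw [h5]
  · rintro ⟨y, c⟩
    obtain ⟨l, hl⟩ := cell_decomp y c
    refine ⟨(mkG l c, ⟨idx (sg^[8 - c.val] y), idx_lt _⟩), ?_⟩
    exact Prod.ext hl.symm rfl

theorem rhoG_cel (g : Gam) (k : ℕ) : rhoG g (cel (pt k) 0) = sgnN g.right.toAdd.val (bits (pt k)) •
    cel (sg^[g.right.toAdd.val] (pt k) + 2 • Bl g.left.toAdd) g.right.toAdd := by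
  rw [rhoG_eq, Module.End.mul_apply, alE_pow_cel, map_smul, trE_cel, zero_add, ZMod.natCast_zmod_val]

noncomputable def basG : Module.Basis (Gam × Fin 64) ℤ EE :=
  ((Finsupp.basisSingleOne (R := ℤ) (ι := XV × ZMod 8)).reindex
    (Equiv.ofBijective cellMap cellMap_bij).symm).unitsSMul
    (fun p => ⟨sgnN p.1.right.toAdd.val (bits (pt p.2)), sgnN p.1.right.toAdd.val (bits (pt p.2)),
      sgnN_mul_self _ _, sgnN_mul_self _ _⟩)

theorem basG_eq (g : Gam) (k : Fin 64) : basG (g, k) = rhoG g (cel (pt k) 0) := by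
  rw [rhoG_cel]
  unfold basG
  rw [Module.Basis.unitsSMul_apply, Module.Basis.reindex_apply]
  simp only [Equiv.symm_symm, Equiv.ofBijective_apply, Finsupp.coe_basisSingleOne]
  rfl

theorem basG_mul (h g : Gam) (k : Fin 64) : rhoG h (basG (g, k)) = basG (h * g, k) := by
  rw [basG_eq, basG_eq, map_mul, Module.End.mul_apply]

theorem rhoG_projective : Projective (Rep.of rhoG) := freeRep_projective rhoG basG basG_mul

theorem inv_cel {M : Type} [AddCommGroup M] (φ : EE →ₗ[ℤ] M) (hφ : ∀ g z, φ (rhoG g z) = φ z)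
    (y : XV) (c : ZMod 8) :
    φ (cel y c) = sgnN c.val (bits (sg^[8 - c.val] y)) • φ (cel (pt (idx (sg^[8 - c.val] y))) 0) := by
  obtain ⟨l, hl⟩ := cell_decomp y c
  obtain ⟨l', hl'⟩ := pt_idx (sg^[8 - c.val] y)
  have h1 := rhoG_cel (mkG l c) (idx (sg^[8 - c.val] y))
  have h2 : bits (sg^[8 - c.val] y) = bits (pt (idx (sg^[8 - c.val] y))) := by
    conv_lhs => rw [hl', bits_tr]
  have h3 := congrArg φ h1
  rw [hφ, map_smul] at h3
  rw [h3, smul_smul, h2]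
  show _ = (sgnN c.val (bits (pt (idx (sg^[8 - c.val] y)))) *
    sgnN c.val (bits (pt (idx (sg^[8 - c.val] y))))) •
      φ (cel (sg^[c.val] (pt (idx (sg^[8 - c.val] y))) + 2 • Bl l) c)
  rw [sgnN_mul_self, one_smul, ← hl]

/-! ### Sparse rows -/

abbrev Row := List (ℕ × ℤ)

def rowEval (v : ℕ → ℤ) : Row → ℤ
  | [] => 0
  | p :: t => p.2 * v p.1 + rowEval v t

theorem rowEval_append (v : ℕ → ℤ) (r s : Row) : rowEval v (r ++ s) = rowEval v r + rowEval v s := by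
  induction r with
  | nil => simp [rowEval]
  | cons p t ih => simp only [List.cons_append, rowEval, ih]; ring

def scaleR (a : ℤ) : Row → Row
  | [] => []
  | p :: t => (p.1, a * p.2) :: scaleR a t

theorem rowEval_scaleR (v : ℕ → ℤ) (a : ℤ) (r : Row) : rowEval v (scaleR a r) = a * rowEval v r := by
  induction r with
  | nil => simp [rowEval, scaleR]
  | cons p t ih => simp only [scaleR, rowEval, ih]; ring

def compR (F : ℕ → Row) : Row → Row
  | [] => []
  | p :: t => scaleR p.2 (F p.1) ++ compR F t

theorem rowEval_compR (v : ℕ → ℤ) (F : ℕ → Row) (r : Row) :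
    rowEval v (compR F r) = rowEval (fun j => rowEval v (F j)) r := by
  induction r with
  | nil => simp [rowEval, compR]
  | cons p t ih => simp only [compR, rowEval_append, rowEval_scaleR, rowEval, ih]

def insR (k : ℕ) (a : ℤ) : Row → Row
  | [] => [(k, a)]
  | p :: t => cond (Nat.beq k p.1) ((p.1, a + p.2) :: t)
      (cond (Nat.ble k p.1) ((k, a) :: p :: t) (p :: insR k a t))

theorem rowEval_insR (v : ℕ → ℤ) (k : ℕ) (a : ℤ) (r : Row) :
    rowEval v (insR k a r) = a * v k + rowEval v r := by
  induction r with
  | nil => simp [rowEval, insR]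
  | cons p t ih =>
    unfold insR
    cases h : Nat.beq k p.1
    · cases h2 : Nat.ble k p.1
      · simp only [cond_false, rowEval, ih]; ring
      · simp only [cond_true, cond_false, rowEval]
    · have := Nat.eq_of_beq_eq_true h
      subst this
      simp only [cond_true, rowEval]; ring

def normR : Row → Row
  | [] => []
  | p :: t => insR p.1 p.2 (normR t)

theorem rowEval_normR (v : ℕ → ℤ) (r : Row) : rowEval v (normR r) = rowEval v r := by
  induction r with
  | nil => rfl
  | cons p t ih => simp only [normR, rowEval_insR, rowEval, ih]

def isZ : ℤ → Bool
  | Int.ofNat n => Nat.beq n 0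
  | Int.negSucc _ => false

theorem isZ_eq {a : ℤ} (h : isZ a = true) : a = 0 := by
  cases a with
  | ofNat n => have := Nat.eq_of_beq_eq_true h; subst this; rfl
  | negSucc n => exact absurd h (by simp [isZ])

def allZ : Row → Bool
  | [] => true
  | p :: t => isZ p.2 && allZ t

theorem rowEval_allZ (v : ℕ → ℤ) (r : Row) (h : allZ r = true) : rowEval v r = 0 := by
  induction r with
  | nil => rfl
  | cons p t ih =>
    unfold allZ at h
    rw [Bool.and_eq_true] at h
    simp only [rowEval, isZ_eq h.1, ih h.2]; ring

def zeroR (r : Row) : Bool := allZ (normR r)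

theorem rowEval_zeroR (v : ℕ → ℤ) {r : Row} (h : zeroR r = true) : rowEval v r = 0 := by
  rw [← rowEval_normR]; exact rowEval_allZ v _ h

/-- all coefficients are divisible by `m` -/
def allDvd (m : ℕ) : Row → Bool
  | [] => true
  | p :: t => cond (Nat.beq m 0) (isZ p.2) (isZ (p.2 % (m : ℤ))) && allDvd m t

theorem rowEval_allDvd (v : ℕ → ℤ) (m : ℕ) (r : Row) (h : allDvd m r = true) :
    (m : ℤ) ∣ rowEval v r := by
  induction r with
  | nil => exact dvd_zero _
  | cons p t ih =>
    unfold allDvd at h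
    rw [Bool.and_eq_true] at h
    refine dvd_add (Dvd.dvd.mul_right ?_ _) (ih h.2)
    have h1 := h.1
    cases hm : Nat.beq m 0
    · rw [hm, cond_false] at h1
      exact Int.dvd_of_emod_eq_zero (isZ_eq h1)
    · rw [hm, cond_true] at h1
      rw [isZ_eq h1]; exact dvd_zero _

theorem rowEval_congr {v w : ℕ → ℤ} (h : ∀ j, v j = w j) (r : Row) : rowEval v r = rowEval w r := by
  rw [funext h]

theorem rowEval_add (v w : ℕ → ℤ) (r : Row) :
    rowEval (fun j => v j + w j) r = rowEval v r + rowEval w r := by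
  induction r with
  | nil => rfl
  | cons p t ih => simp only [rowEval, ih]; ring

def allS (P : ℕ → Bool) : Row → Bool
  | [] => true
  | p :: t => P p.1 && allS P t

theorem rowEval_allS {v w : ℕ → ℤ} {P : ℕ → Bool} (r : Row) (hr : allS P r = true)
    (h : ∀ j, P j = true → v j = w j) : rowEval v r = rowEval w r := by
  induction r with
  | nil => rfl
  | cons p t ih =>
    unfold allS at hr
    rw [Bool.and_eq_true] at hr
    simp only [rowEval, ih hr.2, h _ hr.1]

def allUpTo (P : ℕ → Bool) : ℕ → Bool
  | 0 => true
  | n + 1 => P n && allUpTo P n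

theorem allUpTo_spec {P : ℕ → Bool} {n : ℕ} (h : allUpTo P n = true) (k : ℕ) (hk : k < n) :
    P k = true := by
  induction n with
  | zero => omega
  | succ n ih =>
    unfold allUpTo at h
    rw [Bool.and_eq_true] at h
    rcases Nat.lt_succ_iff_lt_or_eq.1 hk with h1 | h1
    · exact ih h.2 h1
    · rw [h1]; exact h.1

/-! ### The coboundary in coordinates -/

noncomputable def vecE (φ : EE →ₗ[ℤ] ℤ) (k : ℕ) : ℤ := φ (cel (pt k) 0)

theorem pt_mod (k : ℕ) : pt (k % 64) = pt k := by
  unfold pt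
  congr 1
  · congr 1; omega
  · congr 1
    · congr 1; omega
    · congr 1
      · congr 1; omega
      · congr 1
        · congr 1; omega
        · congr 1
          congr 1; omega

theorem vecE_mod (φ : EE →ₗ[ℤ] ℤ) (k : ℕ) : vecE φ (k % 64) = vecE φ k := by
  unfold vecE; rw [pt_mod]

abbrev InvE (φ : EE →ₗ[ℤ] ℤ) : Prop := ∀ g z, φ (rhoG g z) = φ z

def valS (j c : ℕ) : ℕ × ℤ :=
  (idx (sg^[8 - c] (pt j)), sgnN c (bits (pt (idx (sg^[8 - c] (pt j))))))

theorem bits_idx (x : XV) : bits (pt (idx x)) = bits x := by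
  obtain ⟨l, hl⟩ := pt_idx x
  conv_rhs => rw [hl, bits_tr]

theorem val_cel (φ : EE →ₗ[ℤ] ℤ) (hφ : InvE φ) (j : ℕ) (c : ZMod 8) :
    φ (cel (pt j) c) = (valS j c.val).2 * vecE φ (valS j c.val).1 := by
  rw [inv_cel φ hφ, valS, bits_idx]
  rfl

theorem val_zero (φ : EE →ₗ[ℤ] ℤ) (hφ : InvE φ) (x : XV) :
    φ (cel x 0) = vecE φ (idx x) := by
  rw [inv_cel φ hφ, ZMod.val_zero, Nat.sub_zero, sg_eight]
  show (1 : ℤ) • _ = _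
  rw [one_smul]; rfl

def bS (j : ℕ) (i : Fin 5) : Row :=
  cond (bits (pt j) i)
    [(idx (Function.update (pt j) i (pt j i + 1)), sB i (bits (pt j))),
     (idx (Function.update (pt j) i (pt j i - 1)), - sB i (bits (pt j)))] []

def bRowS (j : ℕ) : Row := bS j 0 ++ bS j 1 ++ bS j 2 ++ bS j 3 ++ bS j 4

theorem eval_bdT (φ : EE →ₗ[ℤ] ℤ) (hφ : InvE φ) (j : ℕ) (i : Fin 5) :
    φ (bdT i (pt j) 0) = rowEval (vecE φ) (bS j i) := by
  unfold bdT bS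
  rw [map_smul]
  cases h : bits (pt j) i
  · simp [rowEval]
  · simp only [if_true, cond_true, map_sub, val_zero φ hφ, rowEval, smul_eq_mul]
    ring

theorem eval_bd (φ : EE →ₗ[ℤ] ℤ) (hφ : InvE φ) (j : ℕ) :
    φ (bdE (cel (pt j) 0)) = rowEval (vecE φ) (bRowS j) := by
  rw [bdE_cel, map_sum, Fin.sum_univ_five]
  simp only [eval_bdT φ hφ, bRowS, rowEval_append]

def oRowS (j : ℕ) : Row := scaleR (sAll (bits (pt j))) [valS j 1, (j, -1)]
def eRowS (j : ℕ) : Row := scaleR (sAll (bits (pt j)))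
  [valS j 0, valS j 1, valS j 2, valS j 3, valS j 4, valS j 5, valS j 6, valS j 7]

theorem eval_o (φ : EE →ₗ[ℤ] ℤ) (hφ : InvE φ) (j : ℕ) :
    φ (sAll (bits (pt j)) • (shC 1 - 1) (cel (pt j) 0)) = rowEval (vecE φ) (oRowS j) := by
  unfold oRowS
  rw [map_smul, rowEval_scaleR, LinearMap.sub_apply, shC_cel, Module.End.one_apply, map_sub,
    zero_add, val_cel φ hφ]
  have : (1 : ZMod 8).val = 1 := rfl
  rw [this]
  simp only [rowEval, smul_eq_mul, vecE]
  ring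

theorem sum_zmod8 (f : ZMod 8 → ℤ) : ∑ a, f a = f 0 + f 1 + f 2 + f 3 + f 4 + f 5 + f 6 + f 7 :=
  Fin.sum_univ_eight f

theorem eval_e (φ : EE →ₗ[ℤ] ℤ) (hφ : InvE φ) (j : ℕ) :
    φ (sAll (bits (pt j)) • (∑ a : ZMod 8, shC a) (cel (pt j) 0)) = rowEval (vecE φ) (eRowS j) := by
  unfold eRowS
  rw [map_smul, rowEval_scaleR, LinearMap.sum_apply, map_sum]
  simp only [shC_cel, zero_add, val_cel φ hφ]
  rw [sum_zmod8]
  have h0 : (0 : ZMod 8).val = 0 := rfl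
  have h1 : (1 : ZMod 8).val = 1 := rfl
  have h2 : (2 : ZMod 8).val = 2 := rfl
  have h3 : (3 : ZMod 8).val = 3 := rfl
  have h4 : (4 : ZMod 8).val = 4 := rfl
  have h5 : (5 : ZMod 8).val = 5 := rfl
  have h6 : (6 : ZMod 8).val = 6 := rfl
  have h7 : (7 : ZMod 8).val = 7 := rfl
  rw [h0, h1, h2, h3, h4, h5, h6, h7]
  simp only [rowEval, smul_eq_mul]
  ring

def degC (j : ℕ) : ℕ := j % 2 + j / 2 % 2 + j / 4 % 2 + j / 8 % 2 + j / 16 % 2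

theorem degC_mod (j : ℕ) : degC (j % 64) = degC j := by unfold degC; omega
theorem degC_le (j : ℕ) : degC j ≤ 5 := by unfold degC; omega

theorem ob_ite (m : ℕ) : (if ob ((m % 2 : ℕ) : ℤ) then (1 : ℤ) else 0) = ((m % 2 : ℕ) : ℤ) := by
  rcases Nat.mod_two_eq_zero_or_one m with h | h <;> rw [h] <;> rfl

theorem degB_pt (j : ℕ) : degB (bits (pt j)) = (degC j : ℤ) := by
  unfold degB
  rw [Fin.sum_univ_five]
  show (if ob ((j % 2 + 2 * (j / 32 % 2) : ℕ) : ℤ) then (1 : ℤ) else 0)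
    + (if ob ((j / 2 % 2 : ℕ) : ℤ) then (1 : ℤ) else 0)
    + (if ob ((j / 4 % 2 : ℕ) : ℤ) then (1 : ℤ) else 0)
    + (if ob ((j / 8 % 2 : ℕ) : ℤ) then (1 : ℤ) else 0)
    + (if ob ((j / 16 % 2 : ℕ) : ℤ) then (1 : ℤ) else 0) = _
  have : ob ((j % 2 + 2 * (j / 32 % 2) : ℕ) : ℤ) = ob ((j % 2 : ℕ) : ℤ) := by
    rw [Nat.cast_add, Nat.cast_mul]
    exact ob_add_two_mul _ _
  rw [this]
  simp only [ob_ite, degC]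
  push_cast
  rfl

/-! ### Tables of the coboundary maps -/

def bTab : List Row := [
  [], [(0, -1), (32, 1)], [(0, -1), (32, 1)], [(1, 1), (2, -1), (33, -1), (34, 1)],
  [(0, -1), (32, 1)], [(1, 1), (4, -1), (33, -1), (36, 1)], [(2, 1), (4, -1), (34, -1), (36, 1)],
  [(3, -1), (5, 1), (6, -1), (35, 1), (37, -1), (38, 1)], [(0, -1), (32, 1)],
  [(1, 1), (8, -1), (33, -1), (40, 1)], [(2, 1), (8, -1), (34, -1), (40, 1)],
  [(3, -1), (9, 1), (10, -1), (35, 1), (41, -1), (42, 1)], [(4, 1), (8, -1), (36, -1), (40, 1)],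
  [(5, -1), (9, 1), (12, -1), (37, 1), (41, -1), (44, 1)],
  [(6, -1), (10, 1), (12, -1), (38, 1), (42, -1), (44, 1)],
  [(7, 1), (11, -1), (13, 1), (14, -1), (39, -1), (43, 1), (45, -1), (46, 1)], [(0, -1), (32, 1)],
  [(1, 1), (16, -1), (33, -1), (48, 1)], [(2, 1), (16, -1), (34, -1), (48, 1)],
  [(3, -1), (17, 1), (18, -1), (35, 1), (49, -1), (50, 1)], [(4, 1), (16, -1), (36, -1), (48, 1)],
  [(5, -1), (17, 1), (20, -1), (37, 1), (49, -1), (52, 1)],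
  [(6, -1), (18, 1), (20, -1), (38, 1), (50, -1), (52, 1)],
  [(7, 1), (19, -1), (21, 1), (22, -1), (39, -1), (51, 1), (53, -1), (54, 1)],
  [(8, 1), (16, -1), (40, -1), (48, 1)], [(9, -1), (17, 1), (24, -1), (41, 1), (49, -1), (56, 1)],
  [(10, -1), (18, 1), (24, -1), (42, 1), (50, -1), (56, 1)],
  [(11, 1), (19, -1), (25, 1), (26, -1), (43, -1), (51, 1), (57, -1), (58, 1)],
  [(12, -1), (20, 1), (24, -1), (44, 1), (52, -1), (56, 1)],
  [(13, 1), (21, -1), (25, 1), (28, -1), (45, -1), (53, 1), (57, -1), (60, 1)],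
  [(14, 1), (22, -1), (26, 1), (28, -1), (46, -1), (54, 1), (58, -1), (60, 1)],
  [(15, -1), (23, 1), (27, -1), (29, 1), (30, -1), (47, 1), (55, -1), (59, 1), (61, -1), (62, 1)],
  [], [(0, 1), (32, -1)], [(0, 1), (32, -1)], [(1, -1), (2, 1), (33, 1), (34, -1)],
  [(0, 1), (32, -1)], [(1, -1), (4, 1), (33, 1), (36, -1)], [(2, -1), (4, 1), (34, 1), (36, -1)],
  [(3, 1), (5, -1), (6, 1), (35, -1), (37, 1), (38, -1)], [(0, 1), (32, -1)],
  [(1, -1), (8, 1), (33, 1), (40, -1)], [(2, -1), (8, 1), (34, 1), (40, -1)],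
  [(3, 1), (9, -1), (10, 1), (35, -1), (41, 1), (42, -1)], [(4, -1), (8, 1), (36, 1), (40, -1)],
  [(5, 1), (9, -1), (12, 1), (37, -1), (41, 1), (44, -1)],
  [(6, 1), (10, -1), (12, 1), (38, -1), (42, 1), (44, -1)],
  [(7, -1), (11, 1), (13, -1), (14, 1), (39, 1), (43, -1), (45, 1), (46, -1)], [(0, 1), (32, -1)],
  [(1, -1), (16, 1), (33, 1), (48, -1)], [(2, -1), (16, 1), (34, 1), (48, -1)],
  [(3, 1), (17, -1), (18, 1), (35, -1), (49, 1), (50, -1)], [(4, -1), (16, 1), (36, 1), (48, -1)],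
  [(5, 1), (17, -1), (20, 1), (37, -1), (49, 1), (52, -1)],
  [(6, 1), (18, -1), (20, 1), (38, -1), (50, 1), (52, -1)],
  [(7, -1), (19, 1), (21, -1), (22, 1), (39, 1), (51, -1), (53, 1), (54, -1)],
  [(8, -1), (16, 1), (40, 1), (48, -1)], [(9, 1), (17, -1), (24, 1), (41, -1), (49, 1), (56, -1)],
  [(10, 1), (18, -1), (24, 1), (42, -1), (50, 1), (56, -1)],
  [(11, -1), (19, 1), (25, -1), (26, 1), (43, 1), (51, -1), (57, 1), (58, -1)],
  [(12, 1), (20, -1), (24, 1), (44, -1), (52, 1), (56, -1)],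
  [(13, -1), (21, 1), (25, -1), (28, 1), (45, 1), (53, -1), (57, 1), (60, -1)],
  [(14, -1), (22, 1), (26, -1), (28, 1), (46, 1), (54, -1), (58, 1), (60, -1)],
  [(15, 1), (23, -1), (27, 1), (29, -1), (30, 1), (47, -1), (55, 1), (59, -1), (61, 1), (62, -1)]]

def oTab : List Row := [
  [(0, 0)], [(1, 1), (33, 1)], [(2, 1), (48, 1)], [(3, -1), (17, 1)], [(2, -1), (4, 1)],
  [(5, -1), (35, -1)], [(6, -1), (50, 1)], [(7, 1), (19, 1)], [(4, -1), (8, 1)],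
  [(9, -1), (37, -1)], [(10, -1), (52, 1)], [(11, 1), (21, 1)], [(6, 1), (12, -1)],
  [(13, 1), (39, 1)], [(14, 1), (54, 1)], [(15, -1), (23, 1)], [(8, -1), (16, 1)],
  [(17, -1), (41, -1)], [(18, -1), (56, 1)], [(19, 1), (25, 1)], [(10, 1), (20, -1)],
  [(21, 1), (43, 1)], [(22, 1), (58, 1)], [(23, -1), (27, 1)], [(12, 1), (24, -1)],
  [(25, 1), (45, 1)], [(26, 1), (60, 1)], [(27, -1), (29, 1)], [(14, -1), (28, 1)],
  [(29, -1), (47, -1)], [(30, -1), (62, 1)], [(31, 2)], [(32, 0)], [(1, 1), (33, 1)],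
  [(16, 1), (34, 1)], [(35, -1), (49, 1)], [(34, -1), (36, 1)], [(3, -1), (37, -1)],
  [(18, 1), (38, -1)], [(39, 1), (51, 1)], [(36, -1), (40, 1)], [(5, -1), (41, -1)],
  [(20, 1), (42, -1)], [(43, 1), (53, 1)], [(38, 1), (44, -1)], [(7, 1), (45, 1)],
  [(22, 1), (46, 1)], [(47, -1), (55, 1)], [(40, -1), (48, 1)], [(9, -1), (49, -1)],
  [(24, 1), (50, -1)], [(51, 1), (57, 1)], [(42, 1), (52, -1)], [(11, 1), (53, 1)],
  [(26, 1), (54, 1)], [(55, -1), (59, 1)], [(44, 1), (56, -1)], [(13, 1), (57, 1)],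
  [(28, 1), (58, 1)], [(59, -1), (61, 1)], [(46, -1), (60, 1)], [(15, -1), (61, -1)],
  [(30, 1), (62, -1)], [(63, 2)]]

def eTab : List Row := [
  [(0, 8)], [(1, -4), (33, 4)],
  [(2, -1), (4, -1), (8, -1), (16, -1), (34, 1), (36, 1), (40, 1), (48, 1)],
  [(3, 1), (5, 1), (9, 1), (17, 1), (35, -1), (37, -1), (41, -1), (49, -1)],
  [(2, -1), (4, -1), (8, -1), (16, -1), (34, 1), (36, 1), (40, 1), (48, 1)],
  [(3, 1), (5, 1), (9, 1), (17, 1), (35, -1), (37, -1), (41, -1), (49, -1)],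
  [(6, 2), (12, 2), (24, 2), (50, 2)], [(7, -2), (19, 2), (25, -2), (45, 2)],
  [(2, -1), (4, -1), (8, -1), (16, -1), (34, 1), (36, 1), (40, 1), (48, 1)],
  [(3, 1), (5, 1), (9, 1), (17, 1), (35, -1), (37, -1), (41, -1), (49, -1)],
  [(10, 2), (20, 2), (42, 2), (52, 2)], [(11, -2), (21, 2), (43, -2), (53, 2)],
  [(6, 2), (12, 2), (24, 2), (50, 2)], [(13, -2), (39, 2), (51, -2), (57, 2)],
  [(14, -1), (22, -1), (26, -1), (28, -1), (46, 1), (54, 1), (58, 1), (60, 1)],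
  [(15, 1), (23, 1), (27, 1), (29, 1), (47, -1), (55, -1), (59, -1), (61, -1)],
  [(2, -1), (4, -1), (8, -1), (16, -1), (34, 1), (36, 1), (40, 1), (48, 1)],
  [(3, 1), (5, 1), (9, 1), (17, 1), (35, -1), (37, -1), (41, -1), (49, -1)],
  [(18, 2), (38, 2), (44, 2), (56, 2)], [(7, 2), (19, -2), (25, 2), (45, -2)],
  [(10, 2), (20, 2), (42, 2), (52, 2)], [(11, 2), (21, -2), (43, 2), (53, -2)],
  [(14, -1), (22, -1), (26, -1), (28, -1), (46, 1), (54, 1), (58, 1), (60, 1)],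
  [(15, 1), (23, 1), (27, 1), (29, 1), (47, -1), (55, -1), (59, -1), (61, -1)],
  [(6, 2), (12, 2), (24, 2), (50, 2)], [(7, -2), (19, 2), (25, -2), (45, 2)],
  [(14, -1), (22, -1), (26, -1), (28, -1), (46, 1), (54, 1), (58, 1), (60, 1)],
  [(15, 1), (23, 1), (27, 1), (29, 1), (47, -1), (55, -1), (59, -1), (61, -1)],
  [(14, -1), (22, -1), (26, -1), (28, -1), (46, 1), (54, 1), (58, 1), (60, 1)],
  [(15, 1), (23, 1), (27, 1), (29, 1), (47, -1), (55, -1), (59, -1), (61, -1)],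
  [(30, 4), (62, 4)], [(31, 0)], [(32, 8)], [(1, 4), (33, -4)],
  [(2, 1), (4, 1), (8, 1), (16, 1), (34, -1), (36, -1), (40, -1), (48, -1)],
  [(3, -1), (5, -1), (9, -1), (17, -1), (35, 1), (37, 1), (41, 1), (49, 1)],
  [(2, 1), (4, 1), (8, 1), (16, 1), (34, -1), (36, -1), (40, -1), (48, -1)],
  [(3, -1), (5, -1), (9, -1), (17, -1), (35, 1), (37, 1), (41, 1), (49, 1)],
  [(18, 2), (38, 2), (44, 2), (56, 2)], [(13, 2), (39, -2), (51, 2), (57, -2)],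
  [(2, 1), (4, 1), (8, 1), (16, 1), (34, -1), (36, -1), (40, -1), (48, -1)],
  [(3, -1), (5, -1), (9, -1), (17, -1), (35, 1), (37, 1), (41, 1), (49, 1)],
  [(10, 2), (20, 2), (42, 2), (52, 2)], [(11, -2), (21, 2), (43, -2), (53, 2)],
  [(18, 2), (38, 2), (44, 2), (56, 2)], [(7, 2), (19, -2), (25, 2), (45, -2)],
  [(14, 1), (22, 1), (26, 1), (28, 1), (46, -1), (54, -1), (58, -1), (60, -1)],
  [(15, -1), (23, -1), (27, -1), (29, -1), (47, 1), (55, 1), (59, 1), (61, 1)],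
  [(2, 1), (4, 1), (8, 1), (16, 1), (34, -1), (36, -1), (40, -1), (48, -1)],
  [(3, -1), (5, -1), (9, -1), (17, -1), (35, 1), (37, 1), (41, 1), (49, 1)],
  [(6, 2), (12, 2), (24, 2), (50, 2)], [(13, -2), (39, 2), (51, -2), (57, 2)],
  [(10, 2), (20, 2), (42, 2), (52, 2)], [(11, 2), (21, -2), (43, 2), (53, -2)],
  [(14, 1), (22, 1), (26, 1), (28, 1), (46, -1), (54, -1), (58, -1), (60, -1)],
  [(15, -1), (23, -1), (27, -1), (29, -1), (47, 1), (55, 1), (59, 1), (61, 1)],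
  [(18, 2), (38, 2), (44, 2), (56, 2)], [(13, 2), (39, -2), (51, 2), (57, -2)],
  [(14, 1), (22, 1), (26, 1), (28, 1), (46, -1), (54, -1), (58, -1), (60, -1)],
  [(15, -1), (23, -1), (27, -1), (29, -1), (47, 1), (55, 1), (59, 1), (61, 1)],
  [(14, 1), (22, 1), (26, 1), (28, 1), (46, -1), (54, -1), (58, -1), (60, -1)],
  [(15, -1), (23, -1), (27, -1), (29, -1), (47, 1), (55, 1), (59, 1), (61, 1)],
  [(30, 4), (62, 4)], [(63, 0)]]


def eqR : Row → Row → Bool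
  | [], [] => true
  | p :: t, q :: u => Nat.beq p.1 q.1 && isZ (p.2 - q.2) && eqR t u
  | _, _ => false

theorem eqR_eq : ∀ {r s : Row}, eqR r s = true → r = s
  | [], [], _ => rfl
  | p :: t, q :: u, h => by
    unfold eqR at h
    rw [Bool.and_eq_true, Bool.and_eq_true] at h
    have h1 := Nat.eq_of_beq_eq_true h.1.1
    have h2 := sub_eq_zero.1 (isZ_eq h.1.2)
    rw [eqR_eq h.2, Prod.ext h1 h2]
  | [], _ :: _, h => by simp [eqR] at h
  | _ :: _, [], h => by simp [eqR] at h

def look (L : List Row) (j : ℕ) : Row := L.getD (j % 64) []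

theorem bTab_check : allUpTo (fun j => eqR (look bTab j) (normR (bRowS j))) 64 = true := by
  decide +kernel
theorem oTab_check : allUpTo (fun j => eqR (look oTab j) (normR (oRowS j))) 64 = true := by
  decide +kernel
theorem eTab_check : allUpTo (fun j => eqR (look eTab j) (normR (eRowS j))) 64 = true := by
  decide +kernel

def dRow (n j : ℕ) : Row := look bTab j ++ cond (Nat.ble (n + 1) (degC j)) []
  (cond (Nat.beq ((n + 1 - degC j) % 2) 1) (look oTab j) (look eTab j))

theorem look_mod (L : List Row) (j : ℕ) : look L (j % 64) = look L j := by
  unfold look; rw [Nat.mod_mod]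

theorem dRow_mod (n j : ℕ) : dRow n (j % 64) = dRow n j := by
  unfold dRow; simp only [look_mod, degC_mod]

theorem ob_nat (q : ℕ) : ob (q : ℤ) = Nat.beq (q % 2) 1 := by
  unfold ob
  rcases Nat.mod_two_eq_zero_or_one q with h | h
  · rw [h, decide_eq_false (by omega)]; rfl
  · rw [h, decide_eq_true (by omega)]; rfl

theorem eval_DD_lt (φ : EE →ₗ[ℤ] ℤ) (hφ : InvE φ) (n j : ℕ) (hj : j < 64) :
    φ (DD n (cel (pt j) 0)) = rowEval (vecE φ) (dRow n j) := by
  unfold DD dRow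
  rw [LinearMap.add_apply, map_add, rowEval_append, eval_bd φ hφ, vop_cel,
    eqR_eq (allUpTo_spec bTab_check j hj), rowEval_normR]
  congr 1
  rw [degB_pt]
  cases h : Nat.ble (n + 1) (degC j)
  · have h1 : ¬ (n + 1 ≤ degC j) := by
      intro h2; rw [Nat.ble_eq_true_of_le h2] at h; exact absurd h (by decide)
    obtain ⟨q, hq⟩ : ∃ q : ℕ, n + 1 = degC j + q := ⟨n + 1 - degC j, by omega⟩
    have hq' : ((n : ℤ) + 1 - degC j) = (q : ℤ) := by omega
    have hq2 : n + 1 - degC j = q := by omega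
    rw [cond_false, hq', hq2, ← ob_nat]
    cases ho : ob (q : ℤ)
    · rw [wop_pos_even (by omega) ho, cond_false, eqR_eq (allUpTo_spec eTab_check j hj),
        rowEval_normR, eval_e φ hφ]
    · rw [wop_pos_odd (by omega) ho, cond_true, eqR_eq (allUpTo_spec oTab_check j hj),
        rowEval_normR, eval_o φ hφ]
  · have h1 := Nat.le_of_ble_eq_true h
    unfold wop
    rw [if_pos (by omega), cond_true]
    simp [rowEval]

theorem eval_DD (φ : EE →ₗ[ℤ] ℤ) (hφ : InvE φ) (n j : ℕ) :
    φ (DD n (cel (pt j) 0)) = rowEval (vecE φ) (dRow n j) := by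
  rw [← pt_mod, ← dRow_mod]
  exact eval_DD_lt φ hφ n (j % 64) (Nat.mod_lt _ (by decide))

theorem exists_inv (v : ℕ → ℤ) (hv : ∀ j, v (j % 64) = v j) :
    ∃ φ : EE →ₗ[ℤ] ℤ, InvE φ ∧ ∀ j, vecE φ j = v j := by
  obtain ⟨φ, h1, h2⟩ := freeRep_exists rhoG basG basG_mul (Representation.trivial ℤ Gam ℤ)
    (fun i => v i)
  refine ⟨φ, h1, fun j => ?_⟩
  have h3 := h2 ⟨j % 64, Nat.mod_lt _ (by decide)⟩
  rw [basG_eq, map_one, Module.End.one_apply] at h3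
  rw [← hv, ← h3, ← vecE_mod]
  rfl

theorem inv_agree {φ ψ : EE →ₗ[ℤ] ℤ} (hφ : InvE φ) (hψ : InvE ψ) (m : ℕ)
    (h : ∀ j < 64, degC j ≤ m → vecE φ j = vecE ψ j) (z : EE) (hz : z ∈ SS m) : φ z = ψ z := by
  have : SS m ≤ LinearMap.ker (φ - ψ) := by
    apply SS_induction
    intro x c hx
    rw [LinearMap.mem_ker, LinearMap.sub_apply, sub_eq_zero, inv_cel φ hφ, inv_cel ψ hψ]
    congr 1
    refine h _ (idx_lt _) ?_
    have h2 := degB_pt (idx (sg^[8 - c.val] x))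
    rw [bits_idx, bits_sg_iter] at h2
    have h3 : ∀ n b, degB (rotB^[n] b) = degB b := by
      intro n b
      induction n with
      | zero => rfl
      | succ n ih => rw [Function.iterate_succ_apply', degB_rotB, ih]
    rw [h3] at h2
    omega
  have := this hz
  rwa [LinearMap.mem_ker, LinearMap.sub_apply, sub_eq_zero] at this

theorem inv_DD {φ : EE →ₗ[ℤ] ℤ} (hφ : InvE φ) (n : ℤ) : InvE (φ ∘ₗ DD n) := by
  intro g z
  rw [LinearMap.comp_apply, rhoG_DD, hφ]; rfl

theorem vecE_DD {φ : EE →ₗ[ℤ] ℤ} (hφ : InvE φ) (n j : ℕ) :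
    vecE (φ ∘ₗ DD n) j = rowEval (vecE φ) (dRow n j) := eval_DD φ hφ n j

/-! ### Certificates -/

structure Cert where
  M : ℤ
  m : List ℕ
  Pi : List Row
  Z : List Row
  W : List Row
  h : List Row
  k : List Row

def Cert.mm (c : Cert) (l : ℕ) : ℕ := c.m.getD l 0

def checkG (F G : ℕ → Row) (b1 b2 : ℕ → Bool) (c : Cert) : Bool :=
  allUpTo (fun l => allS b1 (look c.Pi l)
    && (allDvd (c.mm l) (normR (compR F (look c.Pi l)))
    && zeroR ((l, -1) :: compR (look c.Z) (look c.Pi l)))) c.m.length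
  && (allUpTo (fun j => cond (b2 j) (zeroR (compR (look c.Z) (G j))) true) 64
  && (allUpTo (fun j => cond (b1 j)
      (zeroR ((j, -c.M) :: (scaleR c.M (compR (look c.h) (F j) ++ compR (look c.Pi) (look c.Z j))
        ++ compR G (look c.k j)))
      && (allS b2 (look c.k j)
      && (allS (fun l => Nat.blt l c.m.length) (look c.Z j)
      && zeroR (compR (look c.W) (F j) ++ compR (fun l => [(l, -(c.mm l : ℤ))]) (look c.Z j)))))
      true) 64
  && !isZ c.M))

def check (n : ℕ) (c : Cert) : Bool :=
  checkG (dRow n) (dRow (n + 1)) (fun j => Nat.ble (degC j) (n + 1))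
    (fun j => Nat.ble (degC j) (n + 2)) c

abbrev Cert.Q (c : Cert) : Type := (l : Fin c.m.length) → ZMod (c.mm l)

theorem rowEval_smul (a : ℤ) (v : ℕ → ℤ) (r : Row) :
    rowEval (fun j => a * v j) r = a * rowEval v r := by
  induction r with
  | nil => simp [rowEval]
  | cons p t ih => simp only [rowEval, ih]; ring

noncomputable def Cert.pi (c : Cert) : (EE →ₗ[ℤ] ℤ) →ₗ[ℤ] c.Q where
  toFun φ := fun l => ((rowEval (vecE φ) (look c.Pi l) : ℤ) : ZMod (c.mm l))
  map_add' φ ψ := by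
    funext l
    have : rowEval (vecE (φ + ψ)) (look c.Pi l) =
      rowEval (vecE φ) (look c.Pi l) + rowEval (vecE ψ) (look c.Pi l) := by
      rw [← rowEval_add]; rfl
    show ((rowEval (vecE (φ + ψ)) (look c.Pi l) : ℤ) : ZMod (c.mm l)) = _
    rw [this, Int.cast_add]; rfl
  map_smul' a φ := by
    funext l
    have : rowEval (vecE (a • φ)) (look c.Pi l) = a * rowEval (vecE φ) (look c.Pi l) := by
      rw [← rowEval_smul]; rfl
    show ((rowEval (vecE (a • φ)) (look c.Pi l) : ℤ) : ZMod (c.mm l)) = _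
    rw [this, Int.cast_mul, RingHom.id_apply, Pi.smul_apply, zsmul_eq_mul]

theorem rowEval_scale_diag (t : ℕ → ℤ) (w : ℕ → ℤ) (r : Row) :
    rowEval t (compR (fun l => [(l, w l)]) r) = rowEval (fun l => w l * t l) r := by
  rw [rowEval_compR]
  apply rowEval_congr
  intro j
  simp [rowEval]

theorem H_of_check (n : ℕ) (c : Cert) (hc : check n c = true) :
    Nonempty (groupCohomology (Rep.trivial ℤ Gam ℤ) (n + 1) ≃+ c.Q) := by
  unfold check checkG at hc
  simp only [Bool.and_eq_true] at hc
  obtain ⟨hA, hB, hC, hM⟩ := hc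
  have hM0 : c.M ≠ 0 := by
    intro h0; rw [h0] at hM; exact absurd hM (by decide)
  have hA1 : ∀ l < c.m.length, allS (fun j => Nat.ble (degC j) (n + 1)) (look c.Pi l) = true ∧
      allDvd (c.mm l) (normR (compR (dRow n) (look c.Pi l))) = true ∧
      zeroR ((l, -1) :: compR (look c.Z) (look c.Pi l)) = true := by
    intro l hl
    simpa only [Bool.and_eq_true] using allUpTo_spec hA l hl
  have hB1 : ∀ j < 64, degC j ≤ n + 2 → zeroR (compR (look c.Z) (dRow (n + 1) j)) = true := by
    intro j hj hd
    have := allUpTo_spec hB j hj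
    rwa [Nat.ble_eq_true_of_le hd, cond_true] at this
  have hC1 : ∀ j < 64, degC j ≤ n + 1 →
      zeroR ((j, -c.M) :: (scaleR c.M (compR (look c.h) (dRow n j) ++
        compR (look c.Pi) (look c.Z j)) ++ compR (dRow (n + 1)) (look c.k j))) = true
      ∧ allS (fun j => Nat.ble (degC j) (n + 2)) (look c.k j) = true
      ∧ allS (fun l => Nat.blt l c.m.length) (look c.Z j) = true
      ∧ zeroR (compR (look c.W) (dRow n j) ++
        compR (fun l => [(l, -(c.mm l : ℤ))]) (look c.Z j)) = true := by
    intro j hj hd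
    have := allUpTo_spec hC j hj
    rw [Nat.ble_eq_true_of_le hd, cond_true] at this
    simpa only [Bool.and_eq_true] using this
  clear hA hB hC hM
  refine lemmaB rhoG rhoG_projective (fun n => SS n) (fun n g => rhoG_SS n g)
    (fun n => DD n) (fun n g x => rhoG_DD n g x) (fun n x hx => DD_mem n (by simpa using hx))
    (fun n x => by simpa using DD_DD_apply n x)
    (fun n => prE n) (fun n g x => rhoG_prE n g x) (fun n x => prE_mem n x)
    (fun n x hx => prE_id n hx) augE augE_rhoG (fun x _ => by simpa using augE_DD x)
    ⟨cel 0 0, cel_mem (by decide), by rw [augE_cel]; decide⟩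
    (fun x hx h => by simpa using exact_zero (by simpa using hx) h)
    (fun n x hx h => by simpa using exact_succ n (by simpa using hx) h) n c.pi ?_ ?_ ?_ ?_
  · intro φ
    funext l
    show ((rowEval _ (look c.Pi l) : ℤ) : ZMod (c.mm l)) = ((rowEval _ (look c.Pi l) : ℤ) : ZMod (c.mm l))
    congr 1
    refine rowEval_allS _ (hA1 l l.2).1 ?_
    intro j hj
    have hj := Nat.le_of_ble_eq_true hj
    show φ (prE _ (cel (pt j) 0)) = _
    rw [prE_cel, if_pos (by rw [degB_pt]; exact_mod_cast hj)]
    rfl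
  · intro φ hφ
    funext l
    show ((rowEval (vecE (φ ∘ₗ DD n)) (look c.Pi l) : ℤ) : ZMod (c.mm l)) = 0
    rw [rowEval_congr (vecE_DD hφ n), ← rowEval_compR, ← rowEval_normR,
      ZMod.intCast_zmod_eq_zero_iff_dvd]
    exact rowEval_allDvd _ _ _ (hA1 l l.2).2.1
  · intro q
    have hlift : ∀ l : Fin c.m.length, ∃ t : ℤ, (t : ZMod (c.mm l)) = q l := fun l =>
      ZMod.intCast_surjective (q l)
    choose t ht using hlift
    let t' : ℕ → ℤ := fun l => if h : l < c.m.length then t ⟨l, h⟩ else 0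
    obtain ⟨φ, hφ, hv⟩ := exists_inv (fun j => rowEval t' (look c.Z j))
      (fun j => by simp only [look_mod])
    refine ⟨φ, hφ, ?_, ?_⟩
    · intro x hx
      have hx' : x ∈ SS ((n + 2 : ℕ) : ℤ) := hx
      have := inv_agree (ψ := 0) (inv_DD hφ ((n + 1 : ℕ) : ℤ)) (fun _ _ => rfl) (n + 2) ?_ x hx'
      · exact this
      · intro j hj hd
        rw [vecE_DD hφ, rowEval_congr hv, ← rowEval_compR, rowEval_zeroR _ (hB1 j hj hd)]
        rfl
    · funext l
      show ((rowEval (vecE φ) (look c.Pi l) : ℤ) : ZMod (c.mm l)) = q l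
      have h1 := rowEval_zeroR t' (hA1 l l.2).2.2
      rw [rowEval, rowEval_compR] at h1
      rw [rowEval_congr hv, ← ht l]
      have h2 : t' l = t l := by simp [t']
      rw [← h2]
      congr 1
      simp only at h1
      linarith
  · intro φ hφ hcoc hpi
    have hdvd : ∀ l : Fin c.m.length, ∃ t : ℤ, rowEval (vecE φ) (look c.Pi l) = (c.mm l : ℤ) * t := by
      intro l
      have h1 : ((rowEval (vecE φ) (look c.Pi l) : ℤ) : ZMod (c.mm l)) = 0 := congrFun hpi l
      rw [ZMod.intCast_zmod_eq_zero_iff_dvd] at h1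
      exact h1
    choose t ht using hdvd
    let t' : ℕ → ℤ := fun l => if h : l < c.m.length then t ⟨l, h⟩ else 0
    have ht' : ∀ l < c.m.length, rowEval (vecE φ) (look c.Pi l) = (c.mm l : ℤ) * t' l := by
      intro l hl
      have := ht ⟨l, hl⟩
      simpa [t', hl] using this
    have hg : ∀ j, Nat.ble (degC j) (n + 2) = true →
        rowEval (vecE φ) (dRow (n + 1) j) = (fun _ => (0 : ℤ)) j := by
      intro j hj
      rw [← eval_DD φ hφ]
      refine hcoc _ (cel_mem ?_)
      rw [degB_pt]
      exact_mod_cast Nat.le_of_ble_eq_true hj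
    obtain ⟨ψ, hψ, hv⟩ := exists_inv
      (fun j => rowEval (vecE φ) (look c.h j) + rowEval t' (look c.W j))
      (fun j => by simp only [look_mod])
    refine ⟨ψ, hψ, ?_⟩
    intro x hx
    have hx' : x ∈ SS ((n + 1 : ℕ) : ℤ) := hx
    refine inv_agree (inv_DD hψ (n : ℤ)) hφ (n + 1) ?_ x hx'
    intro j hj hd
    obtain ⟨c1, c2, c3, c4⟩ := hC1 j hj hd
    have e1 := rowEval_zeroR (vecE φ) c1
    have e4 := rowEval_zeroR t' c4
    rw [rowEval, rowEval_append, rowEval_scaleR, rowEval_append, rowEval_compR, rowEval_compR,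
      rowEval_compR, rowEval_allS _ c2 hg] at e1
    rw [rowEval_append, rowEval_scale_diag, rowEval_compR] at e4
    have e0 : ∀ r, rowEval (fun _ => (0 : ℤ)) r = 0 := by
      intro r
      induction r with
      | nil => rfl
      | cons p t ih => simp [rowEval, ih]
    have e3 : rowEval (fun j => rowEval (vecE φ) (look c.Pi j)) (look c.Z j)
        = rowEval (fun l => (c.mm l : ℤ) * t' l) (look c.Z j) :=
      rowEval_allS _ c3 fun l hl => ht' l (Nat.le_of_ble_eq_true hl)
    have e5 : rowEval (fun l => -(c.mm l : ℤ) * t' l) (look c.Z j)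
        = - rowEval (fun l => (c.mm l : ℤ) * t' l) (look c.Z j) := by
      rw [← neg_one_mul, ← rowEval_smul]
      apply rowEval_congr
      intro l; ring
    rw [e0, e3] at e1
    rw [e5] at e4
    rw [vecE_DD hψ, rowEval_congr hv, rowEval_add]
    have e6 : c.M * (rowEval (fun j => rowEval (vecE φ) (look c.h j)) (dRow n j)
      + rowEval (fun l => (c.mm l : ℤ) * t' l) (look c.Z j) - vecE φ j) = 0 := by
      linear_combination e1
    rcases mul_eq_zero.1 e6 with e7 | e7
    · exact absurd e7 hM0
    · linear_combination e7 + e4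

theorem check_periodic (n : ℕ) (c : Cert) (hn : 5 ≤ n) : check (n + 2) c = check n c := by
  have h1 : ∀ m, 5 ≤ m → dRow (m + 2) = dRow m := by
    intro m hm
    funext j
    have hd := degC_le j
    unfold dRow
    have a1 : Nat.ble (m + 2 + 1) (degC j) = false := by
      rw [← Bool.not_eq_true, Nat.ble_eq]; omega
    have a2 : Nat.ble (m + 1) (degC j) = false := by
      rw [← Bool.not_eq_true, Nat.ble_eq]; omega
    have a3 : (m + 2 + 1 - degC j) % 2 = (m + 1 - degC j) % 2 := by omega
    rw [a1, a2, a3]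
  have h2 : ∀ m, 5 ≤ m → (fun j => Nat.ble (degC j) m) = fun _ => true := by
    intro m hm
    funext j
    exact Nat.ble_eq_true_of_le ((degC_le j).trans hm)
  unfold check
  rw [h2 _ (by omega), h2 _ (by omega), h2 (n + 1) (by omega), h2 (n + 2) (by omega), h1 n hn,
    show n + 2 + 1 = n + 1 + 2 by ring, h1 (n + 1) (by omega)]

theorem H_periodic (n : ℕ) (hn : 5 ≤ n) (c : Cert) (hc : check n c = true) (t : ℕ) :
    Nonempty (groupCohomology (Rep.trivial ℤ Gam ℤ) (n + 2 * t + 1) ≃+ c.Q) := by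
  apply H_of_check
  induction t with
  | zero => exact hc
  | succ t ih =>
    rw [show n + 2 * (t + 1) = n + 2 * t + 2 by ring, check_periodic _ _ (by omega)]
    exact ih

/-! ### Certificates in degrees one to seven -/

def cert1 : Cert where
  M := 8
  m := []
  Pi := []
  Z := []
  W := []
  h := [
    [(16, -1)]]
  k := [
    [(0, 1)], [(1, 10), (2, -4), (4, -4), (8, -4), (16, -4), (17, 4), (33, -6)],
    [(1, 12), (4, -8), (8, -8), (16, -8), (33, -12)], [], [(1, 8), (8, -8), (16, -8), (33, -8)],
    [], [], [], [(1, 4), (16, -8), (33, -4)], [], [], [], [], [], [], [], [], [], [], [], [], [],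
    [], [], [], [], [], [], [], [], [], [], [(0, 1), (1, 4), (33, -4)],
    [(1, -6), (2, 4), (4, 4), (8, 4), (16, 4), (17, -4), (33, 10)],
    [(1, -28), (2, 8), (4, 8), (8, 8), (16, 8), (33, 28), (36, -8), (40, -8), (48, -8)], [],
    [(1, -24), (2, 8), (4, 8), (8, 8), (16, 8), (33, 24), (40, -8), (48, -8)], [], [], [],
    [(1, -20), (2, 8), (4, 8), (8, 8), (16, 8), (33, 20), (48, -8)], [], [], [], [], [], [], [],
    [(1, -16), (2, 8), (4, 8), (8, 8), (16, 8), (33, 16)]]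

theorem check1 : check 0 cert1 = true := by decide +kernel

def cert2 : Cert where
  M := 1
  m := [0, 0, 8, 4]
  Pi := [
    [(1, -1), (4, 1), (6, 1), (33, 1), (36, -1)],
    [(4, -1), (6, -2), (8, 1), (10, 1), (36, 1), (40, -1)], [(32, 1)],
    [(1, -2), (2, 2), (4, 1), (5, 2), (6, -1), (36, 1), (40, 2), (48, -2)]]
  Z := [
    [(0, 4), (2, 1), (3, 4)], [], [], [(0, 1)], [], [], [], [], [], [(0, -1), (3, -1)],
    [(1, 1), (3, -1)], [], [(3, -1)], [], [], [], [], [(0, -2), (3, -2)], [(0, -2), (3, -2)], [],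
    [(1, 1), (3, -2)], [], [], [], [(3, -1)], [], [], [], [], [], [], [], [(2, 1)],
    [(0, 1), (3, 1)], [(0, 4), (3, 3)], [(0, -1)], [(3, 1)], [], [(0, 2)], [], [],
    [(0, 1), (3, 1)], [(0, 4), (1, 1), (3, 1)], [], [(0, 2), (3, 1)], [], [], [], [],
    [(0, 2), (3, 2)], [(0, 4), (3, 2)], [], [(0, 4), (1, 1), (3, 2)], [], [], [],
    [(0, 2), (3, 1)]]
  W := [
    [(2, 1), (3, 2)], [(3, 2)], [(3, 3)], [], [(3, 5)], [], [], [], [(3, 7)], [], [], [], [], [],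
    [], [], [(3, 9)], [], [], [], [], [], [], [], [], [], [], [], [], [], [], [], [(2, 1)], [],
    [(3, 1)], [], [(3, 3)], [], [], [], [(3, 1)], [], [], [], [], [], [], [], [(3, -1)]]
  h := [
    [(1, 1), (2, -1), (4, -1), (5, -1), (40, -1), (48, 1)],
    [(1, 2), (2, -1), (4, -1), (5, -1), (40, -1), (48, 1)],
    [(1, 2), (2, -1), (4, -2), (5, -2), (40, -2), (48, 1)], [],
    [(1, 3), (2, -2), (4, -2), (5, -3), (40, -3), (48, 2)], [], [], [],
    [(1, 4), (2, -3), (4, -3), (5, -4), (8, 1), (40, -4), (48, 3)], [], [], [], [], [], [], [],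
    [(1, 5), (2, -4), (4, -4), (5, -5), (8, 1), (16, 1), (40, -5), (48, 4)], [], [], [], [], [],
    [], [], [], [], [], [], [], [], [], [], [], [], [(4, -1), (6, -1), (40, -1)], [],
    [(1, 1), (2, -1), (4, -1), (5, -1), (40, -2), (48, 1)], [], [], [], [], [], [], [], [], [],
    [], [], [(1, -1), (2, 1), (4, 1), (5, 1), (40, 1)]]
  k := [
    [(1, -1)], [], [], [(1, -1), (3, -1), (17, -1), (40, -1), (41, 1)], [], [], [], [], [],
    [(1, -1), (3, -1), (9, -1), (17, -1), (37, 1), (40, -1), (41, 1)], [], [], [(12, -1)], [], [],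
    [], [], [(17, -1), (41, 1)],
    [(1, 1), (12, -1), (17, 1), (18, -1), (24, -1), (25, 1), (40, 1), (49, -1)], [], [(20, -1)],
    [], [], [], [(12, -1), (24, -1)], [], [], [], [], [], [], [], [], [], [(1, -1), (40, -1)],
    [(5, -1)], [], [(1, 1), (3, 1), (17, 1), (37, -1), (40, 1), (41, -1)],
    [(12, -1), (17, 1), (24, -1), (25, 1), (44, 1), (49, -1), (56, 1)], [], [], [(41, -1)],
    [(1, -1), (10, 1), (40, -1), (52, 1)], [],
    [(12, -1), (17, 1), (24, -1), (25, 1), (49, -1), (56, 1)], [], [], [], [],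
    [(1, 1), (3, 1), (9, 1), (17, 1), (37, -1), (40, 1), (41, -1), (49, -1)],
    [(1, -1), (12, -1), (24, -1), (40, -1), (50, -1)], [], [(1, -1), (10, 1), (40, -1)], [], [],
    [], [(12, -1), (17, 1), (24, -1), (25, 1), (49, -1)]]

theorem check2 : check 1 cert2 = true := by decide +kernel

def cert3 : Cert where
  M := 8
  m := [0, 0]
  Pi := [
    [(1, 1), (5, 1), (9, 1), (11, 1), (20, 1), (36, 1), (37, -1), (41, -1), (42, 1)],
    [(9, 1), (13, 1), (17, -1), (24, 1), (25, -1), (41, -1), (49, 1), (56, -1)]]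
  Z := [
    [], [], [], [], [], [], [], [], [], [], [(0, -1)], [], [], [(1, 1)], [(0, 1), (1, 1)], [], [],
    [], [], [], [], [(0, -2)], [(0, -1), (1, 1)], [], [], [], [(0, -1), (1, 1)], [],
    [(0, 1), (1, 1)], [], [], [], [], [], [], [], [], [], [], [(1, -1)], [], [], [(0, 1)],
    [(0, 2)], [], [], [(0, -1), (1, -1)], [], [], [], [], [(1, 1)], [], [], [(0, 1), (1, -1)], [],
    [], [(1, -1)], [(0, 1), (1, -1)], [], [(0, -1), (1, -1)]]
  W := []
  h := [
    [(1, -1)], [], [], [], [], [(3, 1), (17, 1), (41, -1)],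
    [(1, -1), (12, 1), (17, -1), (24, 1), (25, -1), (36, -1), (49, 1), (56, -1)], [], [],
    [(1, -1), (9, -1), (36, -1), (37, 1)],
    [(1, -2), (5, -1), (9, -1), (11, -1), (36, -2), (37, 1), (41, 1)], [],
    [(17, -1), (24, 1), (25, -1), (49, 1), (56, -1)], [], [], [], [], [(3, 1)],
    [(18, -1), (56, -1)], [],
    [(1, -1), (5, -1), (9, -1), (11, -1), (20, -1), (36, -1), (37, 1), (41, 1)], [], [], [],
    [(17, -1), (25, -1), (49, 1), (56, -1)], [], [], [], [], [], [], [], [], [], [],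
    [(1, -1), (3, -1), (5, -1), (17, -1), (36, -1), (41, 1)], [(1, -1), (36, -1)],
    [(1, 1), (36, 1), (37, -1)], [(1, 1), (36, 1), (44, 1)], [], [], [(3, -1), (17, -1)], [], [],
    [], [], [], [], [], [(1, 1), (9, 1), (36, 1), (37, -1), (49, -1)],
    [(17, -1), (25, -1), (49, 1), (50, -1), (56, -1)], [], [(1, -1), (36, -1), (52, -1)], [], [],
    [], [(56, -1)]]
  k := [
    [(0, 1)], [], [(2, 8), (5, 12), (8, -12), (40, 4), (41, 12), (48, -8)], [],
    [(2, 8), (7, 16), (8, -8), (18, -8), (19, -16), (24, 8), (25, 16), (36, 8), (45, -16),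
      (48, -8)], [], [(5, 4), (12, 4), (41, 4)], [(25, -8), (45, 8)],
    [(2, 8), (5, 4), (7, 16), (8, -4), (18, -8), (19, -16), (24, 8), (25, 16), (36, 8), (40, 4),
      (41, 4), (45, -16), (48, -8)], [],
    [(7, -8), (18, 4), (19, 8), (24, -4), (25, -8), (42, 4), (45, 8)], [], [], [],
    [(1, -4), (2, -4), (5, -6), (7, -12), (8, 6), (11, -4), (14, 4), (18, 2), (19, 12), (24, -2),
      (25, -16), (26, 4), (28, -4), (29, -4), (36, -4), (40, -2), (41, -2), (42, -2), (45, 12),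
      (48, 4), (53, 4), (54, -4), (57, -4)], [],
    [(2, 8), (5, 8), (7, 16), (12, 8), (18, -8), (19, -16), (25, 16), (36, 8), (41, 8),
      (45, -16)], [], [],
    [(1, 8), (2, 8), (5, 12), (7, 16), (8, -12), (18, -8), (19, -8), (24, 8), (25, 16), (36, 8),
      (40, 4), (41, 4), (45, -16), (48, -8)], [],
    [(1, 8), (2, 8), (5, 12), (7, 8), (8, -12), (11, 8), (18, -4), (19, -8), (24, 4), (25, 8),
      (36, 8), (40, 4), (41, 4), (42, 4), (45, -8), (48, -8)],
    [(1, -4), (2, -4), (5, -6), (7, -28), (8, 6), (11, -4), (14, 4), (18, 6), (19, 28), (22, 8),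
      (24, -6), (25, -32), (26, 4), (28, 4), (29, -4), (36, -4), (40, -2), (41, -2), (42, 2),
      (45, 28), (48, 4), (53, 4), (54, -4), (57, -4), (58, -8)], [], [], [],
    [(1, -4), (2, -4), (5, -6), (7, -4), (8, 6), (11, -4), (14, -4), (18, 6), (19, 4), (24, -6),
      (25, -8), (26, 4), (28, -4), (29, -4), (36, -4), (40, -2), (41, -2), (42, 2), (45, 4),
      (48, 4), (53, 4), (54, 4), (57, -4)], [],
    [(1, -4), (2, -4), (5, -6), (7, -12), (8, 6), (11, -4), (14, 4), (18, 2), (19, 12), (24, -2),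
      (25, -16), (26, 4), (28, 4), (29, -4), (36, -4), (40, -2), (41, -2), (42, -2), (45, 12),
      (48, 4), (53, 4), (54, -4), (57, -4)], [], [], [],
    [(0, 1), (5, -4), (8, 4), (40, -4), (41, -4)], [(1, 8), (5, 4), (8, -4), (40, 4), (41, 4)],
    [(5, 4), (8, -4), (36, -8), (40, 4), (41, 4)],
    [(1, -8), (2, -8), (5, -12), (7, -16), (8, 12), (18, 8), (19, 16), (24, -8), (25, -16),
      (36, -8), (40, -4), (41, -4), (45, 16), (48, 8)], [], [],
    [(5, 4), (7, 8), (12, 4), (19, -8), (25, 8), (41, 4), (45, -8)], [(13, 8)],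
    [(5, -4), (8, 4), (40, 4), (41, -4)], [], [],
    [(1, -8), (2, -8), (5, -12), (7, -8), (8, 12), (11, -8), (18, 4), (19, 8), (21, 8), (24, -4),
      (25, -8), (36, -8), (40, -4), (41, -4), (42, -4), (45, 8), (48, 8)], [], [(25, 8)],
    [(1, 4), (2, 4), (5, 6), (7, -4), (8, -6), (11, 4), (14, 4), (18, -2), (19, 4), (24, 2),
      (26, 4), (28, 4), (29, 4), (36, 4), (40, 2), (41, 2), (42, 2), (45, 4), (48, -4), (53, -4),
      (54, -4), (57, 4), (60, -8)], [], [(5, -8), (8, 8), (41, -8), (48, 8)], [], [],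
    [(1, -8), (2, -8), (5, -12), (7, -16), (8, 12), (18, 8), (19, 16), (24, -8), (25, -16),
      (36, -8), (40, -4), (41, -4), (45, 16), (48, 8), (51, 8), (57, -8)], [], [(53, 8)],
    [(1, 4), (2, 4), (5, 6), (7, 12), (8, -6), (11, 4), (14, 4), (18, -6), (19, -12), (24, 6),
      (25, 16), (26, -4), (28, 4), (29, 4), (36, 4), (40, 2), (41, 2), (42, -2), (45, -12),
      (48, -4), (53, -4), (54, 4), (57, 4)], [], [], [(57, 8)],
    [(1, 4), (2, 4), (5, 6), (7, 20), (8, -6), (11, 4), (14, -4), (18, -6), (19, -20), (24, 6),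
      (25, 24), (26, -4), (28, -4), (29, 4), (36, 4), (40, 2), (41, 2), (42, -2), (45, -20),
      (48, -4), (53, -4), (54, 4), (57, 4), (58, 8)], [],
    [(1, 4), (2, 4), (5, 6), (7, -4), (8, -6), (11, 4), (14, 4), (18, -2), (19, 4), (24, 2),
      (26, 4), (28, 4), (29, 4), (36, 4), (40, 2), (41, 2), (42, 2), (45, 4), (48, -4), (53, -4),
      (54, -4), (57, 4)]]

theorem check3 : check 2 cert3 = true := by decide +kernel

def cert4 : Cert where
  M := 2
  m := [0, 8, 4, 2, 2]
  Pi := [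
    [(7, 2), (19, -2), (22, -1), (25, 2), (28, -1), (45, -2), (54, 1), (60, 1), (62, 1)],
    [(0, 1), (16, 4), (41, 4), (48, -4), (49, -4)],
    [(1, -2), (2, 2), (4, 2), (7, -4), (8, 1), (11, 2), (14, 2), (16, -2), (19, 4), (20, -1),
      (25, -6), (26, 2), (28, 2), (29, 2), (40, 1), (41, -3), (45, 4), (49, 1), (53, -2),
      (54, -2), (57, 2), (60, -4)], [(16, -1), (41, -1), (48, 1), (49, 1)],
    [(4, 1), (6, 1), (16, -1), (36, -1), (41, -1), (48, 1), (49, 1)]]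
  Z := [
    [(1, 1), (3, 4)], [], [], [(3, 3)], [], [(3, 2)], [(3, -1), (4, 1)], [], [], [(3, 1)],
    [(2, -1), (3, 3)], [], [(3, -1), (4, 1)], [], [], [], [], [], [(3, -3), (4, 1)], [],
    [(2, -1), (3, 3)], [], [], [], [(3, -1), (4, 1)], [], [], [], [], [], [(0, 1)], [], [(1, 1)],
    [(3, 1)], [(3, 4)], [(3, -3)], [], [(3, -2)], [(3, 1), (4, 1)], [], [], [(3, -1)],
    [(2, -1), (3, 7)], [], [(3, 1), (4, 1)], [], [], [], [], [], [(3, 3), (4, 1)], [],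
    [(2, -1), (3, 7)], [], [], [], [(3, 1), (4, 1)], [], [], [], [], [], [(0, 1)]]
  W := [
    [(1, 1), (3, 1)], [(3, 1)], [(2, -1), (3, 2)], [], [(2, -1), (3, 3)], [], [], [],
    [(2, -1), (3, 4)], [], [], [], [], [], [], [], [(2, -1), (3, 5)], [], [], [(4, -1)],
    [(2, -2), (3, 5)], [], [(4, 1)], [], [(4, 1)], [(2, 2), (3, -5), (4, 1)],
    [(2, 2), (3, -5), (4, 2)], [], [(2, 2), (3, -5), (4, 1)], [], [], [], [(1, 1)], [],
    [(2, 1), (3, 2)], [], [(2, 1), (3, 1)], [], [(4, 1)], [], [(2, 1)], [], [], [], [], [], [],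
    [], [(2, 1), (3, -1)], [(2, 2), (3, -5)], [], [(4, 1)], [], [], [(4, -1)], [], [],
    [(2, -2), (3, 5), (4, -1)], [(2, -2), (3, 5), (4, -2)], [], [(2, -2), (3, 5), (4, -1)]]
  h := [
    [], [(1, 1)], [(2, 1), (48, -1)], [], [(2, 1), (4, 1), (48, -1)], [], [], [(45, 1)],
    [(2, 1), (4, 1), (8, 1), (48, -1)], [], [],
    [(7, 2), (14, -1), (19, -2), (21, -1), (25, 3), (26, -1), (28, -1), (29, -1), (45, -2),
      (53, 1), (54, 1), (57, -1), (60, 2)], [], [],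
    [(7, -2), (14, 1), (19, 2), (25, -2), (26, 1), (45, 2), (54, -1), (60, -1)], [],
    [(2, 1), (4, 1), (8, 1), (16, 1), (48, -1)], [], [], [(19, 1), (25, -1)],
    [(1, -1), (2, 1), (4, 1), (7, -2), (8, 1), (11, 1), (14, 1), (16, 1), (19, 2), (25, -3),
      (26, 1), (28, 1), (29, 1), (45, 2), (48, -2), (49, -1), (53, -1), (54, -1), (57, 1),
      (60, -2)],
    [(7, -2), (11, 1), (14, 1), (19, 2), (21, 1), (25, -3), (26, 1), (28, 1), (29, 1), (45, 2),
      (53, -1), (54, -1), (57, 1), (60, -2)], [(7, 1), (19, -1), (25, 1), (45, -1), (46, 1)], [],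
    [], [(1, 1), (2, -1), (4, -1), (8, -1), (16, -1), (25, 1), (48, 2), (49, 1)],
    [(1, 1), (2, -1), (4, -1), (7, 2), (8, -1), (11, -1), (14, -1), (16, -1), (19, -2), (25, 3),
      (28, -1), (29, -1), (45, -2), (48, 2), (49, 1), (53, 1), (54, 1), (57, -1), (60, 1)], [],
    [(1, 1), (2, -1), (4, -1), (8, -1), (11, -1), (16, -1), (25, 1), (29, -1), (48, 2), (49, 1),
      (53, 1), (57, -1), (60, 1)], [], [], [], [], [], [(36, -1), (40, -1)], [], [(40, -1)], [],
    [(7, 1), (19, -1), (25, 1), (45, -1)], [(13, 1)], [], [], [], [], [], [], [], [], [(48, 1)],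
    [(1, 1), (2, -1), (4, -1), (8, -1), (16, -1), (48, 2), (49, 1)], [], [(51, 1), (57, -1)], [],
    [(11, -1), (21, 1), (53, 1)],
    [(7, 1), (19, -1), (25, 1), (26, -1), (45, -1), (54, 1), (60, 1)], [], [],
    [(1, -1), (2, 1), (4, 1), (8, 1), (16, 1), (48, -2), (49, -1), (57, 1)],
    [(1, -1), (2, 1), (4, 1), (7, -4), (8, 1), (11, 1), (14, 1), (16, 1), (19, 4), (22, 1),
      (25, -5), (26, 1), (28, 1), (29, 1), (45, 4), (46, -1), (48, -2), (49, -1), (53, -1),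
      (54, -1), (57, 1), (60, -2)], [],
    [(1, -1), (2, 1), (4, 1), (7, -2), (8, 1), (11, 1), (14, 1), (16, 1), (19, 2), (25, -3),
      (26, 1), (28, 1), (29, 1), (45, 2), (48, -2), (49, -1), (53, -1), (54, -1), (57, 1),
      (60, -1)]]
  k := [
    [], [], [], [(3, -6), (9, -4), (17, -6), (33, 6), (37, 4), (48, -6), (49, 4)], [],
    [(3, -2), (9, -2), (17, -2), (33, 2), (37, 2), (41, -2), (48, -2), (49, 2)], [], [], [],
    [(3, -2), (9, -2), (17, -2), (33, 2), (37, 2), (48, -2)], [(20, 2)], [], [(12, -2)], [], [],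
    [(23, -2), (30, 2), (31, -2), (47, -2), (59, -2)], [],
    [(3, 2), (9, 2), (33, -2), (37, -2), (48, 2), (49, -2)],
    [(3, 4), (9, 4), (12, -2), (17, 6), (24, -2), (25, 2), (33, -6), (37, -4), (38, 2), (44, 2),
      (48, 6), (49, -6), (56, 2)], [], [], [], [],
    [(9, -1), (17, -3), (21, -1), (23, -1), (24, 1), (25, -2), (27, -2), (28, 1), (29, 1),
      (30, -1), (31, 1), (33, 2), (41, 1), (42, -2), (48, -2), (49, 3), (52, -2), (55, -1),
      (56, -1), (61, -1)], [(12, -2), (24, -2)], [], [],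
    [(9, -1), (17, -5), (21, -1), (24, 2), (25, -4), (27, -2), (28, 2), (33, 3), (41, 1),
      (42, -3), (48, -3), (49, 5), (52, -3), (56, -2)], [], [],
    [(17, 4), (24, -2), (25, 4), (28, -2), (30, -2), (33, -2), (42, 2), (48, 2), (49, -4),
      (52, 2), (56, 2)], [], [(3, 8), (9, 8), (17, 8), (33, -10), (37, -8), (48, 8), (49, -8)],
    [(3, -2), (9, -2), (17, -2), (33, 2), (37, 2), (48, -2), (49, 2)],
    [(3, -8), (9, -8), (17, -8), (33, 10), (37, 8), (48, -10), (49, 8)],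
    [(3, 4), (5, -2), (9, 4), (17, 4), (33, -4), (37, -4), (41, 2), (48, 4), (49, -4)], [],
    [(3, 4), (9, 2), (17, 4), (33, -4), (37, -4), (48, 4), (49, -2)],
    [(3, -4), (9, -4), (12, -2), (17, -2), (24, -2), (25, 2), (33, 4), (37, 4), (44, 2),
      (48, -4), (49, 2), (56, 2)],
    [(17, -2), (23, -1), (24, 1), (25, -2), (28, 1), (29, -1), (30, 1), (31, -1), (33, 1),
      (42, -1), (48, -1), (49, 2), (52, -1), (55, 1), (56, -1), (61, 1)], [], [],
    [(3, -8), (9, -8), (17, -8), (33, 10), (37, 8), (42, -2), (48, -10), (49, 8)],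
    [(9, 1), (17, 1), (21, 1), (33, -1), (41, -1), (42, 1), (48, 1), (49, -1), (52, 1)],
    [(3, -4), (9, -4), (12, -2), (17, -2), (24, -2), (25, 2), (33, 4), (37, 4), (48, -4),
      (49, 2), (56, 2)], [], [], [(29, -2)], [], [],
    [(3, -8), (9, -8), (12, -2), (17, -8), (24, -2), (33, 10), (37, 8), (48, -10), (49, 8),
      (50, -2)], [],
    [(3, -8), (9, -8), (17, -8), (33, 10), (37, 8), (42, -2), (48, -10), (49, 8), (52, -2)], [],
    [],
    [(9, 1), (17, 3), (21, 1), (23, 1), (24, -1), (25, 2), (28, -1), (29, -1), (30, -1), (31, 1),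
      (33, -2), (41, -1), (42, 2), (47, 2), (48, 2), (49, -3), (52, 2), (55, -1), (56, 1),
      (61, -1)],
    [(3, -4), (9, -4), (12, -2), (17, -2), (24, -2), (25, 2), (33, 4), (37, 4), (48, -4),
      (49, 2)], [],
    [(17, -4), (24, 2), (25, -4), (28, 2), (33, 2), (42, -2), (48, -2), (49, 4), (52, -2),
      (56, -2)],
    [(9, 1), (17, 5), (21, 1), (23, 2), (24, -2), (25, 4), (28, -2), (30, -2), (31, 2), (33, -3),
      (41, -1), (42, 3), (47, 2), (48, 3), (49, -5), (52, 3), (56, 2), (61, -2)], [],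
    [(23, 2), (30, -2), (31, 2), (47, 2), (59, 2), (61, -2)]]

theorem check4 : check 3 cert4 = true := by decide +kernel

def cert5 : Cert where
  M := 8
  m := [2, 2]
  Pi := [
    [(1, -1), (9, -1), (10, 1), (17, -1), (20, 1), (21, -1), (34, -1), (41, 1), (49, 1)],
    [(1, -1), (10, 1), (17, -2), (20, 1), (23, -1), (24, 1), (25, -2), (28, 1), (29, -1),
      (30, 1), (31, -1), (34, -1), (49, 2), (55, 1), (56, -1), (61, 1)]]
  Z := [
    [], [], [], [], [], [], [], [], [], [], [], [(0, 1)], [], [(1, 1)], [(1, 1)], [], [], [], [],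
    [], [], [(0, -1)], [(1, 1)], [], [], [], [(1, 1)], [], [(1, 1)], [], [], [], [], [], [], [],
    [], [], [], [(1, -1)], [], [], [], [(0, 1)], [], [], [(1, -1)], [], [], [], [], [(1, 1)], [],
    [(0, -1)], [(1, -1)], [], [], [(1, -1)], [(1, -1)], [], [(1, -1)]]
  W := [
    [], [], [], [], [], [], [], [], [], [], [], [], [], [], [], [], [], [], [(1, 2)], [], [],
    [(0, 1)], [], [], [], [(1, 1)], [], [(0, -1)], [(1, 2)], [(0, -1), (1, -1)], [(1, -2)], [],
    [], [], [], [], [], [], [(1, 2)], [], [], [], [], [], [(1, 2)], [], [], [], [], [], [], [],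
    [], [], [], [], [(1, 2)], [], [], [(0, 1)], [], [(0, 1), (1, 1)]]
  h := [
    [(1, -1)], [], [], [], [], [(1, -1), (5, -1), (9, -1), (34, -1), (35, 1), (37, 1), (49, 1)],
    [(12, 1)], [], [], [(9, -1), (37, 1)], [], [], [], [], [],
    [(15, -1), (27, -1), (30, -1), (31, 1), (47, 1), (55, -1), (61, -1)], [],
    [(1, -1), (5, -1), (9, -1), (17, -1), (34, -1), (35, 1), (37, 1), (41, 1), (49, 1)],
    [(1, 1), (17, 1), (18, -1), (24, -1), (25, 1), (34, 1), (49, -1)], [], [(20, -1)], [], [],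
    [(27, -1), (30, -1), (31, 1), (47, 1), (55, -1), (61, -1)], [(24, -1)], [], [],
    [(23, 1), (27, -1), (30, -1), (31, 1), (47, 1), (55, -1), (61, -1)],
    [(23, -1), (29, -1), (30, 1), (31, -1), (55, 1), (61, 1)],
    [(23, 1), (30, -1), (31, 1), (47, 1), (55, -1), (61, -1)],
    [(23, 1), (29, 1), (30, -2), (31, 1), (55, -1), (61, -1)], [], [], [], [(1, -1), (34, -1)],
    [(1, 1), (9, 1), (34, 1), (35, -1), (37, -1), (49, -1)], [], [(37, -1)],
    [(17, 1), (24, -1), (25, 1), (44, 1), (49, -1), (56, 1)], [], [],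
    [(1, 1), (5, 1), (9, 1), (34, 1), (35, -1), (37, -1), (41, -1), (49, -1)],
    [(1, -1), (10, 1), (34, -1), (52, 1)], [], [(17, 1), (24, -1), (25, 1), (49, -1), (56, 1)],
    [], [], [(47, -1)], [], [(9, 1), (37, -1), (49, -1)], [(1, -1), (24, -1), (34, -1), (50, -1)],
    [], [(1, -1), (10, 1), (34, -1)], [], [], [], [(17, 1), (24, -1), (25, 1), (49, -1)], [], [],
    [(55, 1)], [],
    [(15, 1), (23, -1), (27, 1), (29, -1), (30, 2), (31, -2), (47, -1), (55, 2), (61, 1)]]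
  k := [
    [(0, 1)], [], [(2, 8), (5, 8), (8, -8), (16, -8), (17, -8), (36, -8)],
    [(1, 8), (2, 8), (3, 8), (5, 12), (8, -12), (9, -4), (16, -8), (17, -8), (36, -8), (40, 4)],
    [(2, 8), (3, 8), (5, -4), (8, -4), (9, 4), (16, -8), (17, -8), (40, -4)], [],
    [(5, -4), (7, -8), (9, 4), (19, 8), (25, -8), (44, 4), (45, 8)], [(25, -8), (45, 8)],
    [(2, 8), (3, 8), (16, -8), (17, -8)], [], [],
    [(1, 8), (2, 8), (3, 8), (5, 8), (8, -12), (9, -4), (11, 8), (16, -8), (17, -4), (20, -4),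
      (36, -8), (40, 4)], [],
    [(1, 4), (2, 4), (3, 4), (5, 4), (7, -6), (8, -6), (9, -2), (11, 4), (16, -4), (17, -2),
      (19, 6), (20, -2), (22, 3), (25, -2), (28, -1), (29, 4), (30, -1), (31, 4), (36, -4),
      (40, 2), (45, 6), (46, -4), (53, -4), (54, 1), (57, 4), (58, -4), (60, -3)], [(28, -8)], [],
    [(2, 8), (3, 8), (5, 4), (8, -4), (9, -4), (17, -8), (40, 4)], [], [],
    [(1, 8), (2, 8), (3, 8), (5, 12), (8, -12), (9, -4), (16, -8), (17, -8), (19, 8), (36, -8),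
      (40, 4)], [], [],
    [(5, -4), (7, -8), (17, 4), (19, 8), (20, -4), (22, 8), (25, -8), (45, 8), (58, -8)], [], [],
    [],
    [(5, -4), (7, -16), (17, 4), (19, 16), (20, -4), (22, 8), (25, -16), (26, 8), (45, 16),
      (46, -8), (58, -8), (60, -8)], [], [], [], [], [],
    [(0, 1), (5, -4), (8, 4), (9, 4), (40, -4)], [(1, 8), (5, 4), (8, -4), (9, -4), (40, 4)], [],
    [], [(5, -4), (8, 4), (9, 4), (36, 8), (40, -4)], [], [(5, -4), (9, 4), (44, 4)],
    [(1, -4), (2, -4), (3, -4), (5, -4), (7, 6), (8, 6), (9, 2), (11, -4), (13, 8), (16, 4),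
      (17, 2), (19, -6), (20, 2), (22, -3), (25, 2), (28, 1), (29, -4), (30, 1), (31, -4),
      (36, 4), (40, -2), (45, -6), (46, 4), (53, 4), (54, -1), (57, -4), (58, 4), (60, 3)],
    [(5, -8), (8, 8), (9, 8), (36, 8)], [], [(5, 4), (17, -4), (20, 4)], [(21, 8)], [], [(25, 8)],
    [(7, 16), (19, -16), (22, -8), (25, 16), (45, -16), (46, 8), (58, 8)], [],
    [(5, -4), (8, 4), (9, -4), (16, 8), (17, 8), (36, 8), (40, 4)], [], [],
    [(1, -4), (2, -4), (3, -4), (5, -8), (7, -6), (8, 6), (9, 2), (11, 4), (16, 4), (17, 6),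
      (19, 6), (20, -2), (22, 3), (25, -2), (28, -1), (29, 4), (30, -1), (31, 4), (36, 4),
      (40, -2), (45, 6), (46, -4), (51, 8), (53, -4), (54, 1), (57, -4), (58, -4), (60, -3)], [],
    [(1, -8), (2, -8), (3, -8), (5, -8), (8, 12), (9, 4), (11, -8), (16, 8), (17, 4), (20, 4),
      (36, 8), (40, -4), (53, 8)],
    [(5, 4), (7, 24), (17, -4), (19, -24), (20, 4), (22, -8), (25, 24), (26, -8), (45, -24),
      (46, 8), (54, 8), (58, 8), (60, 8)], [], [],
    [(1, -4), (2, -4), (3, -4), (5, -4), (7, 6), (8, 6), (9, 2), (11, -4), (16, 4), (17, 2),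
      (19, -6), (20, 2), (22, -3), (25, 2), (28, 1), (29, -4), (30, 1), (31, -4), (36, 4),
      (40, -2), (45, -6), (46, 4), (53, 4), (54, -1), (57, 4), (58, 4), (60, 3)],
    [(5, 4), (17, -4), (20, 4), (58, 8)],
    [(7, 4), (19, -4), (22, -2), (25, 4), (28, -2), (30, -2), (31, 8), (45, -4), (54, 2),
      (60, 2)], [(7, 16), (19, -16), (22, -8), (25, 16), (45, -16), (46, 8), (58, 8), (60, 8)],
    [], [(7, -4), (19, 4), (22, 2), (25, -4), (28, 2), (30, 2), (45, 4), (54, -2), (60, -2)],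
    [(31, 4), (63, 4)]]

theorem check5 : check 4 cert5 = true := by decide +kernel

def cert6 : Cert where
  M := 2
  m := [8, 8, 2, 2, 2, 2]
  Pi := [
    [(8, -4), (9, -4), (32, 1), (37, -4), (40, 4)],
    [(1, 4), (2, -4), (4, -4), (7, 6), (9, -2), (11, -4), (14, -4), (16, 2), (19, -6), (20, 2),
      (22, 1), (25, 10), (26, -4), (28, -3), (29, -4), (30, 1), (31, 4), (37, 2), (40, -4),
      (45, -6), (48, 2), (53, 4), (54, 3), (57, -4), (60, 7)], [(31, 1), (63, 1)],
    [(8, 1), (9, 1), (37, 1), (40, -1)],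
    [(4, -1), (8, 1), (9, 1), (36, 1), (37, 1), (38, 1), (40, -1)],
    [(1, -2), (2, 2), (4, 2), (9, 1), (11, 2), (16, -1), (20, -1), (21, -2), (37, -1), (40, 2),
      (48, -1)]]
  Z := [
    [(0, 1)], [], [], [(3, -2)], [], [(3, -1)], [(3, 1), (4, 1)], [], [], [], [(3, -1), (5, -1)],
    [], [(3, 1), (4, 1)], [], [], [], [], [(3, 1)], [(3, 3), (4, 1)], [], [(3, -1), (5, -1)], [],
    [], [], [(3, 1), (4, 1)], [], [], [], [], [], [(1, 1), (5, 2)], [], [(0, 1), (3, 4)],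
    [(3, -1)], [(3, -4)], [(3, 2)], [], [(3, 1)], [(3, -1), (4, 1)], [], [], [],
    [(3, -5), (5, -1)], [], [(3, -1), (4, 1)], [], [], [], [], [(3, -1)], [(3, -3), (4, 1)], [],
    [(3, -5), (5, -1)], [], [], [], [(3, -1), (4, 1)], [], [], [], [], [], [(1, 1), (5, 2)],
    [(2, 1)]]
  W := [
    [(0, 1)], [(1, -1), (3, -1)], [(3, -2)], [(1, 2), (3, -3)], [(3, -3)], [], [], [], [(3, -4)],
    [], [], [(1, 2), (5, 1)], [], [], [], [], [(3, -5)], [], [], [(1, 2), (3, -3)],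
    [(3, -3), (5, -1)], [(3, -3), (5, -1)], [], [], [(4, 1)], [], [(3, 3), (5, 1)], [],
    [(3, 3), (5, 1)], [(1, 2), (5, 1)], [(1, 2), (5, 1)], [], [(0, 1), (3, 1)], [(1, 1)],
    [(3, -2)], [], [(3, -1)], [], [], [], [], [], [], [], [], [], [], [], [(3, 1)], [], [],
    [(1, -2), (3, 3)], [], [(1, -2), (3, 3)], [], [], [(4, 1)], [], [(3, -3), (5, -1)], [],
    [(3, -3), (5, -1)], [], [], [(2, 1)]]
  h := [
    [], [(1, 1)], [(2, 1), (48, -1)], [(1, -1), (2, 1), (4, 1), (8, 1), (9, 1), (48, -1)],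
    [(2, 1), (4, 1), (48, -1)], [], [], [(45, 1)], [(2, 1), (4, 1), (8, 1), (48, -1)], [], [], [],
    [], [], [(7, -2), (14, 1), (19, 2), (25, -2), (26, 1), (45, 2), (54, -1), (60, -1)], [],
    [(2, 1), (4, 1), (8, 1), (16, 1), (48, -1)], [], [],
    [(1, -1), (2, 1), (4, 1), (7, 1), (8, 1), (9, 1), (45, -1), (48, -1)],
    [(1, -1), (2, 1), (4, 1), (8, 1), (9, 1), (11, 1), (21, -1), (48, -1)],
    [(1, -1), (2, 1), (4, 1), (8, 1), (9, 1), (11, 1), (48, -1)], [(46, 1)], [],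
    [(7, -1), (19, 1), (25, -1), (45, 1)], [(7, -1), (19, 1), (45, 1)],
    [(1, 1), (2, -1), (4, -1), (7, -2), (8, -1), (9, -1), (11, -1), (19, 2), (21, 1), (25, -2),
      (26, 1), (45, 2), (48, 1), (60, -1)], [],
    [(1, 1), (2, -1), (4, -1), (7, -3), (8, -1), (9, -1), (11, -1), (14, 1), (19, 3), (21, 1),
      (25, -3), (26, 1), (28, 1), (45, 3), (48, 1), (54, -1), (60, -1)],
    [(7, -2), (14, 1), (19, 2), (21, 1), (25, -3), (26, 1), (28, 1), (29, 1), (45, 2), (53, -1),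
      (54, -1), (57, 1), (60, -2)],
    [(7, -2), (14, 1), (19, 2), (21, 1), (25, -3), (26, 1), (28, 1), (29, 1), (31, -1), (45, 2),
      (53, -1), (54, -1), (57, 1), (60, -2)], [], [], [], [(36, -1), (40, -1)], [], [(40, -1)],
    [], [], [(13, 1)], [], [], [], [], [], [], [], [], [(48, 1)], [], [],
    [(1, 1), (2, -1), (4, -1), (7, -1), (8, -1), (9, -1), (19, 1), (25, -1), (45, 1), (48, 1),
      (51, 1), (57, -1)], [],
    [(1, 1), (2, -1), (4, -1), (8, -1), (9, -1), (11, -1), (21, 1), (48, 1), (53, 1)],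
    [(7, 2), (19, -2), (25, 2), (26, -1), (45, -2), (54, 1), (60, 1)], [], [],
    [(7, 1), (19, -1), (25, 1), (45, -1), (57, 1)],
    [(1, -1), (2, 1), (4, 1), (8, 1), (9, 1), (11, 1), (21, -1), (22, 1), (46, -1), (48, -1)], [],
    [(1, -1), (2, 1), (4, 1), (7, 1), (8, 1), (9, 1), (11, 1), (19, -1), (21, -1), (25, 1),
      (45, -1), (48, -1), (60, 1)]]
  k := [
    [(1, -2), (9, -8)], [], [], [(9, -2), (37, -2)], [],
    [(1, 2), (2, -2), (3, 2), (17, 2), (37, -2), (41, -2)],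
    [(6, -2), (9, 4), (17, -2), (25, -2), (44, -2), (49, 2), (50, -2), (56, -2)], [], [], [],
    [(20, 2)], [], [(9, 4), (17, -2), (24, 2), (25, -2), (44, -2), (49, 2), (56, -2)], [], [],
    [(1, -2), (2, 2), (10, 2), (15, -2), (17, -4), (20, 2), (23, -2), (24, 2), (25, -2),
      (27, -2), (28, 2), (49, 4), (56, -2), (57, 2)], [],
    [(1, 2), (2, -2), (3, 2), (9, 4), (37, -2)],
    [(1, 2), (2, -2), (9, 8), (18, -2), (44, -2), (56, -2)], [], [], [], [],
    [(1, -3), (2, 3), (9, -1), (10, 3), (17, -5), (20, 3), (21, -1), (23, -2), (24, 2), (25, -3),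
      (27, -2), (28, 2), (41, 1), (49, 5), (56, -2), (57, 1)],
    [(9, 4), (17, -2), (25, -2), (44, -2), (49, 2), (56, -2)], [], [],
    [(1, -3), (2, 3), (9, -1), (10, 3), (17, -5), (20, 3), (21, -1), (24, 2), (25, -4), (27, -2),
      (28, 2), (41, 1), (49, 5), (56, -2)], [], [], [], [], [], [(9, -2)],
    [(1, -2), (2, 2), (9, -8)],
    [(1, -2), (2, 2), (3, -2), (5, -2), (9, 2), (17, -2), (37, 2), (41, 2)], [], [], [],
    [(25, -1), (57, -1)], [], [(1, -2), (2, 2), (3, -2), (9, -2), (17, -2), (37, 2)],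
    [(1, -2), (2, 2), (9, -8), (10, 2), (20, 2), (52, 2)],
    [(1, 1), (2, -1), (9, 1), (10, -1), (17, 1), (20, -1), (21, 1), (41, -1), (49, -1)],
    [(44, -2)], [], [], [(29, -2)], [], [(9, -2), (49, -2)],
    [(1, -2), (2, 2), (9, -4), (17, -2), (25, -2), (44, -2), (49, 2), (50, -2), (56, -2)], [],
    [(1, -2), (2, 2), (9, -8), (10, 2), (20, 2)], [], [],
    [(1, 5), (2, -5), (9, 1), (10, -5), (15, 2), (17, 9), (20, -5), (21, 1), (23, 2), (24, -4),
      (25, 5), (27, 2), (28, -4), (41, -1), (49, -9), (55, -2), (56, 4), (57, -3), (59, -2),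
      (61, -2)], [(44, -2), (56, -2)], [],
    [(1, -2), (2, 2), (10, 2), (17, -4), (20, 2), (24, 2), (25, -4), (28, 2), (49, 4), (56, -2)],
    [(1, 5), (2, -5), (9, 1), (10, -5), (15, 2), (17, 9), (20, -5), (21, 1), (23, 2), (24, -4),
      (25, 6), (27, 2), (28, -4), (41, -1), (49, -9), (56, 4), (57, -2), (59, -2), (61, -2)], [],
    [(1, 2), (2, -2), (10, -2), (15, 2), (17, 4), (20, -2), (23, 2), (24, -2), (25, 2), (27, 2),
      (28, -2), (49, -4), (56, 2), (57, -2), (61, -2)],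
    [(1, -2), (2, 2), (10, 2), (17, -4), (20, 2), (24, 2), (25, -4), (28, 2), (30, 2), (49, 4),
      (56, -2)]]

theorem check6 : check 5 cert6 = true := by decide +kernel

def cert7 : Cert where
  M := 8
  m := [2, 2]
  Pi := [
    [(1, -1), (9, -1), (10, 1), (17, -1), (20, 1), (21, -1), (34, -1), (41, 1), (49, 1)],
    [(1, -1), (10, 1), (17, -2), (20, 1), (23, -1), (24, 1), (25, -2), (28, 1), (29, -1),
      (30, 1), (31, -1), (34, -1), (49, 2), (55, 1), (56, -1), (61, 1)]]
  Z := [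
    [], [], [], [], [], [], [], [], [], [], [], [(0, 1)], [], [(1, 1)], [(1, 1)], [], [], [], [],
    [], [], [(0, -1)], [(1, 1)], [], [], [], [(1, 1)], [], [(1, 1)], [], [], [], [], [], [], [],
    [], [], [], [(1, -1)], [], [], [], [(0, 1)], [], [], [(1, -1)], [], [], [], [], [(1, 1)], [],
    [(0, -1)], [(1, -1)], [], [], [(1, -1)], [(1, -1)], [], [(1, -1)]]
  W := [
    [], [], [], [], [], [], [], [], [], [], [], [], [], [], [], [], [], [], [(1, 2)], [], [],
    [(0, 1)], [], [], [], [(1, 1)], [], [(0, -1)], [(1, 2)], [(0, -1), (1, -1)], [(1, -2)], [],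
    [], [], [], [], [], [], [(1, 2)], [], [], [], [], [], [(1, 2)], [], [], [], [], [], [], [],
    [], [], [], [], [(1, 2)], [], [], [(0, 1)], [], [(0, 1), (1, 1)]]
  h := [
    [(1, -1)], [], [], [], [], [(1, -1), (5, -1), (9, -1), (34, -1), (35, 1), (37, 1), (49, 1)],
    [(12, 1)], [], [], [(9, -1), (37, 1)], [], [], [], [], [],
    [(15, -1), (27, -1), (30, -1), (31, 1), (47, 1), (55, -1), (61, -1)], [],
    [(1, -1), (5, -1), (9, -1), (17, -1), (34, -1), (35, 1), (37, 1), (41, 1), (49, 1)],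
    [(1, 1), (17, 1), (18, -1), (24, -1), (25, 1), (34, 1), (49, -1)], [], [(20, -1)], [], [],
    [(27, -1), (30, -1), (31, 1), (47, 1), (55, -1), (61, -1)], [(24, -1)], [], [],
    [(23, 1), (27, -1), (30, -1), (31, 1), (47, 1), (55, -1), (61, -1)],
    [(23, -1), (29, -1), (30, 1), (31, -1), (55, 1), (61, 1)],
    [(23, 1), (30, -1), (31, 1), (47, 1), (55, -1), (61, -1)],
    [(23, 1), (29, 1), (30, -2), (31, 1), (55, -1), (61, -1)], [], [], [], [(1, -1), (34, -1)],
    [(1, 1), (9, 1), (34, 1), (35, -1), (37, -1), (49, -1)], [], [(37, -1)],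
    [(17, 1), (24, -1), (25, 1), (44, 1), (49, -1), (56, 1)], [], [],
    [(1, 1), (5, 1), (9, 1), (34, 1), (35, -1), (37, -1), (41, -1), (49, -1)],
    [(1, -1), (10, 1), (34, -1), (52, 1)], [], [(17, 1), (24, -1), (25, 1), (49, -1), (56, 1)],
    [], [], [(47, -1)], [], [(9, 1), (37, -1), (49, -1)], [(1, -1), (24, -1), (34, -1), (50, -1)],
    [], [(1, -1), (10, 1), (34, -1)], [], [], [], [(17, 1), (24, -1), (25, 1), (49, -1)], [], [],
    [(55, 1)], [],
    [(15, 1), (23, -1), (27, 1), (29, -1), (30, 2), (31, -2), (47, -1), (55, 2), (61, 1)]]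
  k := [
    [(0, 1)], [], [(2, 8), (5, 8), (8, -8), (16, -8), (17, -8), (36, -8)],
    [(1, 8), (2, 8), (3, 8), (5, 12), (8, -12), (9, -4), (16, -8), (17, -8), (36, -8), (40, 4)],
    [(2, 8), (3, 8), (5, -4), (8, -4), (9, 4), (16, -8), (17, -8), (40, -4)], [],
    [(5, -4), (7, -8), (9, 4), (19, 8), (25, -8), (44, 4), (45, 8)], [(25, -8), (45, 8)],
    [(2, 8), (3, 8), (16, -8), (17, -8)], [], [],
    [(1, 8), (2, 8), (3, 8), (5, 8), (8, -12), (9, -4), (11, 8), (16, -8), (17, -4), (20, -4),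
      (36, -8), (40, 4)], [],
    [(1, 4), (2, 4), (3, 4), (5, 4), (7, -6), (8, -6), (9, -2), (11, 4), (16, -4), (17, -2),
      (19, 6), (20, -2), (22, 3), (25, -2), (28, -1), (29, 4), (30, -1), (31, 4), (36, -4),
      (40, 2), (45, 6), (46, -4), (53, -4), (54, 1), (57, 4), (58, -4), (60, -3)], [(28, -8)], [],
    [(2, 8), (3, 8), (5, 4), (8, -4), (9, -4), (17, -8), (40, 4)], [], [],
    [(1, 8), (2, 8), (3, 8), (5, 12), (8, -12), (9, -4), (16, -8), (17, -8), (19, 8), (36, -8),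
      (40, 4)], [], [],
    [(5, -4), (7, -8), (17, 4), (19, 8), (20, -4), (22, 8), (25, -8), (45, 8), (58, -8)], [], [],
    [],
    [(5, -4), (7, -16), (17, 4), (19, 16), (20, -4), (22, 8), (25, -16), (26, 8), (45, 16),
      (46, -8), (58, -8), (60, -8)], [], [], [], [], [],
    [(0, 1), (5, -4), (8, 4), (9, 4), (40, -4)], [(1, 8), (5, 4), (8, -4), (9, -4), (40, 4)], [],
    [], [(5, -4), (8, 4), (9, 4), (36, 8), (40, -4)], [], [(5, -4), (9, 4), (44, 4)],
    [(1, -4), (2, -4), (3, -4), (5, -4), (7, 6), (8, 6), (9, 2), (11, -4), (13, 8), (16, 4),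
      (17, 2), (19, -6), (20, 2), (22, -3), (25, 2), (28, 1), (29, -4), (30, 1), (31, -4),
      (36, 4), (40, -2), (45, -6), (46, 4), (53, 4), (54, -1), (57, -4), (58, 4), (60, 3)],
    [(5, -8), (8, 8), (9, 8), (36, 8)], [], [(5, 4), (17, -4), (20, 4)], [(21, 8)], [], [(25, 8)],
    [(7, 16), (19, -16), (22, -8), (25, 16), (45, -16), (46, 8), (58, 8)], [],
    [(5, -4), (8, 4), (9, -4), (16, 8), (17, 8), (36, 8), (40, 4)], [], [],
    [(1, -4), (2, -4), (3, -4), (5, -8), (7, -6), (8, 6), (9, 2), (11, 4), (16, 4), (17, 6),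
      (19, 6), (20, -2), (22, 3), (25, -2), (28, -1), (29, 4), (30, -1), (31, 4), (36, 4),
      (40, -2), (45, 6), (46, -4), (51, 8), (53, -4), (54, 1), (57, -4), (58, -4), (60, -3)], [],
    [(1, -8), (2, -8), (3, -8), (5, -8), (8, 12), (9, 4), (11, -8), (16, 8), (17, 4), (20, 4),
      (36, 8), (40, -4), (53, 8)],
    [(5, 4), (7, 24), (17, -4), (19, -24), (20, 4), (22, -8), (25, 24), (26, -8), (45, -24),
      (46, 8), (54, 8), (58, 8), (60, 8)], [], [],
    [(1, -4), (2, -4), (3, -4), (5, -4), (7, 6), (8, 6), (9, 2), (11, -4), (16, 4), (17, 2),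
      (19, -6), (20, 2), (22, -3), (25, 2), (28, 1), (29, -4), (30, 1), (31, -4), (36, 4),
      (40, -2), (45, -6), (46, 4), (53, 4), (54, -1), (57, 4), (58, 4), (60, 3)],
    [(5, 4), (17, -4), (20, 4), (58, 8)],
    [(7, 4), (19, -4), (22, -2), (25, 4), (28, -2), (30, -2), (31, 8), (45, -4), (54, 2),
      (60, 2)], [(7, 16), (19, -16), (22, -8), (25, 16), (45, -16), (46, 8), (58, 8), (60, 8)],
    [], [(7, -4), (19, 4), (22, 2), (25, -4), (28, 2), (30, 2), (45, 4), (54, -2), (60, -2)],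
    [(31, 4), (63, 4)]]

theorem check7 : check 6 cert7 = true := by decide +kernel



/-! ### The final computation -/

def eqv2 : cert2.Q ≃+ ((Fin 2 → ℤ) × ZMod 8 × ZMod 4) where
  toFun f := ((fun i => match i with
    | ⟨0, _⟩ => f ⟨0, by decide⟩
    | ⟨1, _⟩ => f ⟨1, by decide⟩), f ⟨2, by decide⟩, f ⟨3, by decide⟩)
  invFun p := fun l => match l with
    | ⟨0, _⟩ => p.1 0
    | ⟨1, _⟩ => p.1 1
    | ⟨2, _⟩ => p.2.1
    | ⟨3, _⟩ => p.2.2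
  left_inv f := by
    funext l
    match l with
    | ⟨0, _⟩ => rfl
    | ⟨1, _⟩ => rfl
    | ⟨2, _⟩ => rfl
    | ⟨3, _⟩ => rfl
  right_inv p := by
    refine Prod.ext (funext fun i => ?_) rfl
    match i with
    | ⟨0, _⟩ => rfl
    | ⟨1, _⟩ => rfl
  map_add' f g := by
    refine Prod.ext (funext fun i => ?_) rfl
    match i with
    | ⟨0, _⟩ => rfl
    | ⟨1, _⟩ => rfl

def eqv3 : cert3.Q ≃+ (Fin 2 → ℤ) where
  toFun f := fun i => match i with
    | ⟨0, _⟩ => f ⟨0, by decide⟩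
    | ⟨1, _⟩ => f ⟨1, by decide⟩
  invFun p := fun l => match l with
    | ⟨0, _⟩ => p 0
    | ⟨1, _⟩ => p 1
  left_inv f := by
    funext l
    match l with
    | ⟨0, _⟩ => rfl
    | ⟨1, _⟩ => rfl
  right_inv p := by
    funext i
    match i with
    | ⟨0, _⟩ => rfl
    | ⟨1, _⟩ => rfl
  map_add' f g := by
    funext i
    match i with
    | ⟨0, _⟩ => rfl
    | ⟨1, _⟩ => rfl

def eqv4 : cert4.Q ≃+ (ℤ × ZMod 8 × ZMod 4 × (Fin 2 → ZMod 2)) where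
  toFun f := (f ⟨0, by decide⟩, f ⟨1, by decide⟩, f ⟨2, by decide⟩, fun i => match i with
    | ⟨0, _⟩ => f ⟨3, by decide⟩
    | ⟨1, _⟩ => f ⟨4, by decide⟩)
  invFun p := fun l => match l with
    | ⟨0, _⟩ => p.1
    | ⟨1, _⟩ => p.2.1
    | ⟨2, _⟩ => p.2.2.1
    | ⟨3, _⟩ => p.2.2.2 0
    | ⟨4, _⟩ => p.2.2.2 1
  left_inv f := by
    funext l
    match l with
    | ⟨0, _⟩ => rfl
    | ⟨1, _⟩ => rfl
    | ⟨2, _⟩ => rfl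
    | ⟨3, _⟩ => rfl
    | ⟨4, _⟩ => rfl
  right_inv p := by
    refine Prod.ext rfl (Prod.ext rfl (Prod.ext rfl (funext fun i => ?_)))
    match i with
    | ⟨0, _⟩ => rfl
    | ⟨1, _⟩ => rfl
  map_add' f g := by
    refine Prod.ext rfl (Prod.ext rfl (Prod.ext rfl (funext fun i => ?_)))
    match i with
    | ⟨0, _⟩ => rfl
    | ⟨1, _⟩ => rfl

def eqvTwo (c : Cert) (hm : c.m = [2, 2]) : c.Q ≃+ (Fin 2 → ZMod 2) := by
  obtain ⟨M, m, Pi, Z, W, h, k⟩ := c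
  subst hm
  exact
  { toFun := fun f i => match i with
      | ⟨0, _⟩ => f ⟨0, Nat.zero_lt_two⟩
      | ⟨1, _⟩ => f ⟨1, Nat.one_lt_two⟩
    invFun := fun p l => match l with
      | ⟨0, _⟩ => p 0
      | ⟨1, _⟩ => p 1
    left_inv := fun f => by
      funext l
      match l with
      | ⟨0, _⟩ => rfl
      | ⟨1, _⟩ => rfl
    right_inv := fun p => by
      funext i
      match i with
      | ⟨0, _⟩ => rfl
      | ⟨1, _⟩ => rfl
    map_add' := fun f g => by
      funext i
      match i with
      | ⟨0, _⟩ => rfl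
      | ⟨1, _⟩ => rfl }

def eqv6 : cert6.Q ≃+ ((Fin 2 → ZMod 8) × (Fin 4 → ZMod 2)) where
  toFun f := ((fun i => match i with
    | ⟨0, _⟩ => f ⟨0, by decide⟩
    | ⟨1, _⟩ => f ⟨1, by decide⟩), fun i => match i with
    | ⟨0, _⟩ => f ⟨2, by decide⟩
    | ⟨1, _⟩ => f ⟨3, by decide⟩
    | ⟨2, _⟩ => f ⟨4, by decide⟩
    | ⟨3, _⟩ => f ⟨5, by decide⟩)
  invFun p := fun l => match l with
    | ⟨0, _⟩ => p.1 0
    | ⟨1, _⟩ => p.1 1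
    | ⟨2, _⟩ => p.2 0
    | ⟨3, _⟩ => p.2 1
    | ⟨4, _⟩ => p.2 2
    | ⟨5, _⟩ => p.2 3
  left_inv f := by
    funext l
    match l with
    | ⟨0, _⟩ => rfl
    | ⟨1, _⟩ => rfl
    | ⟨2, _⟩ => rfl
    | ⟨3, _⟩ => rfl
    | ⟨4, _⟩ => rfl
    | ⟨5, _⟩ => rfl
  right_inv p := by
    refine Prod.ext (funext fun i => ?_) (funext fun i => ?_)
    · match i with
      | ⟨0, _⟩ => rfl
      | ⟨1, _⟩ => rfl
    · match i with
      | ⟨0, _⟩ => rfl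
      | ⟨1, _⟩ => rfl
      | ⟨2, _⟩ => rfl
      | ⟨3, _⟩ => rfl
  map_add' f g := by
    refine Prod.ext (funext fun i => ?_) (funext fun i => ?_)
    · match i with
      | ⟨0, _⟩ => rfl
      | ⟨1, _⟩ => rfl
    · match i with
      | ⟨0, _⟩ => rfl
      | ⟨1, _⟩ => rfl
      | ⟨2, _⟩ => rfl
      | ⟨3, _⟩ => rfl

theorem cohomology_min142_1_2 :
    Subsingleton (H 1) ∧
    Nonempty (H 2 ≃+ ((Fin 2 → ℤ) × ZMod 8 × ZMod 4)) ∧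
    Nonempty (H 3 ≃+ (Fin 2 → ℤ)) ∧
    Nonempty (H 4 ≃+ (ℤ × ZMod 8 × ZMod 4 × (Fin 2 → ZMod 2))) ∧
    Nonempty (H 5 ≃+ (Fin 2 → ZMod 2)) ∧
    (∀ i, 6 ≤ i → Even i → Nonempty (H i ≃+ ((Fin 2 → ZMod 8) × (Fin 4 → ZMod 2)))) ∧
    (∀ i, 7 ≤ i → Odd i → Nonempty (H i ≃+ (Fin 2 → ZMod 2))) := by
  refine ⟨?_, ?_, ?_, ?_, ?_, ?_, ?_⟩
  · obtain ⟨e⟩ := H_of_check 0 cert1 check1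
    have : Subsingleton cert1.Q := ⟨fun f g => funext fun l => absurd l.2 (Nat.not_lt_zero _)⟩
    exact e.injective.subsingleton
  · obtain ⟨e⟩ := H_of_check 1 cert2 check2
    exact ⟨e.trans eqv2⟩
  · obtain ⟨e⟩ := H_of_check 2 cert3 check3
    exact ⟨e.trans eqv3⟩
  · obtain ⟨e⟩ := H_of_check 3 cert4 check4
    exact ⟨e.trans eqv4⟩
  · obtain ⟨e⟩ := H_of_check 4 cert5 check5
    exact ⟨e.trans (eqvTwo cert5 rfl)⟩
  · intro i hi he
    obtain ⟨t, rfl⟩ : ∃ t, i = 5 + 2 * t + 1 := by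
      obtain ⟨r, hr⟩ := he
      exact ⟨r - 3, by omega⟩
    obtain ⟨e⟩ := H_periodic 5 (by norm_num) cert6 check6 t
    exact ⟨e.trans eqv6⟩
  · intro i hi ho
    obtain ⟨t, rfl⟩ : ∃ t, i = 6 + 2 * t + 1 := by
      obtain ⟨r, hr⟩ := ho
      exact ⟨r - 3, by omega⟩
    obtain ⟨e⟩ := H_periodic 6 (by norm_num) cert7 check7 t
    exact ⟨e.trans (eqvTwo cert7 rfl)⟩
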